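/- arXiv:2208.10579 — 4 statements merged into one kernel-verified Lean document; each statement's English description precedes it below -/
import Mathlib

section
/- (Parametric Transversality Theorem) Let M, N, T be smooth manifolds and S ⊂ N a smooth submanifold. If F : M × T → N is a smooth map transverse to S, then for almost every t ∈ T (all t outside a measure-zero set), the map F_t : M → N, F_t(x) = F(x,t), is transverse to S. -/
/- Framework: embedded submanifolds of Euclidean space (Guillemin–Pollack style),
tangent spaces via velocity vectors of curves, local-straightening charts. -/

noncomputable section
open Set Function
open scoped RealInnerProductSpace

abbrev Euc (n : ℕ) : Type := EuclideanSpace ℝ (Fin n)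

/-- Velocity vectors at `x` of smooth curves through `x` contained in `S`. -/
def tangentSet {E : Type*} [NormedAddCommGroup E] [NormedSpace ℝ E] (S : Set E) (x : E) : Set E :=
  {v | ∃ γ : ℝ → E, (∀ t, γ t ∈ S) ∧ γ 0 = x ∧ HasDerivAt γ v 0}

/-- The tangent space of a subset `S` at `x`, as a linear subspace of the ambient space. -/
def tangentSpaceOf {E : Type*} [NormedAddCommGroup E] [NormedSpace ℝ E] (S : Set E) (x : E) :
    Submodule ℝ E := Submodule.span ℝ (tangentSet S x)

/-- `S` is a smooth embedded `k`-dimensional submanifold (without boundary):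
around every point there is a smooth local straightening diffeomorphism carrying `S`
onto a `k`-dimensional linear subspace. -/
def IsSubmanifoldOfDim {E : Type*} [NormedAddCommGroup E] [NormedSpace ℝ E]
    (k : ℕ) (S : Set E) : Prop :=
  ∀ x ∈ S, ∃ (U V : Set E) (φ ψ : E → E) (K : Submodule ℝ E),
    Module.finrank ℝ K = k ∧ IsOpen U ∧ IsOpen V ∧ x ∈ U ∧
    ContDiffOn ℝ (⊤ : ℕ∞) φ U ∧ ContDiffOn ℝ (⊤ : ℕ∞) ψ V ∧
    MapsTo φ U V ∧ MapsTo ψ V U ∧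
    (∀ y ∈ U, ψ (φ y) = y) ∧ (∀ z ∈ V, φ (ψ z) = z) ∧
    S ∩ U = U ∩ φ ⁻¹' (K : Set E)

section Helpers
open MeasureTheory Topology Filter
open scoped ContDiff

lemma isOpen_surj {E F : Type*} [NormedAddCommGroup E] [NormedSpace ℝ E]
    [NormedAddCommGroup F] [NormedSpace ℝ F] [FiniteDimensional ℝ F] :
    IsOpen {A : E →L[ℝ] F | Surjective A} := by
  rw [isOpen_iff_mem_nhds]
  intro A hA
  obtain ⟨B, hB⟩ := LinearMap.exists_rightInverse_of_surjective (A : E →ₗ[ℝ] F)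
    (LinearMap.range_eq_top.2 hA)
  let B' : F →L[ℝ] E := LinearMap.toContinuousLinearMap B
  have h1 : A.comp B' = 1 := by
    ext x
    exact congrArg (fun f => f x) hB
  have hc : Continuous (fun A' : E →L[ℝ] F => A'.comp B') := by fun_prop
  have : {A' : E →L[ℝ] F | IsUnit (A'.comp B')} ∈ 𝓝 A := by
    apply hc.continuousAt.preimage_mem_nhds (t := {u | IsUnit u})
    apply Units.isOpen.mem_nhds
    show IsUnit (A.comp B')
    rw [h1]; exact isUnit_one
  filter_upwards [this] with A' hA'
  obtain ⟨u, hu⟩ := hA'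
  intro y
  refine ⟨B' ((↑u⁻¹ : F →L[ℝ] F) y), ?_⟩
  have : (A'.comp B') * (↑u⁻¹ : F →L[ℝ] F) = 1 := by rw [← hu]; simp
  exact congrArg (fun f => f y) this

lemma null_image_of_locally {X Y : Type*} [TopologicalSpace X] [SecondCountableTopology X]
    [MeasurableSpace Y] (μ : Measure Y) (f : X → Y) (s : Set X)
    (h : ∀ x ∈ s, ∃ O ∈ 𝓝 x, μ (f '' (s ∩ O)) = 0) : μ (f '' s) = 0 := by
  have := measure_null_of_locally_null (μ := OuterMeasure.comap f μ.toOuterMeasure) s (by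
    intro x hx
    obtain ⟨O, hO, h0⟩ := h x hx
    exact ⟨s ∩ O, inter_mem_nhdsWithin s hO, by simpa [OuterMeasure.comap_apply] using h0⟩)
  simpa [OuterMeasure.comap_apply] using this

lemma exists_global {E F : Type*} [NormedAddCommGroup E] [NormedSpace ℝ E] [FiniteDimensional ℝ E]
    [NormedAddCommGroup F] [NormedSpace ℝ F] {f : E → F} {U : Set E} {x : E}
    (hU : U ∈ 𝓝 x) (hf : ∀ y ∈ U, ContDiffAt ℝ ∞ f y) :
    ∃ g : E → F, ContDiff ℝ ∞ g ∧ g =ᶠ[𝓝 x] f := by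
  obtain ⟨r, hr, hrU⟩ := Metric.nhds_basis_closedBall.mem_iff.1 hU
  let b : ContDiffBump x := ⟨r / 2, r, by positivity, by linarith⟩
  refine ⟨fun y => b y • f y, ?_, ?_⟩
  · rw [contDiff_iff_contDiffAt]
    intro y
    by_cases hy : y ∈ Metric.closedBall x r
    · exact b.contDiff.contDiffAt.smul (hf y (hrU hy))
    · have : (fun y => b y • f y) =ᶠ[𝓝 y] fun _ => 0 := by
        filter_upwards [Metric.isClosed_closedBall.isOpen_compl.mem_nhds hy] with z hz
        have : b z = 0 := b.zero_of_le_dist (by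
          simp only [Metric.mem_closedBall, mem_compl_iff, not_le] at hz; exact hz.le)
        simp [this]
      exact contDiffAt_const.congr_of_eventuallyEq this
  · filter_upwards [Metric.closedBall_mem_nhds x (show 0 < r / 2 by positivity)] with z hz
    have : b z = 1 := b.one_of_mem_closedBall hz
    simp [this]

lemma split_surj {E L : Type*} [NormedAddCommGroup E] [NormedSpace ℝ E] [FiniteDimensional ℝ E]
    [NormedAddCommGroup L] [NormedSpace ℝ L] [FiniteDimensional ℝ L]
    (A : E →L[ℝ] L) (hs : Surjective A) :
    ∃ (P : E →L[ℝ] A.ker) (e : E ≃L[ℝ] L × A.ker), (e : E →L[ℝ] L × A.ker) = A.prod P := by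
  obtain ⟨P, hP⟩ := Submodule.ClosedComplemented.of_finiteDimensional A.ker
  have hbij : Bijective (A.prod P) := by
    constructor
    · rw [injective_iff_map_eq_zero]
      intro v hv
      have h1 : A v = 0 := congrArg Prod.fst hv
      have h2 : P v = 0 := congrArg Prod.snd hv
      have := hP ⟨v, h1⟩
      rw [h2] at this
      exact (congrArg Subtype.val this).symm
    · rintro ⟨l, k⟩
      obtain ⟨v, hv⟩ := hs l
      refine ⟨v + ((k - P v : A.ker) : E), ?_⟩
      have h1 : A ((k - P v : A.ker) : E) = 0 := (k - P v).2
      have h2 := hP (k - P v)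
      ext
      · simp only [ContinuousLinearMap.prod_apply, map_add, h1, hv]; simp
      · simp only [ContinuousLinearMap.prod_apply, map_add, h2]; simp
  refine ⟨P, (LinearEquiv.ofBijective
    ((A.prod P : E →L[ℝ] L × A.ker) : E →ₗ[ℝ] L × A.ker) hbij).toContinuousLinearEquiv, ?_⟩
  ext x <;> rfl

lemma straighten {E L : Type*} [NormedAddCommGroup E] [NormedSpace ℝ E] [FiniteDimensional ℝ E]
    [NormedAddCommGroup L] [NormedSpace ℝ L] [FiniteDimensional ℝ L]
    (g : E → L) (hg : ContDiff ℝ ∞ g) (x₀ : E) (hs : Surjective (fderiv ℝ g x₀)) :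
    ∃ (P : E →L[ℝ] (fderiv ℝ g x₀).ker)
      (Ψ : L × (fderiv ℝ g x₀).ker → E), ContDiff ℝ ∞ Ψ ∧
      (∀ᶠ x in 𝓝 x₀, Ψ (g x, P x) = x) ∧
      (∀ᶠ z in 𝓝 (g x₀, P x₀), (g (Ψ z), P (Ψ z)) = z) ∧
      (∀ᶠ x in 𝓝 x₀, Surjective ((fderiv ℝ g x).prod P)) := by
  set K := (fderiv ℝ g x₀).ker with hK
  obtain ⟨P, e, he⟩ := split_surj _ hs
  let Φ : E → L × K := fun x => (g x, P x)
  have hΦ : ContDiff ℝ ∞ Φ := hg.prodMk P.contDiff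
  have hder : ∀ x, HasFDerivAt Φ ((fderiv ℝ g x).prod P) x := fun x =>
    ((hg.differentiable (by simp)) x).hasFDerivAt.prodMk P.hasFDerivAt
  have hd0 : HasFDerivAt Φ (e : E →L[ℝ] L × K) x₀ := by rw [he]; exact hder x₀
  let H := hΦ.contDiffAt.toOpenPartialHomeomorph Φ hd0 (by simp)
  have hHc : (H : E → L × K) = Φ := rfl
  have hx₀ : x₀ ∈ H.source := hΦ.contDiffAt.mem_toOpenPartialHomeomorph_source hd0 (by simp)
  have hinv : ∀ᶠ x in 𝓝 x₀, ∃ e' : E ≃L[ℝ] L × K, (e' : E →L[ℝ] L × K) = fderiv ℝ Φ x := by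
    have hc : Continuous (fderiv ℝ Φ) := hΦ.continuous_fderiv (by simp)
    have h2 := hc.continuousAt.preimage_mem_nhds (x := x₀) (t := range ((↑) : (E ≃L[ℝ] L × K) → E →L[ℝ] L × K))
      (ContinuousLinearEquiv.isOpen.mem_nhds ⟨e, hd0.fderiv.symm⟩)
    filter_upwards [h2] with x hx
    exact hx
  have hy₀ : Φ x₀ ∈ H.target := H.map_source hx₀
  have hsymm0 : H.symm (Φ x₀) = x₀ := H.left_inv hx₀
  have hnear : ∀ᶠ z in 𝓝 (Φ x₀), ContDiffAt ℝ ∞ H.symm z := by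
    have hct : Tendsto H.symm (𝓝 (Φ x₀)) (𝓝 x₀) := by
      have := H.symm.continuousAt (x := Φ x₀) hy₀
      rw [ContinuousAt, hsymm0] at this; exact this
    filter_upwards [hct.eventually hinv, H.open_target.mem_nhds hy₀] with z ⟨e', he'⟩ hz
    refine H.contDiffAt_symm hz (f₀' := e') ?_ hΦ.contDiffAt
    rw [he']
    exact (hΦ.differentiable (by simp) _).hasFDerivAt
  obtain ⟨Ψ, hΨ, hΨe⟩ := exists_global hnear (fun y hy => hy)
  refine ⟨P, Ψ, hΨ, ?_, ?_, ?_⟩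
  · have := (hΦ.continuous.tendsto x₀).eventually hΨe
    filter_upwards [this, H.open_source.mem_nhds hx₀] with x hx hxs
    show Ψ (Φ x) = x
    rw [hx]; exact H.left_inv hxs
  · filter_upwards [hΨe, H.open_target.mem_nhds hy₀] with z hz hzt
    rw [hz]; exact H.right_inv hzt
  · filter_upwards [hinv] with x ⟨e', he'⟩
    rw [(hder x).fderiv] at he'
    rw [← he']
    exact e'.surjective

lemma taylor_flat {E F : Type*} [NormedAddCommGroup E] [NormedSpace ℝ E]
    [NormedAddCommGroup F] [NormedSpace ℝ F] (f : E → F) (hf : ContDiff ℝ ∞ f) (x₀ : E) (k : ℕ) :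
    ∃ O ∈ 𝓝 x₀, ∃ C : NNReal, ∀ x ∈ O, ∀ y ∈ O,
      (∀ j, 1 ≤ j → j ≤ k → iteratedFDeriv ℝ j f x = 0) →
      ‖f y - f x‖ ≤ C * ‖y - x‖ ^ (k + 1) := by
  have hc : Continuous (iteratedFDeriv ℝ (k + 1) f) :=
    hf.continuous_iteratedFDeriv (by exact_mod_cast le_top)
  obtain ⟨r, hr, hb⟩ := Metric.mem_nhds_iff.1
    ((hc.norm.tendsto x₀).eventually_lt_const (lt_add_one _))
  set C : ℝ := ‖iteratedFDeriv ℝ (k + 1) f x₀‖ + 1 with hC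
  have hC0 : 0 ≤ C := by positivity
  have key : ∀ i n, n + i = k → ∀ x ∈ Metric.ball x₀ r,
      (∀ j, 1 ≤ j → j ≤ k → iteratedFDeriv ℝ j f x = 0) → ∀ y ∈ Metric.ball x₀ r,
      ‖iteratedFDeriv ℝ (n + 1) f y‖ ≤ C * ‖y - x‖ ^ i := by
    intro i
    induction i with
    | zero =>
      intro n hn x hx hfl y hy
      obtain rfl : n = k := by omega
      simpa using (hb hy).le
    | succ i ih =>
      intro n hn x hx hfl y hy
      have hd : Differentiable ℝ (iteratedFDeriv ℝ (n + 1) f) :=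
        hf.differentiable_iteratedFDeriv (by exact_mod_cast WithTop.coe_lt_top _)
      have := (convex_segment x y).norm_image_sub_le_of_norm_fderiv_le (𝕜 := ℝ)
        (f := iteratedFDeriv ℝ (n + 1) f) (C := C * ‖y - x‖ ^ i) (x := x) (y := y)
        (fun z _ => hd z) (by
          intro z hz
          rw [norm_fderiv_iteratedFDeriv]
          have hzb : z ∈ Metric.ball x₀ r := (convex_ball x₀ r).segment_subset hx hy hz
          refine (ih (n + 1) (by omega) x hx hfl z hzb).trans ?_
          have : ‖z - x‖ ≤ ‖y - x‖ := by
            simpa using norm_sub_le_of_mem_segment hz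
          gcongr) (left_mem_segment ℝ x y) (right_mem_segment ℝ x y)
      rw [hfl (n + 1) (by omega) (by omega), sub_zero] at this
      rw [pow_succ, ← mul_assoc]; exact this
  refine ⟨Metric.ball x₀ r, Metric.ball_mem_nhds _ hr, ⟨C, hC0⟩, ?_⟩
  intro x hx y hy hfl
  have := (convex_segment x y).norm_image_sub_le_of_norm_fderiv_le (𝕜 := ℝ)
        (f := f) (C := C * ‖y - x‖ ^ k) (x := x) (y := y)
        (fun z _ => hf.differentiable (by simp) z) (by
          intro z hz
          have hzb : z ∈ Metric.ball x₀ r := (convex_ball x₀ r).segment_subset hx hy hz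
          have h1 := key k 0 (by omega) x hx hfl z hzb
          rw [zero_add, norm_iteratedFDeriv_one] at h1
          refine h1.trans ?_
          have : ‖z - x‖ ≤ ‖y - x‖ := by
            simpa using norm_sub_le_of_mem_segment hz
          gcongr) (left_mem_segment ℝ x y) (right_mem_segment ℝ x y)
  rw [pow_succ, ← mul_assoc]; exact this

lemma sard_flat {E F : Type*} [NormedAddCommGroup E] [NormedSpace ℝ E] [FiniteDimensional ℝ E]
    [NormedAddCommGroup F] [NormedSpace ℝ F] [FiniteDimensional ℝ F] [Nontrivial F]
    [MeasurableSpace F] [BorelSpace F] (μ : Measure F) [μ.IsAddHaarMeasure]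
    (f : E → F) (hf : ContDiff ℝ ∞ f) :
    μ (f '' {x | ∀ j, 1 ≤ j → j ≤ Module.finrank ℝ E → iteratedFDeriv ℝ j f x = 0}) = 0 := by
  set n := Module.finrank ℝ E with hn
  apply null_image_of_locally
  intro x₀ _
  obtain ⟨O, hO, C, hC⟩ := taylor_flat f hf x₀ n
  refine ⟨O, hO, ?_⟩
  set s := {x | ∀ j, 1 ≤ j → j ≤ n → iteratedFDeriv ℝ j f x = 0} ∩ O
  have hH : HolderOnWith C ((n + 1 : ℕ) : NNReal) f s := by
    intro x hx y hy
    have h := hC x hx.2 y hy.2 hx.1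
    rw [edist_comm (f x), edist_comm x, edist_nndist, edist_nndist, NNReal.coe_natCast,
      ENNReal.rpow_natCast]
    norm_cast
    rw [← NNReal.coe_le_coe]
    push_cast
    simpa [dist_eq_norm] using h
  have hpos : 0 < Module.finrank ℝ F := Module.finrank_pos
  have hd : dimH (f '' s) < ((Module.finrank ℝ F : NNReal) : ENNReal) := by
    refine (hH.dimH_image_le (by positivity)).trans_lt ?_
    have h1 : dimH s ≤ (n : ENNReal) := by
      refine (dimH_mono (subset_univ s)).trans ?_
      rw [Real.dimH_univ_eq_finrank]
    have h2 : dimH s / (((n + 1 : ℕ) : NNReal) : ENNReal) < 1 := by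
      rw [ENNReal.div_lt_iff (by simp) (by simp)]
      refine h1.trans_lt ?_
      rw [one_mul]
      norm_cast
      omega
    refine h2.trans_le ?_
    norm_cast
  refine measure_zero_of_dimH_lt (d := (Module.finrank ℝ F : NNReal)) ?_ hd
  have := Measure.absolutelyContinuous_isAddHaarMeasure μ (Measure.hausdorffMeasure (Module.finrank ℝ F) : Measure F)
  simpa using this

def SardHyp (n : ℕ) : Prop :=
  ∀ (E : Type) [NormedAddCommGroup E] [NormedSpace ℝ E] [FiniteDimensional ℝ E]
    (F : Type) [NormedAddCommGroup F] [NormedSpace ℝ F] [FiniteDimensional ℝ F]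
    [MeasurableSpace F] [BorelSpace F] (μ : Measure F) [μ.IsAddHaarMeasure] (f : E → F),
    Module.finrank ℝ E < n → ContDiff ℝ ∞ f → μ (f '' {x | ¬ Surjective (fderiv ℝ f x)}) = 0

lemma surj_of_ne_zero {E : Type*} [NormedAddCommGroup E] [NormedSpace ℝ E]
    (A : E →L[ℝ] ℝ) (h : A ≠ 0) : Surjective A := by
  have : (A : E →ₗ[ℝ] ℝ) ≠ 0 := by
    intro h'; apply h; ext x; exact congrArg (fun f => f x) h'
  exact LinearMap.surjective this

lemma finrank_ker_lt {E : Type*} [NormedAddCommGroup E] [NormedSpace ℝ E] [FiniteDimensional ℝ E]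
    (A : E →L[ℝ] ℝ) (h : A ≠ 0) : Module.finrank ℝ A.ker < Module.finrank ℝ E := by
  apply Submodule.finrank_lt
  intro h'
  apply h; ext x
  have : x ∈ A.ker := by rw [h']; trivial
  exact this

lemma sard_hyp {E F : Type} [NormedAddCommGroup E] [NormedSpace ℝ E] [FiniteDimensional ℝ E]
    [NormedAddCommGroup F] [NormedSpace ℝ F] [FiniteDimensional ℝ F] [Nontrivial F]
    [MeasurableSpace F] [BorelSpace F] (μ : Measure F) [μ.IsAddHaarMeasure]
    (IH : SardHyp (Module.finrank ℝ E))
    (f : E → F) (hf : ContDiff ℝ ∞ f) (g : E → ℝ) (hg : ContDiff ℝ ∞ g) (x₀ : E)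
    (h : fderiv ℝ g x₀ ≠ 0) :
    ∃ O ∈ 𝓝 x₀, μ (f '' ({x | fderiv ℝ f x = 0 ∧ g x = 0} ∩ O)) = 0 := by
  obtain ⟨P, Ψ, hΨ, h1, -, -⟩ := straighten g hg x₀ (surj_of_ne_zero _ h)
  refine ⟨_, h1, ?_⟩
  have hΨ0 : ContDiff ℝ ∞ (fun k : (fderiv ℝ g x₀).ker => Ψ (0, k)) :=
    hΨ.comp (contDiff_const.prodMk contDiff_id)
  refine measure_mono_null ?_ (IH (fderiv ℝ g x₀).ker F μ (fun k => f (Ψ (0, k)))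
    (finrank_ker_lt _ h) (hf.comp hΨ0))
  rintro _ ⟨x, ⟨⟨hx1, hx2⟩, hx3⟩, rfl⟩
  simp only [mem_ofPred_eq, hx2] at hx3
  refine ⟨P x, ?_, by simp only [hx3]⟩
  have : fderiv ℝ (fun k => f (Ψ (0, k))) (P x) = 0 := by
    have := fderiv_comp (𝕜 := ℝ) (g := f) (f := fun k : (fderiv ℝ g x₀).ker => Ψ (0, k)) (P x)
      (hf.differentiable (by simp) _) (hΨ0.differentiable (by simp) _)
    simp only [hx3, hx1, ContinuousLinearMap.zero_comp] at this
    exact this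
  rw [mem_ofPred_eq, this]
  intro hs
  obtain ⟨y, hy⟩ := exists_ne (0 : F)
  obtain ⟨z, hz⟩ := hs y
  exact hy hz.symm

lemma sard_nonzero {E F : Type} [NormedAddCommGroup E] [NormedSpace ℝ E] [FiniteDimensional ℝ E]
    [NormedAddCommGroup F] [NormedSpace ℝ F] [FiniteDimensional ℝ F]
    [MeasurableSpace F] [BorelSpace F] (μ : Measure F) [μ.IsAddHaarMeasure]
    (IH : SardHyp (Module.finrank ℝ E))
    (f : E → F) (hf : ContDiff ℝ ∞ f) (x₀ : E) (h : fderiv ℝ f x₀ ≠ 0) :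
    ∃ O ∈ 𝓝 x₀, μ (f '' ({x | ¬ Surjective (fderiv ℝ f x)} ∩ O)) = 0 := by
  have hfd : Differentiable ℝ f := hf.differentiable (by simp)
  obtain ⟨v, hv⟩ : ∃ v, fderiv ℝ f x₀ v ≠ 0 := by
    by_contra hcon
    push Not at hcon
    exact h (ContinuousLinearMap.ext hcon)
  obtain ⟨l, hl⟩ := SeparatingDual.exists_ne_zero (R := ℝ) hv
  have hl0 : l ≠ 0 := by rintro rfl; simp at hl
  obtain ⟨Q, e, he⟩ := split_surj l (surj_of_ne_zero l hl0)
  have he' : ∀ y, e y = (l y, Q y) := fun y => congrArg (fun A => A y) he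
  let F' := l.ker
  let g : E → ℝ := fun x => l (f x)
  have hg : ContDiff ℝ ∞ g := l.contDiff.comp hf
  have hgd : ∀ x, fderiv ℝ g x = l.comp (fderiv ℝ f x) := fun x =>
    (l.hasFDerivAt.comp x (hfd x).hasFDerivAt).fderiv
  have hg0 : fderiv ℝ g x₀ ≠ 0 := by
    rw [hgd]; intro h'
    exact hl (congrArg (fun A => A v) h')
  obtain ⟨P, Ψ, hΨ, h1, -, h3⟩ := straighten g hg x₀ (surj_of_ne_zero _ hg0)
  have hlt := finrank_ker_lt _ hg0
  let K := (fderiv ℝ g x₀).ker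
  let H : ℝ × K → F' := fun z => Q (f (Ψ z))
  have hH : ContDiff ℝ ∞ H := Q.contDiff.comp (hf.comp hΨ)
  have hHd : Differentiable ℝ H := hH.differentiable (by simp)
  let Cc : Set (ℝ × K) := {z | ¬ Surjective ((fderiv ℝ H z).comp (ContinuousLinearMap.inr ℝ ℝ K))}
  have hCc : IsClosed Cc := by
    have hc : Continuous (fun z => (fderiv ℝ H z).comp (ContinuousLinearMap.inr ℝ ℝ K)) :=
      (hH.continuous_fderiv (by simp)).clm_comp continuous_const
    exact (isOpen_surj.preimage hc).isClosed_compl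
  let q : ℝ × K → ℝ × F' := fun z => (z.1, H z)
  have hq : Continuous q := continuous_fst.prodMk hH.continuous
  have hmeas : MeasurableSet (q '' Cc) := by
    obtain ⟨Kn, hKn, hU⟩ := (isSigmaCompact_univ.of_isClosed_subset hCc (subset_univ _)).image hq
    rw [← hU]
    exact MeasurableSet.iUnion fun n => (hKn n).measurableSet
  let μ' : Measure F' := Measure.addHaar
  have hnull : (volume.prod μ') (q '' Cc) = 0 := by
    rw [Measure.measure_prod_null hmeas]
    refine Eventually.of_forall fun s => ?_
    have hs : ContDiff ℝ ∞ (fun k : K => H (s, k)) :=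
      hH.comp (contDiff_const.prodMk contDiff_id)
    refine measure_mono_null ?_ (IH K F' μ' (fun k => H (s, k)) hlt hs)
    rintro y ⟨⟨s', k⟩, hz, hzy⟩
    obtain rfl : s' = s := congrArg Prod.fst hzy
    have hy : H (s', k) = y := congrArg Prod.snd hzy
    refine ⟨k, ?_, hy⟩
    have hd : fderiv ℝ (fun k : K => H (s', k)) k =
        (fderiv ℝ H (s', k)).comp (ContinuousLinearMap.inr ℝ ℝ K) :=
      ((hHd (s', k)).hasFDerivAt.comp k (hasFDerivAt_prodMk_right s' k)).fderiv
    rw [mem_ofPred_eq, hd]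
    exact hz
  have hmap : μ.map e (q '' Cc) = 0 := by
    have := e.isAddHaarMeasure_map μ
    exact Measure.absolutelyContinuous_isAddHaarMeasure (μ.map e) (volume.prod μ') hnull
  rw [Measure.map_apply e.continuous.measurable hmeas] at hmap
  refine ⟨_, (eventually_eventually_nhds.2 h1).and h3, measure_mono_null ?_ hmap⟩
  rintro _ ⟨x, ⟨hx, hx1, hx3⟩, rfl⟩
  have hxx : Ψ (g x, P x) = x := hx1.self_of_nhds
  refine ⟨(g x, P x), ?_, ?_⟩
  · intro hs
    apply hx
    intro w
    have hQ : (fun y => Q (f y)) =ᶠ[𝓝 x] fun y => H (g y, P y) := by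
      filter_upwards [hx1] with y hy
      show Q (f y) = Q (f (Ψ (g y, P y)))
      rw [hy]
    have hQd : Q.comp (fderiv ℝ f x) = (fderiv ℝ H (g x, P x)).comp ((fderiv ℝ g x).prod P) := by
      have e1 : HasFDerivAt (fun y => Q (f y)) (Q.comp (fderiv ℝ f x)) x :=
        Q.hasFDerivAt.comp x (hfd x).hasFDerivAt
      have e2 : HasFDerivAt (fun y => H (g y, P y))
          ((fderiv ℝ H (g x, P x)).comp ((fderiv ℝ g x).prod P)) x :=
        HasFDerivAt.comp x (g := H) (f := fun y => (g y, P y)) (hHd (g x, P x)).hasFDerivAt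
          ((hg.differentiable (by simp) x).hasFDerivAt.prodMk P.hasFDerivAt)
      exact e1.unique (e2.congr_of_eventuallyEq hQ)
    obtain ⟨k, hk⟩ := hs (Q w - fderiv ℝ H (g x, P x) (l w, 0))
    obtain ⟨u, hu⟩ := hx3 (l w, k)
    refine ⟨u, e.injective ?_⟩
    rw [he', he']
    have hu1 : fderiv ℝ g x u = l w := congrArg Prod.fst hu
    refine Prod.ext ?_ ?_
    · rw [hgd] at hu1; exact hu1
    · have := congrArg (fun A => A u) hQd
      simp only [ContinuousLinearMap.comp_apply, hu] at this
      show Q (fderiv ℝ f x u) = Q w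
      rw [this]
      have h5 : ((l w, k) : ℝ × K) = (l w, 0) + (0, k) := by simp
      rw [h5, map_add]
      have h6 : fderiv ℝ H (g x, P x) (0, k) = Q w - fderiv ℝ H (g x, P x) (l w, 0) := hk
      rw [h6]; abel
  · rw [he']
    show (g x, Q (f (Ψ (g x, P x)))) = _
    rw [hxx]

lemma sard_aux (n : ℕ) : SardHyp n := by
  induction n with
  | zero => intro E _ _ _ F _ _ _ _ _ μ _ f h; omega
  | succ n ih =>
    intro E _ _ _ F _ _ _ _ _ μ _ f hE hf
    have IH : SardHyp (Module.finrank ℝ E) := by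
      intro E' _ _ _ F' _ _ _ _ _ μ' _ f' h' hf'
      exact ih E' F' μ' f' (by omega) hf'
    rcases subsingleton_or_nontrivial F with hF | hF
    · have : {x | ¬ Surjective (fderiv ℝ f x)} = ∅ := by
        ext x
        simp only [mem_ofPred_eq, mem_empty_iff_false, iff_false, not_not]
        intro y; exact ⟨0, Subsingleton.elim _ _⟩
      rw [this]; simp
    set N := Module.finrank ℝ E
    let A : Set E := {x | ¬ Surjective (fderiv ℝ f x)} ∩ {x | fderiv ℝ f x ≠ 0}
    let B : ℕ → Set E := fun i => {x | ∀ j, 1 ≤ j → j ≤ i → iteratedFDeriv ℝ j f x = 0}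
    have hA : μ (f '' A) = 0 := by
      apply null_image_of_locally
      rintro x ⟨_, hx⟩
      obtain ⟨O, hO, h0⟩ := sard_nonzero μ IH f hf x hx
      refine ⟨O, hO, measure_mono_null (image_mono ?_) h0⟩
      exact inter_subset_inter_left _ inter_subset_left
    have hB : ∀ i, 1 ≤ i → μ (f '' (B i \ B (i + 1))) = 0 := by
      intro i hi
      apply null_image_of_locally
      rintro x ⟨hx1, hx2⟩
      have hx3 : iteratedFDeriv ℝ (i + 1) f x ≠ 0 := by
        intro h0
        apply hx2
        intro j hj1 hj2
        rcases Nat.lt_or_ge i j with hij | hij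
        · obtain rfl : j = i + 1 := by omega
          exact h0
        · exact hx1 j hj1 hij
      have hx4 : fderiv ℝ (iteratedFDeriv ℝ i f) x ≠ 0 := by
        intro h0
        have h9 := norm_fderiv_iteratedFDeriv (𝕜 := ℝ) (f := f) (n := i) (x := x)
        rw [h0] at h9
        exact hx3 (norm_eq_zero.1 (h9.symm.trans ContinuousLinearMap.opNorm_zero))
      obtain ⟨v, hv⟩ : ∃ v, fderiv ℝ (iteratedFDeriv ℝ i f) x v ≠ 0 := by
        by_contra hcon
        push Not at hcon
        exact hx4 (ContinuousLinearMap.ext hcon)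
      obtain ⟨l, hl⟩ := SeparatingDual.exists_ne_zero (R := ℝ) hv
      have hsm : ContDiff ℝ ∞ (iteratedFDeriv ℝ i f) :=
        hf.iteratedFDeriv_right (by exact_mod_cast le_top)
      have hg : ContDiff ℝ ∞ (fun x => l (iteratedFDeriv ℝ i f x)) := l.contDiff.comp hsm
      have hgd : fderiv ℝ (fun x => l (iteratedFDeriv ℝ i f x)) x =
          l.comp (fderiv ℝ (iteratedFDeriv ℝ i f) x) :=
        (l.hasFDerivAt.comp x (hsm.differentiable (by simp) x).hasFDerivAt).fderiv
      obtain ⟨O, hO, h0⟩ := sard_hyp μ IH f hf _ hg x (by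
        rw [hgd]; intro h'
        exact hl (congrArg (fun A => A v) h'))
      refine ⟨O, hO, measure_mono_null (image_mono ?_) h0⟩
      rintro y ⟨⟨hy1, _⟩, hyO⟩
      refine ⟨⟨?_, ?_⟩, hyO⟩
      · rw [← norm_eq_zero, ← norm_iteratedFDeriv_one, hy1 1 le_rfl hi, norm_zero]
      · show l (iteratedFDeriv ℝ i f y) = 0
        rw [hy1 i hi le_rfl, map_zero]
    have hN : μ (f '' B N) = 0 := sard_flat μ f hf
    have hU : μ (⋃ i : ℕ, f '' (B (i + 1) \ B (i + 1 + 1))) = 0 :=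
      measure_iUnion_null fun i => hB (i + 1) (by omega)
    refine measure_mono_null ?_ (measure_union_null hA (measure_union_null hU hN))
    rintro _ ⟨x, hx, rfl⟩
    by_cases h0 : fderiv ℝ f x = 0
    · right
      by_cases hxN : x ∈ B N
      · right; exact ⟨x, hxN, rfl⟩
      · left
        have hx1 : x ∈ B (0 + 1) := by
          intro j hj1 hj2
          obtain rfl : j = 1 := by omega
          rw [← norm_eq_zero, norm_iteratedFDeriv_one, h0, norm_zero]
        by_contra hcon
        have hall : ∀ i, x ∈ B (i + 1) := by
          intro i
          induction i with
          | zero => exact hx1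
          | succ i ihi =>
            by_contra hi
            exact hcon (mem_iUnion.2 ⟨i, x, ⟨ihi, hi⟩, rfl⟩)
        exact hxN fun j hj1 hj2 => hall N j hj1 (by omega)
    · left; exact ⟨x, ⟨hx, h0⟩, rfl⟩

lemma sard {E F : Type} [NormedAddCommGroup E] [NormedSpace ℝ E] [FiniteDimensional ℝ E]
    [NormedAddCommGroup F] [NormedSpace ℝ F] [FiniteDimensional ℝ F]
    [MeasurableSpace F] [BorelSpace F] (μ : Measure F) [μ.IsAddHaarMeasure]
    (f : E → F) (hf : ContDiff ℝ ∞ f) : μ (f '' {x | ¬ Surjective (fderiv ℝ f x)}) = 0 :=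
  sard_aux (Module.finrank ℝ E + 1) E F μ f (by omega) hf

lemma core {E T L : Type} [NormedAddCommGroup E] [NormedSpace ℝ E] [FiniteDimensional ℝ E]
    [NormedAddCommGroup T] [NormedSpace ℝ T] [FiniteDimensional ℝ T]
    [NormedAddCommGroup L] [NormedSpace ℝ L] [FiniteDimensional ℝ L]
    [MeasurableSpace T] [BorelSpace T] (μ : Measure T) [μ.IsAddHaarMeasure]
    (G : E × T → L) (hG : ContDiff ℝ ∞ G) (p₀ : E × T)
    (hs : Surjective (fderiv ℝ G p₀)) :
    ∃ Z : Set T, μ Z = 0 ∧ ∀ᶠ p in 𝓝 p₀, p.2 ∉ Z → G p = 0 →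
      Surjective ((fderiv ℝ G p).comp (ContinuousLinearMap.inl ℝ E T)) := by
  obtain ⟨P, Ψ, hΨ, h1, h2, -⟩ := straighten G hG p₀ hs
  let K := (fderiv ℝ G p₀).ker
  have hGd : Differentiable ℝ G := hG.differentiable (by simp)
  let R : K → E × T := fun k => Ψ (0, k)
  have hR : ContDiff ℝ ∞ R := hΨ.comp (contDiff_const.prodMk contDiff_id)
  have hRd : Differentiable ℝ R := hR.differentiable (by simp)
  have hR2 : ContDiff ℝ ∞ (fun k => (R k).2) := contDiff_snd.comp hR
  refine ⟨_, sard μ _ hR2, ?_⟩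
  have hsn : ∀ᶠ p in 𝓝 p₀, Surjective (fderiv ℝ G p) :=
    ((hG.continuous_fderiv (by simp)).tendsto p₀).eventually (isOpen_surj.mem_nhds hs)
  have hcont : Tendsto (fun p => (G p, P p)) (𝓝 p₀) (𝓝 (G p₀, P p₀)) :=
    (hG.continuous.prodMk P.continuous).tendsto p₀
  filter_upwards [h1, hcont.eventually (eventually_eventually_nhds.2 h2), hsn] with p hp1 hp2 hps hpZ hp0
  have hRp : R (P p) = p := by rw [hp0] at hp1; exact hp1
  have hreg : Surjective (fderiv ℝ (fun k => (R k).2) (P p)) := by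
    by_contra hcon
    exact hpZ ⟨P p, hcon, by simp only [hRp]⟩
  have hd2 : fderiv ℝ (fun k => (R k).2) (P p) =
      (ContinuousLinearMap.snd ℝ E T).comp (fderiv ℝ R (P p)) :=
    ((ContinuousLinearMap.snd ℝ E T).hasFDerivAt.comp (P p) (hRd (P p)).hasFDerivAt).fderiv
  have hzero : (fderiv ℝ G p).comp (fderiv ℝ R (P p)) = 0 := by
    have e1 : HasFDerivAt (fun k => G (R k)) ((fderiv ℝ G (R (P p))).comp (fderiv ℝ R (P p))) (P p) :=
      (hGd (R (P p))).hasFDerivAt.comp (P p) (hRd (P p)).hasFDerivAt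
    have e2 : (fun k => G (R k)) =ᶠ[𝓝 (P p)] fun _ => 0 := by
      rw [hp0] at hp2
      have hc : Tendsto (fun k : K => ((0 : L), k)) (𝓝 (P p)) (𝓝 (0, P p)) :=
        (continuous_const.prodMk continuous_id).tendsto _
      filter_upwards [hc.eventually hp2] with k hk
      exact congrArg Prod.fst hk
    rw [hRp] at e1
    exact e1.unique ((hasFDerivAt_const (0 : L) (P p)).congr_of_eventuallyEq e2)
  intro y
  obtain ⟨⟨a, t⟩, hat⟩ := hps y
  obtain ⟨k, hk⟩ := hreg t
  rw [hd2] at hk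
  refine ⟨a - (fderiv ℝ R (P p) k).1, ?_⟩
  have h5 : ((a - (fderiv ℝ R (P p) k).1, 0) : E × T) = (a, t) - fderiv ℝ R (P p) k := by
    refine Prod.ext rfl ?_
    have : (fderiv ℝ R (P p) k).2 = t := hk
    simp [this]
  have h6 : fderiv ℝ G p (fderiv ℝ R (P p) k) = 0 := congrArg (fun A => A k) hzero
  show fderiv ℝ G p (a - (fderiv ℝ R (P p) k).1, 0) = y
  rw [h5, map_sub, h6, hat, sub_zero]

lemma lin_proj {E : Type*} [NormedAddCommGroup E] [NormedSpace ℝ E] [FiniteDimensional ℝ E]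
    (A B : Submodule ℝ E) : ∃ (L : Submodule ℝ E) (p : E →L[ℝ] L),
      (∀ a ∈ A, p a = 0) ∧ (∀ b ∈ B, p b = 0 → b ∈ A) ∧ (∀ l, ∃ b ∈ B, p b = l) := by
  obtain ⟨P, hP⟩ := Submodule.ClosedComplemented.of_finiteDimensional A
  let q : E →L[ℝ] E := ContinuousLinearMap.id ℝ E - A.subtypeL.comp P
  have hq : ∀ x, q x = x - P x := fun x => rfl
  let L := B.map (q : E →ₗ[ℝ] E)
  obtain ⟨r, hr⟩ := Submodule.ClosedComplemented.of_finiteDimensional L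
  refine ⟨L, r.comp q, ?_, ?_, ?_⟩
  · intro x hx
    have : q x = 0 := by
      have := hP ⟨x, hx⟩
      rw [hq, this]; simp
    simp [this]
  · intro b hb h0
    have h1 := hr ⟨q b, b, hb, rfl⟩
    have h2 : r (q b) = 0 := h0
    have h3 : q b = 0 := by
      have := h2.symm.trans h1
      exact (congrArg Subtype.val this).symm
    rw [hq, sub_eq_zero] at h3
    rw [h3]; exact (P b).2
  · rintro ⟨l, b, hb, rfl⟩
    exact ⟨b, hb, hr ⟨q b, b, hb, rfl⟩⟩

lemma lin_dim {E L : Type*} [AddCommGroup E] [Module ℝ E] [FiniteDimensional ℝ E]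
    [AddCommGroup L] [Module ℝ L]
    (S₀ N₀ S N : Submodule ℝ E) (q₀ q : E →ₗ[ℝ] L) (hSN₀ : S₀ ≤ N₀) (hSN : S ≤ N)
    (hS : Module.finrank ℝ S₀ = Module.finrank ℝ S) (hN : Module.finrank ℝ N₀ = Module.finrank ℝ N)
    (h₀ : ∀ l, ∃ w ∈ N₀, q₀ w = l) (h : ∀ l, ∃ w ∈ N, q w = l)
    (hk₀ : ∀ w ∈ N₀, q₀ w = 0 → w ∈ S₀) (hk : ∀ w ∈ S, q w = 0) :
    ∀ w ∈ N, q w = 0 → w ∈ S := by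
  have r₀ := (q₀.domRestrict N₀).finrank_range_add_finrank_ker
  have r := (q.domRestrict N).finrank_range_add_finrank_ker
  rw [LinearMap.range_eq_top.2 (by
    intro l; obtain ⟨w, hw, hl⟩ := h₀ l; exact ⟨⟨w, hw⟩, hl⟩)] at r₀
  rw [LinearMap.range_eq_top.2 (by
    intro l; obtain ⟨w, hw, hl⟩ := h l; exact ⟨⟨w, hw⟩, hl⟩)] at r
  have e₀ := (Submodule.comapSubtypeEquivOfLe hSN₀).finrank_eq
  have e := (Submodule.comapSubtypeEquivOfLe hSN).finrank_eq
  have le₀ : LinearMap.ker (q₀.domRestrict N₀) ≤ S₀.comap N₀.subtype := by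
    intro w hw; exact hk₀ w w.2 hw
  have le : S.comap N.subtype ≤ LinearMap.ker (q.domRestrict N) := by
    intro w hw; exact hk w hw
  have := Submodule.finrank_mono le₀
  have heq := Submodule.eq_of_le_of_finrank_le le (by omega)
  intro w hw h0
  have : (⟨w, hw⟩ : N) ∈ LinearMap.ker (q.domRestrict N) := h0
  rw [← heq] at this
  exact this

lemma tangent_prod {E T : Type*} [NormedAddCommGroup E] [NormedSpace ℝ E]
    [NormedAddCommGroup T] [NormedSpace ℝ T] (M : Set E) (p v : E × T)
    (hv : v ∈ tangentSpaceOf (M ×ˢ (univ : Set T)) p) : v.1 ∈ tangentSpaceOf M p.1 := by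
  have : tangentSpaceOf (M ×ˢ (univ : Set T)) p ≤
      (tangentSpaceOf M p.1).comap (LinearMap.fst ℝ E T) := by
    apply Submodule.span_le.2
    rintro w ⟨γ, h1, h2, h3⟩
    apply Submodule.subset_span
    refine ⟨fun t => (γ t).1, fun t => (h1 t).1, by simp [h2], ?_⟩
    exact (ContinuousLinearMap.fst ℝ E T).hasFDerivAt.comp_hasDerivAt 0 h3
  exact this hv

lemma tangent_map {E F : Type*} [NormedAddCommGroup E] [NormedSpace ℝ E]
    [NormedAddCommGroup F] [NormedSpace ℝ F] {M : Set E} {N : Set F} {f : E → F} {x : E}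
    (hf : DifferentiableAt ℝ f x) (hm : MapsTo f M N) {v : E} (hv : v ∈ tangentSpaceOf M x) :
    fderiv ℝ f x v ∈ tangentSpaceOf N (f x) := by
  have : tangentSpaceOf M x ≤ (tangentSpaceOf N (f x)).comap (fderiv ℝ f x : E →ₗ[ℝ] F) := by
    apply Submodule.span_le.2
    rintro w ⟨γ, h1, h2, h3⟩
    apply Submodule.subset_span
    refine ⟨fun t => f (γ t), fun t => hm (h1 t), by simp [h2], ?_⟩
    subst h2
    exact hf.hasFDerivAt.comp_hasDerivAt 0 h3
  exact this hv

lemma tangent_mono {E : Type*} [NormedAddCommGroup E] [NormedSpace ℝ E]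
    {S N : Set E} (h : S ⊆ N) (x : E) : tangentSpaceOf S x ≤ tangentSpaceOf N x := by
  apply Submodule.span_mono
  rintro v ⟨γ, h1, h2⟩
  exact ⟨γ, fun t => h (h1 t), h2⟩

lemma chart {E : Type*} [NormedAddCommGroup E] [NormedSpace ℝ E] [FiniteDimensional ℝ E]
    {k : ℕ} {M : Set E} (hM : IsSubmanifoldOfDim k M) {x₀ : E} (hx₀ : x₀ ∈ M) :
    ∃ (K : Submodule ℝ E) (φ ψ : E → E), ContDiff ℝ ∞ φ ∧ ContDiff ℝ ∞ ψ ∧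
      ∀ᶠ x in 𝓝 x₀, x ∈ M → ψ (φ x) = x ∧ φ x ∈ K ∧
        (∀ v, fderiv ℝ ψ (φ x) (fderiv ℝ φ x v) = v) ∧
        (∀ v, fderiv ℝ φ x (fderiv ℝ ψ (φ x) v) = v) ∧
        (∀ v, v ∈ tangentSpaceOf M x ↔ fderiv ℝ φ x v ∈ K) ∧
        Module.finrank ℝ (tangentSpaceOf M x) = k := by
  obtain ⟨U, V, φ0, ψ0, K, hK, hU, hV, hxU, hφ0, hψ0, mφ, mψ, hl, hr, hMU⟩ := hM x₀ hx₀
  obtain ⟨φ, hφ, eφ⟩ := exists_global (hU.mem_nhds hxU)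
    (fun y hy => (hφ0.contDiffAt (hU.mem_nhds hy)))
  obtain ⟨ψ, hψ, eψ⟩ := exists_global (hV.mem_nhds (mφ hxU))
    (fun y hy => (hψ0.contDiffAt (hV.mem_nhds hy)))
  refine ⟨K, φ, ψ, hφ, hψ, ?_⟩
  have c1 : Tendsto φ (𝓝 x₀) (𝓝 (φ0 x₀)) := by
    rw [← eφ.self_of_nhds]; exact hφ.continuous.tendsto x₀
  filter_upwards [hU.mem_nhds hxU, eventually_eventually_nhds.2 eφ,
    c1.eventually (eventually_eventually_nhds.2 eψ)] with x hx e1 e2 hxM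
  have ex : φ x = φ0 x := e1.self_of_nhds
  have eψx : ψ (φ x) = x := by rw [e2.self_of_nhds, ex, hl x hx]
  have hφd := (hφ.differentiable (by simp) x).hasFDerivAt
  have hψd := (hψ.differentiable (by simp) (φ x)).hasFDerivAt
  have hxV : φ x ∈ V := by rw [ex]; exact mφ hx
  have n1 : ∀ᶠ y in 𝓝 x, y ∈ M → φ y ∈ K := by
    filter_upwards [e1, hU.mem_nhds hx] with y hy hyU hyM
    have : y ∈ U ∩ φ0 ⁻¹' (K : Set E) := hMU ▸ (⟨hyM, hyU⟩ : y ∈ M ∩ U)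
    rw [hy]; exact this.2
  have n2 : ∀ᶠ z in 𝓝 (φ x), z ∈ K → ψ z ∈ M := by
    filter_upwards [e2, hV.mem_nhds hxV] with z hz hzV hzK
    have : ψ0 z ∈ M ∩ U := by
      rw [hMU]
      refine ⟨mψ hzV, ?_⟩
      show φ0 (ψ0 z) ∈ K
      rw [hr z hzV]; exact hzK
    rw [hz]; exact this.1
  have n3 : ∀ᶠ y in 𝓝 x, ψ (φ y) = y := by
    filter_upwards [e1, hU.mem_nhds hx, (hφ.continuous.tendsto x).eventually e2] with y hy hyU hy2
    rw [hy2, hy, hl y hyU]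
  have n4 : ∀ᶠ z in 𝓝 (φ x), φ (ψ z) = z := by
    have ct : Tendsto ψ (𝓝 (φ x)) (𝓝 x) := by
      have := hψ.continuous.tendsto (φ x); rwa [eψx] at this
    filter_upwards [e2, hV.mem_nhds hxV, ct.eventually e1] with z hz hzV hz2
    rw [hz2, hz, hr z hzV]
  have i1 : ∀ v, fderiv ℝ ψ (φ x) (fderiv ℝ φ x v) = v := by
    have := (hψd.comp x hφd).unique ((hasFDerivAt_id x).congr_of_eventuallyEq n3)
    intro v; exact congrArg (fun A => A v) this
  have i2 : ∀ v, fderiv ℝ φ x (fderiv ℝ ψ (φ x) v) = v := by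
    have hφd' : HasFDerivAt φ (fderiv ℝ φ x) (ψ (φ x)) := by rw [eψx]; exact hφd
    have := (hφd'.comp (φ x) hψd).unique ((hasFDerivAt_id (φ x)).congr_of_eventuallyEq n4)
    intro v; exact congrArg (fun A => A v) this
  have htan : tangentSpaceOf M x = K.comap (fderiv ℝ φ x : E →ₗ[ℝ] E) := by
    apply le_antisymm
    · apply Submodule.span_le.2
      rintro v ⟨γ, h1, h2, h3⟩
      obtain ⟨P, hP⟩ := Submodule.ClosedComplemented.of_finiteDimensional K
      let q : E →L[ℝ] E := ContinuousLinearMap.id ℝ E - K.subtypeL.comp P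
      have hq : ∀ x, q x = x - P x := fun x => rfl
      have d1 : HasDerivAt (fun t => q (φ (γ t))) (q (fderiv ℝ φ x v)) 0 := by
        subst h2
        exact q.hasFDerivAt.comp_hasDerivAt 0 (hφd.comp_hasDerivAt 0 h3)
      have ct : Tendsto γ (𝓝 0) (𝓝 x) := by
        have := h3.continuousAt.tendsto; rwa [h2] at this
      have d2 : (fun t => q (φ (γ t))) =ᶠ[𝓝 0] fun _ => 0 := by
        filter_upwards [ct.eventually n1] with t ht
        have := hP ⟨_, ht (h1 t)⟩
        rw [hq, this]; simp
      have d3 := d1.unique ((hasDerivAt_const (0 : ℝ) (0 : E)).congr_of_eventuallyEq d2)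
      rw [hq, sub_eq_zero] at d3
      show fderiv ℝ φ x v ∈ K
      rw [d3]; exact (P _).2
    · intro v hv
      have hw : fderiv ℝ φ x v ∈ K := hv
      set w := fderiv ℝ φ x v with hwdef
      apply Submodule.subset_span
      classical
      have hline : HasDerivAt (fun t : ℝ => φ x + t • w) w 0 := by
        simpa using ((hasDerivAt_id (0 : ℝ)).smul_const w).const_add (φ x)
      have ct : Tendsto (fun t : ℝ => φ x + t • w) (𝓝 0) (𝓝 (φ x)) := by
        have := hline.continuousAt.tendsto; simpa using this
      refine ⟨fun t => if ψ (φ x + t • w) ∈ M then ψ (φ x + t • w) else x, ?_, ?_, ?_⟩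
      · intro t; dsimp only; split_ifs with h
        · exact h
        · exact hxM
      · simp [eψx]
      · have hψd' : HasFDerivAt ψ (fderiv ℝ ψ (φ x)) (φ x + (0 : ℝ) • w) := by simpa using hψd
        have d1 := hψd'.comp_hasDerivAt 0 hline
        rw [hwdef, i1] at d1
        refine d1.congr_of_eventuallyEq ?_
        have hφK := n1.self_of_nhds hxM
        filter_upwards [ct.eventually n2] with t ht
        rw [if_pos (ht (K.add_mem hφK (K.smul_mem t hw)))]
        rfl
  refine ⟨eψx, n1.self_of_nhds hxM, i1, i2, ?_, ?_⟩
  · intro v; rw [htan]; rfl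
  · let e : E ≃ₗ[ℝ] E := { (fderiv ℝ φ x : E →ₗ[ℝ] E) with
      invFun := fderiv ℝ ψ (φ x)
      left_inv := i1
      right_inv := i2 }
    rw [htan, ← hK]
    have : K.comap (fderiv ℝ φ x : E →ₗ[ℝ] E) = K.comap (e : E →ₗ[ℝ] E) := rfl
    rw [this, Submodule.comap_equiv_eq_map_symm]
    exact LinearEquiv.finrank_map_eq e.symm K

lemma local_thm (a b c m d s : ℕ)
    (M : Set (Euc a)) (N S : Set (Euc b))
    (hM : IsSubmanifoldOfDim m M) (hN : IsSubmanifoldOfDim d N)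
    (hSN : S ⊆ N) (hS : IsSubmanifoldOfDim s S)
    (F : Euc a × Euc c → Euc b) (hF : ContDiff ℝ ∞ F)
    (hmaps : MapsTo F (M ×ˢ (univ : Set (Euc c))) N)
    (p₀ : Euc a × Euc c) (hpM : p₀.1 ∈ M) (hpS : F p₀ ∈ S)
    (ht : ∀ w ∈ tangentSpaceOf N (F p₀), ∃ u ∈ tangentSpaceOf S (F p₀),
        ∃ v ∈ tangentSpaceOf (M ×ˢ (univ : Set (Euc c))) p₀,
          w = u + fderiv ℝ F p₀ v) :
    ∃ Z : Set (Euc c), volume Z = 0 ∧ ∀ᶠ p in 𝓝 p₀, p.2 ∉ Z → p.1 ∈ M → F p ∈ S →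
        ∀ w ∈ tangentSpaceOf N (F p), ∃ u ∈ tangentSpaceOf S (F p),
          ∃ v ∈ tangentSpaceOf M p.1, w = u + fderiv ℝ (fun x' => F (x', p.2)) p.1 v := by
  obtain ⟨KM, φM, ψM, sφM, sψM, hcM⟩ := chart hM hpM
  obtain ⟨KN, φN, ψN, sφN, sψN, hcN⟩ := chart hN (hSN hpS)
  obtain ⟨KS, φS, ψS, sφS, sψS, hcS⟩ := chart hS hpS
  set y₀ := F p₀ with hy₀
  obtain ⟨L, p, hp1, hp2, hp3⟩ := lin_proj KS
    ((tangentSpaceOf N y₀).map (fderiv ℝ φS y₀ : Euc b →ₗ[ℝ] Euc b))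
  obtain ⟨m1, m2, m3, m4, m5, m6⟩ := hcM.self_of_nhds hpM
  obtain ⟨k1, k2, k3, k4, k5, k6⟩ := hcN.self_of_nhds (hSN hpS)
  obtain ⟨s1, s2, s3, s4, s5, s6⟩ := hcS.self_of_nhds hpS
  have hFd : Differentiable ℝ F := hF.differentiable (by simp)
  -- the map G
  let G : KM × Euc c → L := fun z => p (φS (F (ψM z.1, z.2)))
  have sG : ContDiff ℝ ∞ G := by
    refine p.contDiff.comp (sφS.comp (hF.comp ?_))
    exact (sψM.comp (KM.subtypeL.contDiff.comp contDiff_fst)).prodMk contDiff_snd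
  have hGd : ∀ (z : KM × Euc c) (k : KM) (τ : Euc c), fderiv ℝ G z (k, τ) =
      p (fderiv ℝ φS (F (ψM z.1, z.2)) (fderiv ℝ F (ψM z.1, z.2) (fderiv ℝ ψM z.1 k, τ))) := by
    intro z k τ
    have d1 : HasFDerivAt (fun z : KM × Euc c => (z.1 : Euc a))
        (KM.subtypeL.comp (ContinuousLinearMap.fst ℝ KM (Euc c))) z :=
      (KM.subtypeL.comp (ContinuousLinearMap.fst ℝ KM (Euc c))).hasFDerivAt
    have d2 := ((sψM.differentiable (by simp) (z.1 : Euc a)).hasFDerivAt.comp z d1).prodMk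
      (hasFDerivAt_snd (𝕜 := ℝ) (p := z))
    have d3 := p.hasFDerivAt.comp z ((sφS.differentiable (by simp) _).hasFDerivAt.comp z
      (HasFDerivAt.comp (g := F) z (hFd (ψM z.1, z.2)).hasFDerivAt d2))
    have d4 : HasFDerivAt G _ z := d3
    rw [d4.fderiv]
    rfl
  let z₀ : KM × Euc c := (⟨φM p₀.1, m2⟩, p₀.2)
  have hz₀ : (ψM z₀.1, z₀.2) = p₀ := Prod.ext m1 rfl
  have hqS : ∀ u ∈ tangentSpaceOf S y₀, p (fderiv ℝ φS y₀ u) = 0 := fun u hu =>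
    hp1 _ ((s5 u).1 hu)
  have hq0 : ∀ l, ∃ w ∈ tangentSpaceOf N y₀, p (fderiv ℝ φS y₀ w) = l := by
    intro l
    obtain ⟨_, ⟨w, hw, rfl⟩, hl⟩ := hp3 l
    exact ⟨w, hw, hl⟩
  have hGs : Surjective (fderiv ℝ G z₀) := by
    intro l
    obtain ⟨w, hw, hl⟩ := hq0 l
    obtain ⟨u, hu, v, hv, hwuv⟩ := ht w hw
    have hv1 : fderiv ℝ φM p₀.1 v.1 ∈ KM := (m5 _).1 (tangent_prod M p₀ v hv)
    refine ⟨(⟨_, hv1⟩, v.2), ?_⟩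
    rw [hGd, hz₀]
    have : fderiv ℝ ψM (z₀.1 : Euc a) (fderiv ℝ φM p₀.1 v.1) = v.1 := m3 v.1
    simp only [this]
    rw [← hl, hwuv, map_add, map_add, hqS u hu, zero_add]
  obtain ⟨Z, hZ, hcore⟩ := core volume G sG z₀ hGs
  refine ⟨Z, hZ, ?_⟩
  -- pull back the neighbourhood along a retraction on KM
  obtain ⟨R, hR⟩ := Submodule.ClosedComplemented.of_finiteDimensional KM
  have hct : Tendsto (fun q : Euc a × Euc c => ((R (φM q.1), q.2) : KM × Euc c)) (𝓝 p₀) (𝓝 z₀) := by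
    have hc : Continuous (fun q : Euc a × Euc c => ((R (φM q.1), q.2) : KM × Euc c)) :=
      (R.continuous.comp (sφM.continuous.comp continuous_fst)).prodMk continuous_snd
    have := hc.tendsto p₀
    have h0 : R (φM p₀.1) = ⟨φM p₀.1, m2⟩ := hR ⟨_, m2⟩
    rwa [h0] at this
  have hcF : Tendsto F (𝓝 p₀) (𝓝 y₀) := hF.continuous.tendsto p₀
  have hc1 : Tendsto (fun q : Euc a × Euc c => q.1) (𝓝 p₀) (𝓝 p₀.1) := continuous_fst.tendsto p₀
  -- submersion of N near y₀
  let B : Euc b → KN →L[ℝ] L := fun y =>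
    p.comp ((fderiv ℝ φS y).comp ((fderiv ℝ ψN (φN y)).comp KN.subtypeL))
  have hB : Continuous B := by
    refine continuous_const.clm_comp ((sφS.continuous_fderiv (by simp)).clm_comp ?_)
    exact ((sψN.continuous_fderiv (by simp)).comp sφN.continuous).clm_comp continuous_const
  have hBs : Surjective (B y₀) := by
    intro l
    obtain ⟨w, hw, hl⟩ := hq0 l
    refine ⟨⟨_, (k5 w).1 hw⟩, ?_⟩
    show p (fderiv ℝ φS y₀ (fderiv ℝ ψN (φN y₀) (fderiv ℝ φN y₀ w))) = l
    rw [k3, hl]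
  have hBn : ∀ᶠ y in 𝓝 y₀, Surjective (B y) :=
    (hB.tendsto y₀).eventually (isOpen_surj.mem_nhds hBs)
  filter_upwards [hct.eventually hcore, hc1.eventually hcM, hcF.eventually hcN,
    hcF.eventually hcS, hcF.eventually hBn] with q hq qM qN qS qB hqZ hqM hqS' w hw
  obtain ⟨a1, a2, a3, a4, a5, a6⟩ := qM hqM
  obtain ⟨b1, b2, b3, b4, b5, b6⟩ := qN (hSN hqS')
  obtain ⟨c1, c2, c3, c4, c5, c6⟩ := qS hqS'
  have hRq : R (φM q.1) = ⟨φM q.1, a2⟩ := hR ⟨_, a2⟩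
  rw [hRq] at hq
  have hzq : (ψM (φM q.1), q.2) = q := Prod.ext a1 rfl
  have hker : ∀ w ∈ tangentSpaceOf N (F q), p (fderiv ℝ φS (F q) w) = 0 →
      w ∈ tangentSpaceOf S (F q) := by
    refine lin_dim (tangentSpaceOf S y₀) (tangentSpaceOf N y₀) (tangentSpaceOf S (F q))
      (tangentSpaceOf N (F q))
      ((p.comp (fderiv ℝ φS y₀) : Euc b →L[ℝ] L) : Euc b →ₗ[ℝ] L)
      ((p.comp (fderiv ℝ φS (F q)) : Euc b →L[ℝ] L) : Euc b →ₗ[ℝ] L)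
      (tangent_mono hSN _) (tangent_mono hSN _) (s6.trans c6.symm) (k6.trans b6.symm)
      hq0 ?_ ?_ ?_
    · intro l
      obtain ⟨k, hk⟩ := qB l
      refine ⟨fderiv ℝ ψN (φN (F q)) k, ?_, hk⟩
      rw [b5, b4]; exact k.2
    · intro w hw h0
      rw [s5]
      exact hp2 _ ⟨w, hw, rfl⟩ h0
    · intro u hu
      exact hp1 _ ((c5 u).1 hu)
  have hG0 : G (⟨φM q.1, a2⟩, q.2) = 0 := by
    show p (φS (F (ψM (φM q.1), q.2))) = 0
    rw [hzq]; exact hp1 _ c2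
  obtain ⟨k, hk⟩ := hq hqZ hG0 (p (fderiv ℝ φS (F q) w))
  have hk' : fderiv ℝ G (⟨φM q.1, a2⟩, q.2) (k, 0) = p (fderiv ℝ φS (F q) w) := hk
  rw [hGd] at hk'
  simp only [hzq] at hk'
  set v : Euc a := fderiv ℝ ψM (φM q.1) k with hv
  have hvT : v ∈ tangentSpaceOf M q.1 := by rw [a5, hv, a4]; exact k.2
  have h1 : HasFDerivAt (fun x' => F (x', q.2)) _ q.1 :=
    HasFDerivAt.comp (g := F) (f := fun x' => (x', q.2)) q.1 (hFd (q.1, q.2)).hasFDerivAt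
      (hasFDerivAt_prodMk_left (𝕜 := ℝ) q.1 q.2)
  have hpart : fderiv ℝ (fun x' => F (x', q.2)) q.1 v = fderiv ℝ F q (v, 0) := by
    rw [h1.fderiv]; rfl
  have hdiff : DifferentiableAt ℝ (fun x' => F (x', q.2)) q.1 := h1.differentiableAt
  have hvN : fderiv ℝ F q (v, 0) ∈ tangentSpaceOf N (F q) := by
    rw [← hpart]
    exact tangent_map (M := M) hdiff (fun x hx => hmaps ⟨hx, trivial⟩) hvT
  refine ⟨w - fderiv ℝ F q (v, 0), ?_, v, hvT, ?_⟩
  · refine hker _ (Submodule.sub_mem _ hw hvN) ?_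
    rw [map_sub, map_sub, hk', sub_self]
  · rw [hpart]; abel

end Helpers

/-- **Parametric Transversality Theorem.** If `F : M × T → N` is smooth and transverse to a
submanifold `S ⊂ N` (parameter manifold `T = ℝ^c`), then for almost every `t` (all `t`
outside a Lebesgue-null set `Z`), the map `F_t = F(·, t) : M → N` is transverse to `S`. -/
theorem parametric_transversality (a b c m d s : ℕ)
    (M : Set (Euc a)) (N S : Set (Euc b))
    (hM : IsSubmanifoldOfDim m M) (hN : IsSubmanifoldOfDim d N)
    (hSN : S ⊆ N) (hS : IsSubmanifoldOfDim s S)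
    (F : Euc a × Euc c → Euc b) (hF : ContDiff ℝ (⊤ : ℕ∞) F)
    (hmaps : MapsTo F (M ×ˢ (univ : Set (Euc c))) N)
    (ht : ∀ x ∈ M, ∀ t : Euc c, F (x, t) ∈ S →
      ∀ w ∈ tangentSpaceOf N (F (x, t)), ∃ u ∈ tangentSpaceOf S (F (x, t)),
        ∃ v ∈ tangentSpaceOf (M ×ˢ (univ : Set (Euc c))) (x, t),
          w = u + fderiv ℝ F (x, t) v) :
    ∃ Z : Set (Euc c), MeasureTheory.volume Z = 0 ∧
      ∀ t ∉ Z, ∀ x ∈ M, F (x, t) ∈ S →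
        ∀ w ∈ tangentSpaceOf N (F (x, t)), ∃ u ∈ tangentSpaceOf S (F (x, t)),
          ∃ v ∈ tangentSpaceOf M x, w = u + fderiv ℝ (fun x' => F (x', t)) x v := by
  classical
  let Bad : Set (Euc a × Euc c) := {p | p.1 ∈ M ∧ F p ∈ S ∧
    ¬ (∀ w ∈ tangentSpaceOf N (F p), ∃ u ∈ tangentSpaceOf S (F p),
          ∃ v ∈ tangentSpaceOf M p.1, w = u + fderiv ℝ (fun x' => F (x', p.2)) p.1 v)}
  refine ⟨Prod.snd '' Bad, ?_, ?_⟩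
  · apply null_image_of_locally
    rintro p₀ ⟨hp1, hp2, -⟩
    obtain ⟨Z, hZ, hZ2⟩ := local_thm a b c m d s M N S hM hN hSN hS F hF hmaps p₀ hp1 hp2
      (ht p₀.1 hp1 p₀.2 hp2)
    refine ⟨_, hZ2, MeasureTheory.measure_mono_null ?_ hZ⟩
    rintro _ ⟨p, ⟨⟨h1, h2, h3⟩, h4⟩, rfl⟩
    by_contra hcon
    exact h3 (h4 hcon h1 h2)
  · intro t htZ x hx hxS
    by_contra hcon
    exact htZ ⟨(x, t), ⟨hx, hxS, hcon⟩, rfl⟩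
end
end

section
/- (Whitney Approximation) Let f : M → N be a continuous map between smooth manifolds, δ : M → ℝ a positive continuous function, and d a metric inducing the topology of N. Then there exists a smooth map g : M → N with d(f(x), g(x)) ≤ δ(x) for all x ∈ M; moreover, if f is already smooth on (a neighborhood of) a closed subset A ⊂ M, then g can be chosen with g|_A = f|_A. -/
/- Framework: embedded submanifolds of Euclidean space (Guillemin–Pollack style),
tangent spaces via velocity vectors of curves, local-straightening charts. -/

noncomputable section
open Set Function
open scoped RealInnerProductSpace

open Filter Topology in
lemma smooth_inv_aux {E F : Type*} [NormedAddCommGroup E] [NormedSpace ℝ E] [CompleteSpace E]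
    [NormedAddCommGroup F] [NormedSpace ℝ F] (f : E → F) (O : Set E) (hO : IsOpen O)
    (hf : ContDiffOn ℝ (⊤ : ℕ∞) f O) (a : E) (ha : a ∈ O) (f' : E ≃L[ℝ] F)
    (hf' : HasFDerivAt f (f' : E →L[ℝ] F) a) :
    ∃ (g : F → E) (O' : Set E) (V : Set F), IsOpen O' ∧ IsOpen V ∧ a ∈ O' ∧ O' ⊆ O ∧ f a ∈ V ∧
      ContDiffOn ℝ (⊤ : ℕ∞) g V ∧ MapsTo g V O' ∧ ∀ x ∈ O', g (f x) = x := by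
  have hat : ∀ x ∈ O, ContDiffAt ℝ (⊤ : ℕ∞) f x := fun x hx => hf.contDiffAt (hO.mem_nhds hx)
  let e := (hat a ha).toOpenPartialHomeomorph f hf' (by simp)
  have hes : a ∈ e.source := (hat a ha).mem_toOpenPartialHomeomorph_source hf' (by simp)
  have hcoe : (e : E → F) = f := rfl
  have hcont : ContinuousAt (fderiv ℝ f) a :=
    ((hat a ha).fderiv_right (m := 0) (by simp)).continuousAt
  have hev : ∀ᶠ x in 𝓝 a, fderiv ℝ f x ∈ range ((↑) : (E ≃L[ℝ] F) → E →L[ℝ] F) := by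
    apply hcont
    rw [hf'.fderiv]
    exact f'.nhds
  obtain ⟨Q, hQ, hQo, haQ⟩ := eventually_nhds_iff.1 hev
  let O' := e.source ∩ (O ∩ Q)
  have hO' : IsOpen O' := e.open_source.inter (hO.inter hQo)
  refine ⟨e.symm, O', e.target ∩ e.symm ⁻¹' O', hO', e.isOpen_inter_preimage_symm hO',
    ⟨hes, ha, haQ⟩, fun x hx => hx.2.1, ⟨e.map_source hes, ?_⟩, ?_, ?_, ?_⟩
  · show e.symm (e a) ∈ O'
    rw [e.left_inv hes]; exact ⟨hes, ha, haQ⟩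
  · rintro y ⟨hy, hy'⟩
    obtain ⟨f₀, h0⟩ := hQ _ hy'.2.2
    have h1 := hat _ hy'.2.1
    refine (e.contDiffAt_symm hy (f₀' := f₀) ?_ h1).contDiffWithinAt
    rw [h0]
    exact (h1.differentiableAt (by simp)).hasFDerivAt
  · exact fun y hy => hy.2
  · exact fun x hx => e.left_inv hx.1

open Filter Topology in
lemma local_proj_aux {E : Type*} [NormedAddCommGroup E] [InnerProductSpace ℝ E]
    [FiniteDimensional ℝ E] (k : ℕ) (N : Set E) (hN : IsSubmanifoldOfDim k N) (y₀ : E)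
    (hy₀ : y₀ ∈ N) :
    ∃ (W : Set E) (s : E → E), IsOpen W ∧ y₀ ∈ W ∧ ContDiffOn ℝ (⊤ : ℕ∞) s W ∧
      ∀ w ∈ W, (∃ y ∈ N, ∀ z ∈ N, dist w y ≤ dist w z) ∧
        ∀ y ∈ N, (∀ z ∈ N, dist w y ≤ dist w z) → y = s w := by
  obtain ⟨U, V, φ, ψ, K, -, hU, hV, hyU, hφ, hψ, hφV, hψU, hψφ, hφψ, hNU⟩ := hN y₀ hy₀
  have memN : ∀ y ∈ U, (y ∈ N ↔ φ y ∈ K) := by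
    intro y hy
    have := Set.ext_iff.1 hNU y
    simp only [mem_inter_iff, hy, and_true, true_and, mem_preimage, SetLike.mem_coe] at this
    exact this
  have hcomp : CompleteSpace K := FiniteDimensional.complete ℝ K
  let k₀ : K := ⟨φ y₀, (memN y₀ hyU).1 hy₀⟩
  have hψk₀ : ψ k₀ = y₀ := hψφ y₀ hyU
  let L : K → K →L[ℝ] E := fun k => (fderiv ℝ ψ k).comp K.subtypeL
  let G : K × E → K := fun p => ContinuousLinearMap.adjoint (L p.1) (ψ p.1 - p.2)
  let T : K × E → K × E := fun p => (G p, p.2)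
  let O : Set (K × E) := {p | (p.1 : E) ∈ V}
  have hO : IsOpen O := hV.preimage (by fun_prop)
  have hψc : ContDiffOn ℝ (⊤ : ℕ∞) (fun p : K × E => ψ p.1) O :=
    hψ.comp (K.subtypeL.contDiff.comp contDiff_fst).contDiffOn (fun p hp => hp)
  have hLc : ContDiffOn ℝ (⊤ : ℕ∞) (fun p : K × E => L p.1) O := by
    have h1 : ContDiffOn ℝ (⊤ : ℕ∞) (fderiv ℝ ψ) V := hψ.fderiv_of_isOpen hV (by simp)
    have h2 : ContDiffOn ℝ (⊤ : ℕ∞) (fun p : K × E => fderiv ℝ ψ p.1) O :=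
      h1.comp (K.subtypeL.contDiff.comp contDiff_fst).contDiffOn (fun p hp => hp)
    exact h2.clm_comp contDiffOn_const
  have hadj : ContDiffOn ℝ (⊤ : ℕ∞)
      (fun p : K × E => ContinuousLinearMap.adjoint (L p.1)) O := by
    have : ContDiff ℝ (⊤ : ℕ∞) (fun A : K →L[ℝ] E => ContinuousLinearMap.adjoint A) :=
      (ContinuousLinearMap.adjoint (𝕜 := ℝ) (E := K) (F := E)).toContinuousLinearEquiv.contDiff
    exact this.comp_contDiffOn hLc
  have hGc : ContDiffOn ℝ (⊤ : ℕ∞) G O := hadj.clm_apply (hψc.sub contDiffOn_snd)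
  have hTc : ContDiffOn ℝ (⊤ : ℕ∞) T O := hGc.prodMk contDiffOn_snd
  have hk₀V : (k₀ : E) ∈ V := hφV hyU
  have hp₀ : (k₀, y₀) ∈ O := hk₀V
  -- derivative of ψ restricted to K
  have hψd : ∀ k : K, (k : E) ∈ V → HasFDerivAt (fun k : K => ψ k) (L k) k := by
    intro k hk
    have h1 : HasFDerivAt ψ (fderiv ℝ ψ k) (k : E) :=
      ((hψ.contDiffAt (hV.mem_nhds hk)).differentiableAt (by simp)).hasFDerivAt
    exact h1.comp k K.subtypeL.hasFDerivAt
  have hLinj : ∀ v, L k₀ v = 0 → v = 0 := by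
    intro v hv
    have h1 : HasFDerivAt φ (fderiv ℝ φ (ψ k₀)) (ψ k₀) := by
      rw [hψk₀]
      exact ((hφ.contDiffAt (hU.mem_nhds hyU)).differentiableAt (by simp)).hasFDerivAt
    have h2 := h1.comp k₀ (hψd k₀ hk₀V)
    have h3 : HasFDerivAt (φ ∘ fun k : K => ψ k) K.subtypeL k₀ := by
      refine K.subtypeL.hasFDerivAt.congr_of_eventuallyEq ?_
      have : ∀ᶠ k : K in 𝓝 k₀, (k : E) ∈ V :=
        (continuous_subtype_val.continuousAt (x := k₀)) (hV.mem_nhds hk₀V)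
      filter_upwards [this] with k hk
      exact hφψ k hk
    have h4 := congrArg (fun A => A v) (h2.unique h3)
    simp only [ContinuousLinearMap.comp_apply, hv, map_zero] at h4
    exact Subtype.ext (by simpa using h4.symm)
  -- derivative of T
  have hTd : HasFDerivAt T (fderiv ℝ T (k₀, y₀)) (k₀, y₀) :=
    ((hTc.contDiffAt (hO.mem_nhds hp₀)).differentiableAt (by simp)).hasFDerivAt
  have hTapp : ∀ v u, fderiv ℝ T (k₀, y₀) (v, u) =
      (ContinuousLinearMap.adjoint (L k₀) (L k₀ v - u), u) := by
    intro v u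
    have hA : HasFDerivAt (fun p : K × E => ContinuousLinearMap.adjoint (L p.1))
        (fderiv ℝ (fun p : K × E => ContinuousLinearMap.adjoint (L p.1)) (k₀, y₀)) (k₀, y₀) :=
      ((hadj.contDiffAt (hO.mem_nhds hp₀)).differentiableAt (by simp)).hasFDerivAt
    have hB : HasFDerivAt (fun p : K × E => ψ p.1 - p.2)
        ((L k₀).comp (ContinuousLinearMap.fst ℝ K E) - ContinuousLinearMap.snd ℝ K E)
        (k₀, y₀) :=
      (HasFDerivAt.comp (k₀, y₀) (g := fun k : K => ψ k) (f := Prod.fst) (hψd k₀ hk₀V)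
        hasFDerivAt_fst).sub hasFDerivAt_snd
    have hT2 := (hA.clm_apply hB).prodMk (hasFDerivAt_snd (𝕜 := ℝ) (p := (k₀, y₀)))
    have := hTd.unique hT2
    rw [this]
    simp [hψk₀]
  have hinj : Function.Injective (fderiv ℝ T (k₀, y₀)) := by
    rw [injective_iff_map_eq_zero]
    rintro ⟨v, u⟩ h
    rw [hTapp, Prod.mk_eq_zero] at h
    obtain ⟨h1, rfl⟩ := h
    rw [sub_zero] at h1
    have : L k₀ v = 0 := by
      rw [← inner_self_eq_zero (𝕜 := ℝ), ← ContinuousLinearMap.adjoint_inner_left, h1,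
        inner_zero_left]
    rw [hLinj v this]; rfl
  let T' : (K × E) ≃L[ℝ] (K × E) :=
    (LinearEquiv.ofInjectiveEndo (fderiv ℝ T (k₀, y₀)).toLinearMap hinj).toContinuousLinearEquiv
  have hT' : (T' : (K × E) →L[ℝ] (K × E)) = fderiv ℝ T (k₀, y₀) := by
    ext p <;> rfl
  obtain ⟨g, O', V', hO', hV', hpO', hO'O, hTV', hg, hgO', hgT⟩ :=
    smooth_inv_aux T O hO hTc (k₀, y₀) hp₀ T' (by rw [hT']; exact hTd)
  have hT0 : T (k₀, y₀) = (0, y₀) := by simp [T, G, hψk₀]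
  rw [hT0] at hTV'
  -- radius
  have hφk : ContinuousAt φ y₀ := hφ.continuousOn.continuousAt (hU.mem_nhds hyU)
  have hO'ev : ∀ᶠ q : (K × E) in 𝓝 (k₀, y₀), q ∈ O' := hO'.mem_nhds hpO'
  obtain ⟨P, hP, Q, hQ, hPQ⟩ := mem_nhds_prod_iff.1 hO'ev
  obtain ⟨P', hP', hPP'⟩ := mem_nhds_subtype _ _ _ |>.1 hP
  have hUP : U ∩ φ ⁻¹' P' ∈ 𝓝 y₀ := inter_mem (hU.mem_nhds hyU) (hφk hP')
  obtain ⟨R, hR, hRU⟩ := Metric.nhds_basis_closedBall.mem_iff.1 hUP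
  have hcpt : IsCompact (N ∩ Metric.closedBall y₀ R) := by
    have h1 : IsClosed (Metric.closedBall y₀ R ∩ φ ⁻¹' (K : Set E)) :=
      (hφ.continuousOn.mono (fun y hy => (hRU hy).1)).preimage_isClosed_of_isClosed
        Metric.isClosed_closedBall K.closed_of_finiteDimensional
    have h2 : N ∩ Metric.closedBall y₀ R = Metric.closedBall y₀ R ∩ φ ⁻¹' (K : Set E) := by
      ext y
      constructor
      · rintro ⟨h, h'⟩; exact ⟨h', (memN y (hRU h').1).1 h⟩
      · rintro ⟨h, h'⟩; exact ⟨(memN y (hRU h).1).2 h', h⟩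
    rw [h2]
    exact (isCompact_closedBall y₀ R).inter_right h1 |>.of_isClosed_subset h1
      (fun y hy => ⟨hy.1, hy⟩)
  refine ⟨Metric.ball y₀ (R / 2) ∩ interior Q ∩ (fun w : E => ((0 : K), w)) ⁻¹' V',
    fun w => ψ (g (0, w)).1, ?_, ?_, ?_, ?_⟩
  · exact (Metric.isOpen_ball.inter isOpen_interior).inter (hV'.preimage (by fun_prop))
  · exact ⟨⟨Metric.mem_ball_self (by linarith), mem_interior_iff_mem_nhds.2 hQ⟩, hTV'⟩
  · have h1 : ContDiffOn ℝ (⊤ : ℕ∞) (fun w : E => g ((0 : K), w))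
        (Metric.ball y₀ (R / 2) ∩ interior Q ∩ (fun w : E => ((0 : K), w)) ⁻¹' V') :=
      hg.comp (contDiff_const.prodMk contDiff_id).contDiffOn (fun w hw => hw.2)
    exact hψc.comp h1 (fun w hw => hO'O (hgO' hw.2))
  · rintro w ⟨⟨hwR, hwQ⟩, hwV'⟩
    rw [Metric.mem_ball] at hwR
    constructor
    · obtain ⟨y, hy, hmin⟩ := hcpt.exists_isMinOn
        ⟨y₀, hy₀, Metric.mem_closedBall_self hR.le⟩ (f := fun z => dist w z) (by fun_prop)
      refine ⟨y, hy.1, fun z hz => ?_⟩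
      by_cases hzR : z ∈ Metric.closedBall y₀ R
      · exact hmin ⟨hz, hzR⟩
      · have h1 : dist w y ≤ dist w y₀ := hmin ⟨hy₀, Metric.mem_closedBall_self hR.le⟩
        rw [Metric.mem_closedBall, not_le] at hzR
        have h2 := dist_triangle z w y₀
        rw [dist_comm z w] at h2
        linarith
    · intro y hy hmin
      have hyR : y ∈ Metric.closedBall y₀ R := by
        have h1 := hmin y₀ hy₀
        have h2 := dist_triangle y w y₀
        rw [dist_comm y w] at h2
        rw [Metric.mem_closedBall]; linarith
      have hyU' := (hRU hyR).1
      have hyP := (hRU hyR).2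
      let κ : K := ⟨φ y, (memN y hyU').1 hy⟩
      have hκV : (κ : E) ∈ V := hφV hyU'
      have hψκ : ψ κ = y := hψφ y hyU'
      have hq : (κ, w) ∈ O' := hPQ ⟨hPP' hyP, interior_subset hwQ⟩
      have hloc : IsLocalMin (fun k : K => ‖ψ k - w‖ ^ 2) κ := by
        have : ∀ᶠ k : K in 𝓝 κ, (k : E) ∈ V :=
          (continuous_subtype_val.continuousAt (x := κ)) (hV.mem_nhds hκV)
        filter_upwards [this] with k hk
        have hm := hmin (ψ k) ((memN _ (hψU hk)).2 (by rw [hφψ _ hk]; exact k.2))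
        rw [hψκ]
        rw [dist_comm, dist_comm w, dist_eq_norm, dist_eq_norm] at hm
        gcongr
      have hder := ((hψd κ hκV).sub_const w).norm_sq
      have hzero := hloc.hasFDerivAt_eq_zero hder
      have hG0 : G (κ, w) = 0 := by
        refine ext_inner_right ℝ fun v => ?_
        have := congrArg (fun A => A v) hzero
        simp only [G, ContinuousLinearMap.adjoint_inner_left]
        simpa [inner_sub_left] using this
      have hfin := hgT _ hq
      have hTq : T (κ, w) = (0, w) := by simp only [T, hG0]
      rw [hTq] at hfin
      show y = ψ (g (0, w)).1
      rw [hfin, hψκ]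

lemma retraction_aux {E : Type*} [NormedAddCommGroup E] [InnerProductSpace ℝ E]
    [FiniteDimensional ℝ E] (k : ℕ) (N : Set E) (hN : IsSubmanifoldOfDim k N) :
    ∃ (W : Set E) (r : E → E), IsOpen W ∧ N ⊆ W ∧ ContDiffOn ℝ (⊤ : ℕ∞) r W ∧
      MapsTo r W N ∧ ∀ y ∈ N, r y = y := by
  classical
  choose! W s hW hyW hs hWs using local_proj_aux k N hN
  let p : E → E → Prop := fun w y => y ∈ N ∧ ∀ z ∈ N, dist w y ≤ dist w z
  let r : E → E := fun w => if h : ∃ y, p w y then h.choose else w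
  have hr : ∀ y ∈ N, ∀ w ∈ W y, p w (r w) ∧ r w = s y w := by
    intro y hy w hw
    have hex : ∃ z, p w z := (hWs y hy w hw).1
    have h1 : p w (r w) := by
      simp only [r, dif_pos hex]; exact hex.choose_spec
    exact ⟨h1, (hWs y hy w hw).2 _ h1.1 h1.2⟩
  refine ⟨⋃ y ∈ N, W y, r, isOpen_biUnion hW, fun y hy => mem_biUnion hy (hyW y hy), ?_, ?_, ?_⟩
  · intro w hw
    obtain ⟨y, hy, hwy⟩ := mem_iUnion₂.1 hw
    have h1 : ContDiffAt ℝ (⊤ : ℕ∞) (s y) w := (hs y hy).contDiffAt ((hW y hy).mem_nhds hwy)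
    refine (h1.congr_of_eventuallyEq ?_).contDiffWithinAt
    filter_upwards [(hW y hy).mem_nhds hwy] with z hz
    exact (hr y hy z hz).2
  · intro w hw
    obtain ⟨y, hy, hwy⟩ := mem_iUnion₂.1 hw
    exact (hr y hy w hwy).1.1
  · intro y hy
    have := (hr y hy y (hyW y hy)).1.2 y hy
    rw [dist_self] at this
    exact (dist_le_zero.1 this).symm

open Filter Topology in
/-- **Whitney Approximation Theorem.** For a continuous map `f : M → N`, a positive
continuous function `δ` on `M`, and any metric `d` inducing the topology of `N`, there is a
smooth map `g : M → N` with `d(f x, g x) ≤ δ x` for all `x ∈ M`; if `f` is smooth on a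
neighborhood of a closed subset `A ⊂ M`, then `g` can be chosen with `g|_A = f|_A`. -/
theorem whitney_approximation (a b m dN : ℕ) (M : Set (Euc a)) (N : Set (Euc b))
    (hM : IsSubmanifoldOfDim m M) (hN : IsSubmanifoldOfDim dN N)
    (f : Euc a → Euc b) (hf : ContinuousOn f M) (hmaps : MapsTo f M N)
    (δ : Euc a → ℝ) (hδ : ContinuousOn δ M) (hδpos : ∀ x ∈ M, 0 < δ x)
    -- d is a metric on N inducing its subspace topology
    (d : Euc b → Euc b → ℝ)
    (hd0 : ∀ y ∈ N, ∀ z ∈ N, (d y z = 0 ↔ y = z))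
    (hdsymm : ∀ y ∈ N, ∀ z ∈ N, d y z = d z y)
    (hdtri : ∀ y ∈ N, ∀ z ∈ N, ∀ w ∈ N, d y w ≤ d y z + d z w)
    (hdtop : ∀ y ∈ N, ∀ ε > (0:ℝ),
      (∃ δ' > (0:ℝ), ∀ z ∈ N, dist z y < δ' → d z y < ε) ∧
      (∃ δ'' > (0:ℝ), ∀ z ∈ N, d z y < δ'' → dist z y < ε))
    -- A is a closed subset of M and f is smooth on a neighborhood of A
    (A C : Set (Euc a)) (hC : IsClosed C) (hA : A = M ∩ C)
    (UA : Set (Euc a)) (hUA : IsOpen UA) (hAUA : A ⊆ UA)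
    (hfA : ContDiffOn ℝ (⊤ : ℕ∞) f UA) :
    ∃ g : Euc a → Euc b,
      (∃ V, IsOpen V ∧ M ⊆ V ∧ ContDiffOn ℝ (⊤ : ℕ∞) g V) ∧
      MapsTo g M N ∧ (∀ x ∈ M, d (f x) (g x) ≤ δ x) ∧ EqOn f g A := by
  classical
  obtain ⟨W, r, hW, hNW, hr, hrN, hrid⟩ := retraction_aux dN N hN
  let S : Euc a → Set (Euc b) := fun y => {z | z ∈ W ∧ d (f y) (r z) ≤ δ y}
  -- local estimate
  have hloc : ∀ x ∈ M, ∃ η > (0 : ℝ), ∃ B : Set (Euc a), IsOpen B ∧ x ∈ B ∧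
      ∀ y ∈ B, y ∈ M → dist (f x) (f y) < η ∧ Metric.ball (f y) η ⊆ S y := by
    intro x hx
    have hfx := hmaps hx
    have hδx := hδpos x hx
    obtain ⟨ε, hε, hεd⟩ := (hdtop (f x) hfx (δ x / 4) (by linarith)).1
    have hrc : ContinuousAt r (f x) := hr.continuousOn.continuousAt (hW.mem_nhds (hNW hfx))
    have h1 : W ∩ {z | dist (r z) (f x) < ε} ∈ 𝓝 (f x) := by
      refine inter_mem (hW.mem_nhds (hNW hfx)) ?_
      have := hrc (Metric.ball_mem_nhds _ hε)
      rw [hrid _ hfx] at this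
      exact this
    obtain ⟨η, hη, hηs⟩ := Metric.mem_nhds_iff.1 h1
    have h2 : ∀ᶠ y in 𝓝[M] x, dist (f y) (f x) < min (η / 2) ε :=
      (hf x hx) (Metric.ball_mem_nhds _ (by positivity))
    have h3 : ∀ᶠ y in 𝓝[M] x, δ x / 2 < δ y :=
      (hδ x hx) (lt_mem_nhds (by linarith))
    obtain ⟨B, hB, hxB, hBs⟩ := mem_nhdsWithin.1 (h2.and h3)
    refine ⟨η / 2, by positivity, B, hB, hxB, fun y hy hyM => ?_⟩
    obtain ⟨h4, h5⟩ := hBs ⟨hy, hyM⟩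
    have h6 := lt_of_lt_of_le h4 (min_le_left _ _)
    have h7 := lt_of_lt_of_le h4 (min_le_right _ _)
    refine ⟨by rwa [dist_comm], fun z hz => ?_⟩
    have hz' : z ∈ Metric.ball (f x) η := by
      rw [Metric.mem_ball] at hz ⊢
      linarith [dist_triangle z (f y) (f x)]
    obtain ⟨hzW, hzr⟩ := hηs hz'
    refine ⟨hzW, ?_⟩
    have h8 := hεd (r z) (hrN hzW) hzr
    have h9 := hεd (f y) (hmaps hyM) h7
    have h10 := hdtri (f y) (hmaps hyM) (f x) hfx (r z) (hrN hzW)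
    rw [hdsymm (f x) hfx (r z) (hrN hzW)] at h10
    linarith
  choose! η hη B hB hxB hBs using hloc
  let D : Euc a → Set (Euc a) := fun x => B x ∩ (if x ∈ C then UA else Cᶜ)
  have hD : ∀ x ∈ M, IsOpen (D x) := by
    intro x hx
    refine (hB x hx).inter ?_
    split_ifs
    · exact hUA
    · exact hC.isOpen_compl
  have hxD : ∀ x ∈ M, x ∈ D x := by
    intro x hx
    refine ⟨hxB x hx, ?_⟩
    split_ifs with h
    · exact hAUA (hA ▸ ⟨hx, h⟩)
    · exact h
  let Ω : TopologicalSpace.Opens (Euc a) := ⟨⋃ x ∈ M, D x, isOpen_biUnion hD⟩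
  have hMΩ : M ⊆ Ω := fun x hx => mem_biUnion hx (hxD x hx)
  let t : Euc a → Set (Euc b) := fun y =>
    {z | y ∈ M → (∃ e, dist z (f y) < e ∧ Metric.ball (f y) e ⊆ S y) ∧ (y ∈ A → z = f y)}
  have ht : ∀ y, Convex ℝ (t y) := by
    intro y z₁ h₁ z₂ h₂ u v hu hv huv hyM
    obtain ⟨⟨e₁, he₁, hs₁⟩, ha₁⟩ := h₁ hyM
    obtain ⟨⟨e₂, he₂, hs₂⟩, ha₂⟩ := h₂ hyM
    constructor
    · refine ⟨max e₁ e₂, ?_, ?_⟩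
      · exact convex_ball (f y) (max e₁ e₂) (lt_max_of_lt_left he₁) (lt_max_of_lt_right he₂)
          hu hv huv
      · rcases max_choice e₁ e₂ with h | h <;> rw [h] <;> assumption
    · intro hyA
      rw [ha₁ hyA, ha₂ hyA, ← add_smul, huv, one_smul]
  haveI : SigmaCompactSpace Ω := by
    haveI : LocallyCompactSpace Ω := Ω.isOpen.locallyCompactSpace
    infer_instance
  obtain ⟨G, hG⟩ := exists_contMDiffMap_forall_mem_convex_of_local (n := (⊤ : ℕ∞))
    (modelWithCornersSelf ℝ (Euc a)) (M := Ω) (t := fun y : Ω => t y) (fun y => ht y) (by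
      rintro ⟨w, hw⟩
      obtain ⟨x, hx, hwx⟩ := mem_iUnion₂.1 hw
      refine ⟨Subtype.val ⁻¹' D x,
        ((hD x hx).preimage continuous_subtype_val).mem_nhds hwx, ?_⟩
      by_cases hxC : x ∈ C
      · refine ⟨fun y => f y, ?_, ?_⟩
        · rintro ⟨y, hyΩ⟩ hy
          have hyU : y ∈ UA := by have := hy.2; simpa [hxC] using this
          have h1 : ContDiffAt ℝ (⊤ : ℕ∞) f y := hfA.contDiffAt (hUA.mem_nhds hyU)
          exact (contMDiffAt_subtype_iff.2 h1.contMDiffAt).contMDiffWithinAt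
        · rintro ⟨y, hyΩ⟩ hy hyM
          exact ⟨⟨η x, by simpa using hη x hx, (hBs x hx y hy.1 hyM).2⟩, fun _ => rfl⟩
      · refine ⟨fun _ => f x, contMDiffOn_const, ?_⟩
        rintro ⟨y, hyΩ⟩ hy hyM
        refine ⟨⟨η x, hBs x hx y hy.1 hyM⟩, fun hyA => ?_⟩
        have hyC : y ∉ C := by have := hy.2; simpa [hxC] using this
        rw [hA] at hyA
        exact absurd hyA.2 hyC)
  let h : Euc a → Euc b := fun y => if hy : y ∈ Ω then G ⟨y, hy⟩ else 0
  have hhG : ∀ y : Ω, h y = G y := fun y => by simp [h]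
  have hhc : ContDiffOn ℝ (⊤ : ℕ∞) h Ω := by
    intro y hy
    have h1 : ContMDiffAt (modelWithCornersSelf ℝ (Euc a)) (modelWithCornersSelf ℝ (Euc b))
        (⊤ : ℕ∞) (fun y : Ω => h y) ⟨y, hy⟩ := by
      have : (fun y : Ω => h y) = G := funext hhG
      rw [this]
      exact G.contMDiff _
    exact (contMDiffAt_subtype_iff.1 h1).contDiffAt.contDiffWithinAt
  have hht : ∀ y ∈ M, (h y ∈ S y) ∧ (y ∈ A → h y = f y) := by
    intro y hy
    have h1 := hG ⟨y, hMΩ hy⟩ hy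
    rw [← hhG] at h1
    obtain ⟨⟨e, he, hs⟩, h2⟩ := h1
    exact ⟨hs he, h2⟩
  refine ⟨r ∘ h, ⟨Ω ∩ h ⁻¹' W, hhc.continuousOn.isOpen_inter_preimage Ω.isOpen hW,
    fun y hy => ⟨hMΩ hy, (hht y hy).1.1⟩, ?_⟩, ?_, ?_, ?_⟩
  · exact hr.comp (hhc.mono inter_subset_left) (fun y hy => hy.2)
  · exact fun y hy => hrN (hht y hy).1.1
  · exact fun y hy => (hht y hy).1.2
  · intro y hy
    have hyM : y ∈ M := by rw [hA] at hy; exact hy.1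
    show f y = r (h y)
    rw [(hht y hyM).2 hy, hrid _ (hmaps hyM)]
end
end

section
/- Every continuous map f : M → N between smooth manifolds is homotopic to a smooth map; if f is smooth on (a neighborhood of) a closed subset A ⊂ M, the homotopy can be chosen relative to A, so the resulting smooth map agrees with f on A. -/
/- Framework: embedded submanifolds of Euclidean space (Guillemin–Pollack style),
tangent spaces via velocity vectors of curves, local-straightening charts. -/

noncomputable section
open Set Function
open scoped RealInnerProductSpace

open scoped ContDiff Manifold Topology

lemma inv_fun {E F : Type*} [NormedAddCommGroup E] [NormedSpace ℝ E] [NormedAddCommGroup F]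
    [NormedSpace ℝ F] [FiniteDimensional ℝ E] [FiniteDimensional ℝ F]
    (hdim : Module.finrank ℝ E = Module.finrank ℝ F) (Φ : E → F) (S : Set E) (hS : IsOpen S)
    (hΦ : ContDiffOn ℝ ∞ Φ S) (p : E) (hp : p ∈ S) (hinj : Injective (fderiv ℝ Φ p)) :
    ∃ e : OpenPartialHomeomorph E F, p ∈ e.source ∧ e.source ⊆ S ∧ (∀ q, e q = Φ q) ∧
      ContDiffOn ℝ ∞ e.symm e.target := by
  have : CompleteSpace E := FiniteDimensional.complete ℝ E
  let L : E ≃L[ℝ] F :=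
    (LinearMap.linearEquivOfInjective (fderiv ℝ Φ p).toLinearMap hinj hdim).toContinuousLinearEquiv
  have hL : (L : E →L[ℝ] F) = fderiv ℝ Φ p := by
    ext v; rfl
  have hat : ∀ q ∈ S, ContDiffAt ℝ ∞ Φ q := fun q hq => hΦ.contDiffAt (hS.mem_nhds hq)
  have hdiff : ∀ q ∈ S, HasFDerivAt Φ (fderiv ℝ Φ q) q := fun q hq =>
    ((hat q hq).differentiableAt (by simp)).hasFDerivAt
  have hcont : ContinuousOn (fderiv ℝ Φ) S := hΦ.continuousOn_fderiv_of_isOpen hS (by simp)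
  let S' := S ∩ fderiv ℝ Φ ⁻¹' (range ((↑) : (E ≃L[ℝ] F) → E →L[ℝ] F))
  have hS' : IsOpen S' := hcont.isOpen_inter_preimage hS ContinuousLinearEquiv.isOpen
  let e := (hat p hp).toOpenPartialHomeomorph Φ (f' := L) (hL ▸ hdiff p hp) (by simp)
  have he : p ∈ e.source := (hat p hp).mem_toOpenPartialHomeomorph_source _ _
  refine ⟨e.restrOpen S' hS', ⟨he, hp, L, hL⟩, fun q hq => hq.2.1, fun q => rfl, ?_⟩
  intro y hy
  have h1 := (e.restrOpen S' hS').map_target hy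
  obtain ⟨h2, h3, L', hL'⟩ := h1
  apply ContDiffAt.contDiffWithinAt
  refine (e.restrOpen S' hS').contDiffAt_symm (f₀' := L') hy ?_ ?_
  · rw [hL']; exact hdiff _ h3
  · exact hat _ h3

lemma inj_aux {X Y Z : Type*} [NormedAddCommGroup X] [NormedSpace ℝ X] [NormedAddCommGroup Y]
    [NormedSpace ℝ Y] [NormedAddCommGroup Z] [NormedSpace ℝ Z] (F : X × Y → Z) (p : X × Y)
    (hF : DifferentiableAt ℝ F p) (h : ∀ v, fderiv ℝ F p (0, v) = 0 → v = 0) :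
    Injective (fderiv ℝ (fun q : X × Y => (q.1, F q)) p) := by
  have hd := (hasFDerivAt_fst (𝕜 := ℝ) (p := p)).prodMk hF.hasFDerivAt
  rw [hd.fderiv, injective_iff_map_eq_zero]
  rintro ⟨u, v⟩ hv
  have hv1 : u = 0 := congrArg Prod.fst hv
  have hv2 : fderiv ℝ F p (u, v) = 0 := congrArg Prod.snd hv
  subst hv1
  rw [h v hv2]; rfl

lemma approx {a b : ℕ} (M : Set (Euc a)) (W : Set (Euc b)) (hW : IsOpen W)
    (f : Euc a → Euc b) (hf : ContinuousOn f M) (hmaps : MapsTo f M W)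
    (A C : Set (Euc a)) (hC : IsClosed C) (hA : A = M ∩ C)
    (UA : Set (Euc a)) (hUA : IsOpen UA) (hAUA : A ⊆ UA)
    (hfA : ContDiffOn ℝ ∞ f UA) :
    ∃ (O : Set (Euc a)) (g : Euc a → Euc b), IsOpen O ∧ M ⊆ O ∧ ContDiffOn ℝ ∞ g O ∧
      (∀ x ∈ M, segment ℝ (f x) (g x) ⊆ W) ∧ ∀ x ∈ A, g x = f x := by
  let t : Euc a → Set (Euc b) := fun x => {w | x ∈ M →
    (w ∈ Metric.eball (f x) (Metric.infEDist (f x) Wᶜ) ∧ (x ∈ A → w = f x))}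
  have ht : ∀ x, Convex ℝ (t x) := by
    intro x
    by_cases hx : x ∈ M
    · by_cases hxA : x ∈ A
      · have h : t x = Metric.eball (f x) (Metric.infEDist (f x) Wᶜ) ∩ {f x} := by
          ext w; simp [t, hx, hxA]
        rw [h]
        exact (convex_eball _ _).inter (convex_singleton _)
      · have h : t x = Metric.eball (f x) (Metric.infEDist (f x) Wᶜ) := by
          ext w; simp [t, hx, hxA]
        rw [h]
        exact convex_eball _ _
    · have h : t x = univ := by
        ext w; simp [t, hx]
      rw [h]
      exact convex_univ
  have hpos : ∀ x ∈ M, 0 < Metric.infEDist (f x) Wᶜ := by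
    intro x hx
    rw [Metric.infEDist_pos_iff_notMem_closure, hW.isClosed_compl.closure_eq]
    simpa using hmaps hx
  have hloc : ∀ x ∈ M, ∃ U : Set (Euc a), IsOpen U ∧ x ∈ U ∧ ∃ g : Euc a → Euc b,
      ContDiffOn ℝ ∞ g U ∧ ∀ y ∈ U, g y ∈ t y := by
    intro x hx
    by_cases hxA : x ∈ A
    · exact ⟨UA, hUA, hAUA hxA, f, hfA, fun y hy hyM => ⟨by simpa using hpos y hyM, fun _ => rfl⟩⟩
    · have hxC : x ∉ C := fun h => hxA (hA ▸ ⟨hx, h⟩)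
      have h1 : ∀ᶠ y in 𝓝[M] x, edist (f x) (f y) < Metric.infEDist (f y) Wᶜ := by
        have c1 : Filter.Tendsto (fun y => edist (f x) (f y)) (𝓝[M] x) (𝓝 (edist (f x) (f x))) :=
          Filter.Tendsto.edist tendsto_const_nhds (hf x hx)
        have c2 : Filter.Tendsto (fun y => Metric.infEDist (f y) Wᶜ) (𝓝[M] x)
            (𝓝 (Metric.infEDist (f x) Wᶜ)) :=
          (Metric.continuous_infEDist.tendsto _).comp (hf x hx)
        exact c1.eventually_lt c2 (by simpa using hpos x hx)
      rw [eventually_nhdsWithin_iff] at h1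
      obtain ⟨U, hU, hUo, hxU⟩ := eventually_nhds_iff.1 (h1.and (hC.isOpen_compl.eventually_mem hxC))
      refine ⟨U, hUo, hxU, fun _ => f x, contDiffOn_const, fun y hy hyM => ⟨(hU y hy).1 hyM, ?_⟩⟩
      intro hyA
      rw [hA] at hyA
      exact absurd hyA.2 (hU y hy).2
  choose! U hUo hxU gl hgl hglt using hloc
  let O : TopologicalSpace.Opens (Euc a) := ⟨⋃ x ∈ M, U x, isOpen_biUnion hUo⟩
  have : LocallyCompactSpace O := O.isOpen.locallyCompactSpace
  have : SigmaCompactSpace O := inferInstance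
  obtain ⟨g, hg⟩ := exists_contMDiffMap_forall_mem_convex_of_local (n := (⊤ : ℕ∞)) 𝓘(ℝ, Euc a)
    (t := fun x : O => t x) (fun x => ht x) (by
      intro x
      obtain ⟨y, hy, hxy⟩ : ∃ y ∈ M, x.1 ∈ U y := by
        have h := x.2
        simpa only [O, TopologicalSpace.Opens.mem_mk, mem_iUnion, exists_prop] using h
      refine ⟨Subtype.val ⁻¹' U y, (continuous_subtype_val.isOpen_preimage _ (hUo y hy)).mem_nhds hxy,
        fun z => gl y z, ?_, fun z hz => hglt y hy z hz⟩
      intro z hz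
      apply ContMDiffAt.contMDiffWithinAt
      rw [contMDiffAt_subtype_iff]
      exact ((hgl y hy).contDiffAt ((hUo y hy).mem_nhds hz)).contMDiffAt)
  have hext : ∀ x (hx : x ∈ O), Subtype.val.extend g 0 x = g ⟨x, hx⟩ := fun x hx =>
    Subtype.val_injective.extend_apply g 0 (⟨x, hx⟩ : O)
  have hMO : M ⊆ O := fun x hx => mem_biUnion hx (hxU x hx)
  refine ⟨O, Subtype.val.extend g 0, O.isOpen, hMO, ?_, ?_, ?_⟩
  · intro x hx
    apply ContDiffAt.contDiffWithinAt
    rw [← contMDiffAt_iff_contDiffAt]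
    have := contMDiffAt_subtype_iff (I := 𝓘(ℝ, Euc a)) (I' := 𝓘(ℝ, Euc b)) (n := ∞)
      (f := Subtype.val.extend g 0) (x := (⟨x, hx⟩ : O))
    refine this.1 ?_
    have h2 : (fun x : O => Subtype.val.extend g 0 x.1) = g := by
      ext1 z; exact hext z z.2
    rw [h2]
    exact g.contMDiff.contMDiffAt
  · intro x hx
    rw [hext x (hMO hx)]
    have h := (hg ⟨x, hMO hx⟩ hx).1
    refine ((convex_eball _ _).segment_subset (Metric.mem_eball_self (hpos x hx)) h).trans ?_
    intro w hw
    by_contra hwW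
    have := Metric.infEDist_le_edist_of_mem (x := f x) (s := Wᶜ) hwW
    rw [Metric.mem_eball, edist_comm] at hw
    exact absurd hw (not_lt.2 this)
  · intro x hx
    have hxM : x ∈ M := by rw [hA] at hx; exact hx.1
    rw [hext x (hMO hxM)]
    exact (hg ⟨x, hMO hxM⟩ hxM).2 hx

lemma local_retr {E : Type*} [NormedAddCommGroup E] [InnerProductSpace ℝ E]
    [FiniteDimensional ℝ E] (S : Set E) (x : E) (hxS : x ∈ S) (U V : Set E) (φ ψ : E → E)
    (K : Submodule ℝ E) (hU : IsOpen U) (hV : IsOpen V) (hxU : x ∈ U)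
    (hφ : ContDiffOn ℝ ∞ φ U) (hψ : ContDiffOn ℝ ∞ ψ V)
    (hUV : MapsTo φ U V) (hψφ : ∀ y ∈ U, ψ (φ y) = y)
    (hφψ : ∀ z ∈ V, φ (ψ z) = z) (hVU : MapsTo ψ V U)
    (hS : S ∩ U = U ∩ φ ⁻¹' (K : Set E)) :
    ∃ δ > 0, ∃ ρ : E → E, ContDiffOn ℝ ∞ ρ (Metric.ball x δ) ∧
      IsCompact (S ∩ Metric.closedBall x (δ / 2)) ∧
      ∀ z ∈ Metric.ball x δ, ∀ y ∈ S, y ∈ Metric.ball x δ →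
        (∀ y' ∈ S, dist z y ≤ dist z y') → y = ρ z := by
  have hSK : ∀ y ∈ U, (y ∈ S ↔ φ y ∈ K) := by
    intro y hy
    have := congrArg (fun s => y ∈ s) hS
    simpa [hy] using this
  let G : E → E →L[ℝ] E := fderiv ℝ ψ
  have hG : ContDiffOn ℝ ∞ G V := hψ.fderiv_of_isOpen hV (by simp)
  have hψd : ∀ z ∈ V, HasFDerivAt ψ (G z) z := fun z hz =>
    ((hψ.contDiffAt (hV.mem_nhds hz)).differentiableAt (by simp)).hasFDerivAt
  have hGd : ∀ z ∈ V, HasFDerivAt G (fderiv ℝ G z) z := fun z hz =>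
    ((hG.contDiffAt (hV.mem_nhds hz)).differentiableAt (by simp)).hasFDerivAt
  let k0 : K := ⟨φ x, (hSK x hxU).1 hxS⟩
  have hk0V : (k0 : E) ∈ V := hUV hxU
  let D : Set (E × K) := {p | (p.2 : E) ∈ V}
  have hsub : ContDiff ℝ ∞ (fun p : E × K => (p.2 : E)) := K.subtypeL.contDiff.comp contDiff_snd
  have hD : IsOpen D := hV.preimage hsub.continuous
  let F : E × K → K →L[ℝ] ℝ := fun p =>
    (innerSL ℝ (p.1 - ψ p.2)).comp ((G p.2).comp K.subtypeL)
  have hF : ContDiffOn ℝ ∞ F D := by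
    have h1 : ContDiffOn ℝ ∞ (fun p : E × K => innerSL ℝ (p.1 - ψ p.2)) D :=
      (innerSL ℝ).contDiff.comp_contDiffOn
        (contDiff_fst.contDiffOn.sub (hψ.comp hsub.contDiffOn (fun p hp => hp)))
    have h2 : ContDiffOn ℝ ∞ (fun p : E × K => G p.2) D :=
      hG.comp hsub.contDiffOn (fun p hp => hp)
    exact h1.clm_comp (h2.clm_comp contDiffOn_const)
  let Φ : E × K → E × (K →L[ℝ] ℝ) := fun p => (p.1, F p)
  have hΦ : ContDiffOn ℝ ∞ Φ D := contDiff_fst.contDiffOn.prodMk hF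
  have hFap : ∀ p h, F p h = inner ℝ (p.1 - ψ p.2) (G p.2 h) := fun p h => rfl
  have hx0 : ψ k0 = x := hψφ x hxU
  have hp0 : ((x, k0) : E × K) ∈ D := hk0V
  have hF0 : F (x, k0) = 0 := by
    ext h; rw [hFap]; simp [hx0]
  -- injectivity of `G k0`
  have hGinj : ∀ v, G k0 v = 0 → v = 0 := by
    intro v hv
    have h1 : HasFDerivAt φ (fderiv ℝ φ x) (ψ k0) := by
      rw [hx0]
      exact ((hφ.contDiffAt (hU.mem_nhds hxU)).differentiableAt (by simp)).hasFDerivAt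
    have h2 := h1.comp (k0 : E) (hψd _ hk0V)
    have h3 : HasFDerivAt (φ ∘ ψ) (ContinuousLinearMap.id ℝ E) (k0 : E) := by
      refine (hasFDerivAt_id (k0 : E)).congr_of_eventuallyEq ?_
      filter_upwards [hV.mem_nhds hk0V] with z hz using hφψ z hz
    have h4 := congrArg (fun L => L v) (h2.unique h3)
    simpa [hv] using h4.symm
  have hinj : Injective (fderiv ℝ Φ (x, k0)) := by
    have hFd : HasFDerivAt F (fderiv ℝ F (x, k0)) (x, k0) :=
      ((hF.contDiffAt (hD.mem_nhds hp0)).differentiableAt (by simp)).hasFDerivAt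
    refine inj_aux F (x, k0) hFd.differentiableAt fun dk hv2 => ?_
    -- scalar derivative
    have hs : HasFDerivAt (fun p : E × K => (p.2 : E))
        (K.subtypeL.comp (ContinuousLinearMap.snd ℝ E K)) (x, k0) :=
      K.subtypeL.hasFDerivAt.comp (x, k0) hasFDerivAt_snd
    have hA1 : HasFDerivAt (fun p : E × K => p.1 - ψ p.2)
        (ContinuousLinearMap.fst ℝ E K -
          (G k0).comp (K.subtypeL.comp (ContinuousLinearMap.snd ℝ E K))) (x, k0) :=
      hasFDerivAt_fst.sub ((hψd _ hk0V).comp (x, k0) hs)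
    have hA2 : HasFDerivAt (fun p : E × K => G p.2 dk)
        (((fderiv ℝ G k0).comp (K.subtypeL.comp (ContinuousLinearMap.snd ℝ E K))).flip dk)
          (x, k0) := by
      have h := ((hGd _ hk0V).comp (x, k0) hs).clm_apply (hasFDerivAt_const (dk : E) (x, k0))
      simpa using h
    have hB1 := hA1.inner ℝ hA2
    have hB2 : HasFDerivAt (fun p : E × K => F p dk) ((fderiv ℝ F (x, k0)).flip dk) (x, k0) := by
      have h := hFd.clm_apply (hasFDerivAt_const dk (x, k0))
      simpa using h
    have h5 := congrArg (fun L => L (0, dk)) (hB2.unique hB1)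
    simp [hv2, hx0, fderivInnerCLM_apply] at h5
    have : (dk : E) = 0 := hGinj _ (by simpa using h5)
    simpa using this
  have hdim : Module.finrank ℝ (E × K) = Module.finrank ℝ (E × (K →L[ℝ] ℝ)) := by
    rw [Module.finrank_prod, Module.finrank_prod]
    congr 1
    rw [← (LinearMap.toContinuousLinearMap (𝕜 := ℝ) (E := K) (F' := ℝ)).finrank_eq]
    exact (Subspace.dual_finrank_eq).symm
  obtain ⟨e, hes, heD, heΦ, hesm⟩ := inv_fun hdim Φ D hD hΦ (x, k0) hp0 hinj
  have hΦ0 : Φ (x, k0) = (x, 0) := by simp [Φ, hF0]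
  have htgt : ((x, 0) : E × (K →L[ℝ] ℝ)) ∈ e.target := by
    rw [← hΦ0, ← heΦ]; exact e.map_source hes
  let ρ : E → E := fun z => ψ ((e.symm (z, 0)).2 : K)
  -- neighborhoods
  have n1 : ∀ᶠ z in 𝓝 x, ((z, 0) : E × (K →L[ℝ] ℝ)) ∈ e.target := by
    have : Continuous (fun z : E => ((z, 0) : E × (K →L[ℝ] ℝ))) := by fun_prop
    exact (e.open_target.preimage this).mem_nhds htgt
  have n2 : ∀ᶠ p : E × E in 𝓝 (x, x), p.2 ∈ U ∧
      ∀ k : K, (k : E) = φ p.2 → (p.1, k) ∈ e.source := by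
    obtain ⟨O, hO, hOe⟩ : ∃ O : Set (E × E), IsOpen O ∧
        (fun p : E × K => (p.1, (p.2 : E))) ⁻¹' O = e.source := by
      have hind : Topology.IsInducing (fun p : E × K => (p.1, (p.2 : E))) :=
        Topology.IsInducing.id.prodMap Topology.IsInducing.subtypeVal
      exact hind.isOpen_iff.1 e.open_source
    have hO1 : (x, φ x) ∈ O := by
      have : ((x, k0) : E × K) ∈ (fun p : E × K => (p.1, (p.2 : E))) ⁻¹' O := by
        rw [hOe]; exact hes
      exact this
    have hc : ContinuousAt (fun p : E × E => (p.1, φ p.2)) (x, x) := by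
      have : ContinuousAt φ x := (hφ.contDiffAt (hU.mem_nhds hxU)).continuousAt
      exact continuousAt_fst.prodMk (ContinuousAt.comp (f := Prod.snd) (x := (x, x)) this continuousAt_snd)
    have n3 : ∀ᶠ p : E × E in 𝓝 (x, x), p.2 ∈ U :=
      (hU.preimage continuous_snd).mem_nhds hxU
    filter_upwards [n3, hc.eventually_mem (hO.mem_nhds hO1)] with p hp1 hp2
    refine ⟨hp1, fun k hk => ?_⟩
    rw [← hOe]
    simpa [hk] using hp2
  obtain ⟨δ1, hδ1, h1⟩ := Metric.eventually_nhds_iff_ball.1 n1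
  obtain ⟨δ2, hδ2, h2⟩ := Metric.eventually_nhds_iff_ball.1 n2
  refine ⟨min δ1 δ2, lt_min hδ1 hδ2, ρ, ?_, ?_, ?_⟩
  · have c1 : ContDiffOn ℝ ∞ (fun z : E => e.symm (z, 0)) (Metric.ball x (min δ1 δ2)) :=
      hesm.comp (contDiff_id.prodMk contDiff_const).contDiffOn
        (fun z hz => h1 z (Metric.ball_subset_ball (min_le_left _ _) hz))
    have c2 := hsub.comp_contDiffOn c1
    refine hψ.comp c2 (fun z hz => ?_)
    exact heD (e.map_target (h1 z (Metric.ball_subset_ball (min_le_left _ _) hz)))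
  · have hsubU : Metric.closedBall x (min δ1 δ2 / 2) ⊆ U := by
      intro y hy
      have : (x, y) ∈ Metric.ball (x, x) δ2 := by
        rw [Metric.mem_ball, Prod.dist_eq]
        have h3 := Metric.mem_closedBall.1 hy
        have h4 := min_le_right δ1 δ2
        simp only [dist_self]
        exact max_lt hδ2 (by linarith)
      exact (h2 _ this).1
    have heq : S ∩ Metric.closedBall x (min δ1 δ2 / 2) =
        Metric.closedBall x (min δ1 δ2 / 2) ∩ φ ⁻¹' (K : Set E) := by
      ext y
      constructor
      · rintro ⟨h3, h4⟩
        exact ⟨h4, (hSK y (hsubU h4)).1 h3⟩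
      · rintro ⟨h4, h3⟩
        exact ⟨(hSK y (hsubU h4)).2 h3, h4⟩
    have : ProperSpace E := FiniteDimensional.proper ℝ E
    rw [heq]
    refine (isCompact_closedBall x (min δ1 δ2 / 2)).of_isClosed_subset ?_ inter_subset_left
    exact (hφ.continuousOn.mono hsubU).preimage_isClosed_of_isClosed Metric.isClosed_closedBall
      K.closed_of_finiteDimensional
  · intro z hz y hyS hy hmin
    have hzy : (z, y) ∈ Metric.ball (x, x) δ2 := by
      rw [Metric.mem_ball, Prod.dist_eq]
      exact max_lt (lt_of_lt_of_le hz (min_le_right _ _)) (lt_of_lt_of_le hy (min_le_right _ _))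
    obtain ⟨hyU, hsrc⟩ := h2 _ hzy
    let k : K := ⟨φ y, (hSK y hyU).1 hyS⟩
    have hkV : (k : E) ∈ V := hUV hyU
    have hψk : ψ k = y := hψφ y hyU
    have hks := hsrc k rfl
    have hF0' : F (z, k) = 0 := by
      have hd : HasFDerivAt (fun k' : K => z - ψ k') (-((G k).comp K.subtypeL)) k := by
        have := (hψd _ hkV).comp k K.subtypeL.hasFDerivAt
        exact this.const_sub z
      have hd2 := hd.norm_sq
      have hlm : IsLocalMin (fun k' : K => ‖z - ψ k'‖ ^ 2) k := by
        have : ∀ᶠ k' : K in 𝓝 k, (k' : E) ∈ V :=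
          (hV.preimage continuous_subtype_val).mem_nhds hkV
        filter_upwards [this] with k' hk'
        have hS' : ψ k' ∈ S := by
          rw [hSK _ (hVU hk'), hφψ _ hk']; exact k'.2
        have := hmin _ hS'
        rw [dist_eq_norm, dist_eq_norm] at this
        rw [hψk]
        gcongr
      have h0 := hlm.hasFDerivAt_eq_zero hd2
      ext h
      have h6 := congrArg (fun L => L h) h0
      rw [hFap]
      simp [inner_sub_left] at h6 ⊢
      linarith
    have h7 : e (z, k) = (z, 0) := by rw [heΦ]; simp [Φ, hF0']
    have h8 : e.symm (z, 0) = (z, k) := by rw [← h7, e.left_inv hks]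
    simp only [ρ, h8, hψk]

lemma retr {b d : ℕ} (N : Set (Euc b)) (hN : IsSubmanifoldOfDim d N) :
    ∃ (W : Set (Euc b)) (r : Euc b → Euc b), IsOpen W ∧ N ⊆ W ∧ ContDiffOn ℝ ∞ r W ∧
      MapsTo r W N ∧ ∀ x ∈ N, r x = x := by
  have hloc : ∀ x ∈ N, ∃ δ > 0, ∃ ρ : Euc b → Euc b, ContDiffOn ℝ ∞ ρ (Metric.ball x δ) ∧
      IsCompact (N ∩ Metric.closedBall x (δ / 2)) ∧
      ∀ z ∈ Metric.ball x δ, ∀ y ∈ N, y ∈ Metric.ball x δ →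
        (∀ y' ∈ N, dist z y ≤ dist z y') → y = ρ z := by
    intro x hx
    obtain ⟨U, V, φ, ψ, K, -, hU, hV, hxU, hφ, hψ, hUV, hVU, h1, h2, h3⟩ := hN x hx
    exact local_retr N x hx U V φ ψ K hU hV hxU hφ hψ hUV h1 h2 hVU h3
  choose! δ hδ ρ hρ hcomp huniq using hloc
  let r : Euc b → Euc b := fun z => Classical.epsilon (fun y => y ∈ N ∧ ∀ y' ∈ N, dist z y ≤ dist z y')
  have hr : ∀ x ∈ N, ∀ z ∈ Metric.ball x (δ x / 4), r z ∈ N ∧ (∀ y' ∈ N, dist z (r z) ≤ dist z y') ∧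
      r z = ρ x z := by
    intro x hx z hz
    have hd := hδ x hx
    rw [Metric.mem_ball] at hz
    have hex : ∃ y, y ∈ N ∧ ∀ y' ∈ N, dist z y ≤ dist z y' := by
      have hxT : x ∈ N ∩ Metric.closedBall x (δ x / 2) :=
        ⟨hx, Metric.mem_closedBall_self (by linarith)⟩
      obtain ⟨y, hy, hmin⟩ := (hcomp x hx).exists_isMinOn ⟨x, hxT⟩
        (f := fun y => dist z y) (by fun_prop)
      refine ⟨y, hy.1, fun y' hy' => ?_⟩
      by_cases hT : y' ∈ Metric.closedBall x (δ x / 2)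
      · exact hmin ⟨hy', hT⟩
      · have h1 : dist z y ≤ dist z x := hmin hxT
        rw [Metric.mem_closedBall, not_le] at hT
        have h2 := dist_triangle_left y' x z
        linarith
    obtain ⟨h1, h2⟩ : r z ∈ N ∧ ∀ y' ∈ N, dist z (r z) ≤ dist z y' := Classical.epsilon_spec hex
    refine ⟨h1, h2, ?_⟩
    refine huniq x hx z (by rw [Metric.mem_ball]; linarith) _ h1 ?_ h2
    rw [Metric.mem_ball]
    have h3 := h2 x hx
    have h4 := dist_triangle_left (r z) x z
    linarith
  refine ⟨⋃ x ∈ N, Metric.ball x (δ x / 4), r, isOpen_biUnion fun _ _ => Metric.isOpen_ball,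
    fun x hx => mem_biUnion hx (Metric.mem_ball_self (by have := hδ x hx; linarith)), ?_, ?_, ?_⟩
  · intro z hz
    obtain ⟨x, hx, hzx⟩ := mem_iUnion₂.1 hz
    apply ContDiffAt.contDiffWithinAt
    have hd := hδ x hx
    have h1 : ContDiffAt ℝ ∞ (ρ x) z :=
      (hρ x hx).contDiffAt (Metric.isOpen_ball.mem_nhds
        (Metric.ball_subset_ball (by linarith) hzx))
    refine h1.congr_of_eventuallyEq ?_
    filter_upwards [Metric.isOpen_ball.mem_nhds hzx] with w hw using (hr x hx w hw).2.2
  · intro z hz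
    obtain ⟨x, hx, hzx⟩ := mem_iUnion₂.1 hz
    exact (hr x hx z hzx).1
  · intro x hx
    have h := (hr x hx x (Metric.mem_ball_self (by have := hδ x hx; linarith))).2.1 x hx
    rw [dist_self] at h
    exact (dist_le_zero.1 h).symm

/-- Every continuous map `f : M → N` between smooth manifolds is homotopic to a smooth map;
if `f` is smooth on a neighborhood of a closed subset `A ⊂ M`, the homotopy can be chosen
relative to `A`, so the resulting smooth map agrees with `f` on `A`. -/
theorem homotopic_to_smooth (a b m dN : ℕ) (M : Set (Euc a)) (N : Set (Euc b))
    (hM : IsSubmanifoldOfDim m M) (hN : IsSubmanifoldOfDim dN N)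
    (f : Euc a → Euc b) (hf : ContinuousOn f M) (hmaps : MapsTo f M N)
    (A C : Set (Euc a)) (hC : IsClosed C) (hA : A = M ∩ C)
    (UA : Set (Euc a)) (hUA : IsOpen UA) (hAUA : A ⊆ UA)
    (hfA : ContDiffOn ℝ (⊤ : ℕ∞) f UA) :
    ∃ H : Euc a × ℝ → Euc b,
      ContinuousOn H (M ×ˢ Icc (0:ℝ) 1) ∧
      MapsTo H (M ×ˢ Icc (0:ℝ) 1) N ∧
      (∀ x ∈ M, H (x, 0) = f x) ∧
      -- the time-1 map is smooth (it extends smoothly to a neighborhood of M)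
      (∃ V, IsOpen V ∧ M ⊆ V ∧ ContDiffOn ℝ (⊤ : ℕ∞) (fun x => H (x, 1)) V) ∧
      -- the homotopy is relative to A
      (∀ x ∈ A, ∀ t ∈ Icc (0:ℝ) 1, H (x, t) = f x) := by
  obtain ⟨W, r, hW, hNW, hr, hrN, hrid⟩ := retr N hN
  obtain ⟨O, g, hO, hMO, hg, hseg, hgA⟩ := approx M W hW f hf (fun x hx => hNW (hmaps hx))
    A C hC hA UA hUA hAUA hfA
  have hmem : MapsTo (fun p : Euc a × ℝ => (1 - p.2) • f p.1 + p.2 • g p.1)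
      (M ×ˢ Icc (0:ℝ) 1) W := by
    rintro ⟨x, t⟩ ⟨hx, ht0, ht1⟩
    exact hseg x hx ⟨1 - t, t, by simpa using ht1, ht0, by ring, rfl⟩
  refine ⟨fun p => r ((1 - p.2) • f p.1 + p.2 • g p.1), ?_, fun p hp => hrN (hmem hp), ?_, ?_, ?_⟩
  · refine hr.continuousOn.comp ?_ hmem
    have c1 : ContinuousOn (fun p : Euc a × ℝ => f p.1) (M ×ˢ Icc (0:ℝ) 1) :=
      hf.comp continuousOn_fst (fun p hp => hp.1)
    have c2 : ContinuousOn (fun p : Euc a × ℝ => g p.1) (M ×ˢ Icc (0:ℝ) 1) :=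
      hg.continuousOn.comp continuousOn_fst (fun p hp => hMO hp.1)
    exact ((continuousOn_const.sub continuousOn_snd).smul c1).add (continuousOn_snd.smul c2)
  · intro x hx
    simpa using hrid _ (hmaps hx)
  · refine ⟨O ∩ g ⁻¹' W, hg.continuousOn.isOpen_inter_preimage hO hW, fun x hx => ⟨hMO hx, ?_⟩, ?_⟩
    · exact hseg x hx (right_mem_segment ℝ _ _)
    · simp only [sub_self, zero_smul, one_smul, zero_add]
      exact hr.comp (hg.mono inter_subset_left) (fun x hx => hx.2)
  · intro x hx t ht
    have hxM : x ∈ M := by rw [hA] at hx; exact hx.1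
    simp only [hgA x hx, ← add_smul, sub_add_cancel, one_smul]
    exact hrid _ (hmaps hxM)
end
end

section
/- (Transversality Homotopy Theorem) Let f : M → N be a smooth map between smooth manifolds and S ⊂ N a smooth submanifold. Then f is homotopic to a smooth map g : M → N that is transverse to S. Moreover, if f is already transverse to S at every point of a closed subset A ⊂ M, then g can be chosen with g|_A = f|_A. -/
/- Framework: embedded submanifolds of Euclidean space (Guillemin–Pollack style),
tangent spaces via velocity vectors of curves, local-straightening charts. -/

noncomputable section
open Set Function
open scoped RealInnerProductSpace

/-- `f` (smooth on `M`) is transverse to the submanifold `S ⊂ N`: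
whenever `f x ∈ S`, `T_{f x}S + df_x(T_xM) = T_{f x}N`. -/
def TransverseOn {a b : ℕ} (f : Euc a → Euc b) (M : Set (Euc a)) (N S : Set (Euc b)) : Prop :=
  ∀ x ∈ M, f x ∈ S →
    ∀ w ∈ tangentSpaceOf N (f x), ∃ u ∈ tangentSpaceOf S (f x),
      ∃ v ∈ tangentSpaceOf M x, w = u + fderiv ℝ f x v

set_option linter.unusedSectionVars false
set_option linter.unusedSimpArgs false
set_option linter.flexible false
structure SChart {E : Type*} [NormedAddCommGroup E] [NormedSpace ℝ E]
    (k : ℕ) (S U V : Set E) (φ ψ : E → E) (K : Submodule ℝ E) : Prop where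
  rank : Module.finrank ℝ K = k
  oU : IsOpen U
  oV : IsOpen V
  cφ : ContDiffOn ℝ (⊤ : ℕ∞) φ U
  cψ : ContDiffOn ℝ (⊤ : ℕ∞) ψ V
  mφ : MapsTo φ U V
  mψ : MapsTo ψ V U
  l : ∀ y ∈ U, ψ (φ y) = y
  r : ∀ z ∈ V, φ (ψ z) = z
  eq : S ∩ U = U ∩ φ ⁻¹' (K : Set E)

section tang
variable {E : Type*} [NormedAddCommGroup E] [NormedSpace ℝ E]

lemma IsSubmanifoldOfDim.chart {k : ℕ} {S : Set E} (h : IsSubmanifoldOfDim k S) {x : E}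
    (hx : x ∈ S) : ∃ (U V : Set E) (φ ψ : E → E) (K : Submodule ℝ E), x ∈ U ∧
      SChart k S U V φ ψ K := by
  obtain ⟨U, V, φ, ψ, K, h1, h2, h3, h4, h5, h6, h7, h8, h9, h10, h11⟩ := h x hx
  exact ⟨U, V, φ, ψ, K, h4, h1, h2, h3, h5, h6, h7, h8, h9, h10, h11⟩

variable {k : ℕ} {S U V : Set E} {φ ψ : E → E} {K : Submodule ℝ E}

lemma SChart.mem_iff (h : SChart k S U V φ ψ K) {y : E} (hy : y ∈ U) : y ∈ S ↔ φ y ∈ K := by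
  have := Set.ext_iff.1 h.eq y
  simp only [mem_inter_iff, hy, and_true, true_and, mem_preimage, SetLike.mem_coe] at this
  exact this

lemma SChart.dφ (h : SChart k S U V φ ψ K) {y : E} (hy : y ∈ U) :
    HasFDerivAt φ (fderiv ℝ φ y) y :=
  ((h.cφ.contDiffAt (h.oU.mem_nhds hy)).differentiableAt (by simp)).hasFDerivAt

lemma SChart.dψ (h : SChart k S U V φ ψ K) {y : E} (hy : y ∈ V) :
    HasFDerivAt ψ (fderiv ℝ ψ y) y :=
  ((h.cψ.contDiffAt (h.oV.mem_nhds hy)).differentiableAt (by simp)).hasFDerivAt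

lemma SChart.comp_left (h : SChart k S U V φ ψ K) {y : E} (hy : y ∈ U) (w : E) :
    fderiv ℝ ψ (φ y) (fderiv ℝ φ y w) = w := by
  have h1 := (h.dψ (h.mφ hy)).comp y (h.dφ hy)
  have h2 : HasFDerivAt (ψ ∘ φ) (ContinuousLinearMap.id ℝ E) y := by
    refine (hasFDerivAt_id y).congr_of_eventuallyEq ?_
    filter_upwards [h.oU.mem_nhds hy] with z hz using h.l z hz
  exact DFunLike.congr_fun (h1.unique h2) w

lemma SChart.comp_right (h : SChart k S U V φ ψ K) {y : E} (hy : y ∈ U) (w : E) :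
    fderiv ℝ φ y (fderiv ℝ ψ (φ y) w) = w := by
  have h0 : HasFDerivAt φ (fderiv ℝ φ y) (ψ (φ y)) := by rw [h.l y hy]; exact h.dφ hy
  have h1 := h0.comp (φ y) (h.dψ (h.mφ hy))
  have h2 : HasFDerivAt (φ ∘ ψ) (ContinuousLinearMap.id ℝ E) (φ y) := by
    refine (hasFDerivAt_id (φ y)).congr_of_eventuallyEq ?_
    filter_upwards [h.oV.mem_nhds (h.mφ hy)] with z hz using h.r z hz
  exact DFunLike.congr_fun (h1.unique h2) w

lemma tangentSpaceOf_image_le {F : Type*} [NormedAddCommGroup F] [NormedSpace ℝ F]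
    {A : Set E} {B : Set F} {f : E → F} (hm : MapsTo f A B) {x : E} {f' : E →L[ℝ] F}
    (hf : HasFDerivAt f f' x) {v : E} (hv : v ∈ tangentSpaceOf A x) :
    f' v ∈ tangentSpaceOf B (f x) := by
  have : tangentSpaceOf A x ≤ (tangentSpaceOf B (f x)).comap f'.toLinearMap := by
    refine Submodule.span_le.2 ?_
    rintro w ⟨γ, h1, h2, h3⟩
    refine Submodule.subset_span ⟨f ∘ γ, fun t => hm (h1 t), by simp [h2], ?_⟩
    subst h2
    exact hf.comp_hasDerivAt 0 h3
  exact this hv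

lemma tangentSpaceOf_mono {A B : Set E} (hm : A ⊆ B) {x : E} :
    tangentSpaceOf A x ≤ tangentSpaceOf B x := by
  refine Submodule.span_mono ?_
  rintro w ⟨γ, h1, h2, h3⟩
  exact ⟨γ, fun t => hm (h1 t), h2, h3⟩

lemma SChart.mem_tangent [FiniteDimensional ℝ E] (h : SChart k S U V φ ψ K) {y : E} (hy : y ∈ U)
    (hyS : y ∈ S) (w : E) : w ∈ tangentSpaceOf S y ↔ fderiv ℝ φ y w ∈ K := by
  constructor
  · intro hw
    have : tangentSpaceOf S y ≤ K.comap (fderiv ℝ φ y).toLinearMap := by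
      refine Submodule.span_le.2 ?_
      rintro w ⟨γ, h1, h2, h3⟩
      subst h2
      have h4 := (h.dφ hy).comp_hasDerivAt (0 : ℝ) h3
      have hcl : IsClosed (K : Set E) := K.closed_of_finiteDimensional
      rw [hasDerivAt_iff_tendsto_slope] at h4
      refine hcl.mem_of_tendsto h4 ?_
      have : ∀ᶠ t in nhds (0:ℝ), γ t ∈ U := h3.continuousAt.eventually (h.oU.mem_nhds hy)
      filter_upwards [nhdsWithin_le_nhds this] with t ht
      rw [slope_def_module]
      exact K.smul_mem _ (K.sub_mem ((h.mem_iff ht).1 (h1 t)) ((h.mem_iff hy).1 hyS))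
    exact this hw
  · intro hw
    refine Submodule.subset_span ?_
    have hd : HasDerivAt (fun t : ℝ => φ y + t • fderiv ℝ φ y w) (fderiv ℝ φ y w) 0 := by
      simpa using ((hasDerivAt_id (0:ℝ)).smul_const (fderiv ℝ φ y w)).const_add (φ y)
    have hψ : HasFDerivAt ψ (fderiv ℝ ψ (φ y)) (φ y + (0:ℝ) • fderiv ℝ φ y w) := by
      simpa using h.dψ (h.mφ hy)
    have hev : ∀ᶠ t in nhds (0:ℝ), φ y + t • fderiv ℝ φ y w ∈ V := by
      refine hd.continuousAt.eventually (h.oV.mem_nhds ?_)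
      simpa using h.mφ hy
    classical
    refine ⟨fun t => if φ y + t • fderiv ℝ φ y w ∈ V then ψ (φ y + t • fderiv ℝ φ y w) else y,
      ?_, ?_, ?_⟩
    · intro t
      dsimp only
      split_ifs with ht
      · rw [h.mem_iff (h.mψ ht), h.r _ ht]
        exact K.add_mem ((h.mem_iff hy).1 hyS) (K.smul_mem _ hw)
      · exact hyS
    · simp [h.mφ hy, h.l y hy]
    · have := hψ.comp_hasDerivAt (0:ℝ) hd
      rw [h.comp_left hy] at this
      refine this.congr_of_eventuallyEq ?_
      filter_upwards [hev] with t ht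
      simp [ht]

lemma SChart.tangent_eq [FiniteDimensional ℝ E] (h : SChart k S U V φ ψ K) {y : E} (hy : y ∈ U)
    (hyS : y ∈ S) : tangentSpaceOf S y = K.map (fderiv ℝ ψ (φ y)).toLinearMap := by
  ext w
  rw [h.mem_tangent hy hyS, Submodule.mem_map]
  constructor
  · intro hw; exact ⟨_, hw, h.comp_left hy w⟩
  · rintro ⟨u, hu, rfl⟩
    simpa [h.comp_right hy u] using hu

lemma SChart.finrank_tangent [FiniteDimensional ℝ E] (h : SChart k S U V φ ψ K) {y : E}
    (hy : y ∈ U) (hyS : y ∈ S) : Module.finrank ℝ (tangentSpaceOf S y) = k := by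
  have hi : Injective (fderiv ℝ ψ (φ y)).toLinearMap :=
    Function.LeftInverse.injective (g := fderiv ℝ φ y) (fun w => h.comp_right hy w)
  rw [h.tangent_eq hy hyS, ← (Submodule.equivMapOfInjective _ hi K).finrank_eq, h.rank]

end tang
section dim

lemma dimH_le_of_local {X : Type*} [MetricSpace X] [SecondCountableTopology X]
    {s : Set X} {d : ENNReal} (h : ∀ x ∈ s, ∃ t ∈ nhdsWithin x s, dimH t ≤ d) : dimH s ≤ d := by
  by_contra hc
  push Not at hc
  obtain ⟨x, hx, h2⟩ := exists_mem_nhdsWithin_lt_dimH_of_lt_dimH hc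
  obtain ⟨t, ht, htd⟩ := h x hx
  exact absurd (h2 t ht) (not_lt.2 htd)

lemma dimH_zero_set {E F : Type*} [NormedAddCommGroup E] [NormedSpace ℝ E]
    [FiniteDimensional ℝ E] [NormedAddCommGroup F] [NormedSpace ℝ F] [FiniteDimensional ℝ F]
    (Φ : E → F) (T : Set E) (hT : ∀ x ∈ T, Φ x = 0)
    (hd : ∀ x ∈ T, ∃ Φ' : E →L[ℝ] F, HasStrictFDerivAt Φ Φ' x ∧ Surjective Φ') (n : ℕ)
    (hn : Module.finrank ℝ E ≤ Module.finrank ℝ F + n) :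
    dimH T ≤ n := by
  refine dimH_le_of_local fun x hx => ?_
  obtain ⟨Φ', hΦ, hs⟩ := hd x hx
  obtain ⟨q, hq⟩ := Φ'.ker.exists_isCompl
  let Q : E →ₗ[ℝ] Φ'.ker := Submodule.projectionOnto _ _ hq
  let Qc : E →L[ℝ] Φ'.ker := LinearMap.toContinuousLinearMap Q
  have hinj : (Φ'.prod Qc).ker = ⊥ := by
    rw [LinearMap.ker_eq_bot']
    intro w hw
    have h1 : Φ' w = 0 := congrArg Prod.fst hw
    have h2 : Q w = 0 := congrArg Prod.snd hw
    have h3 : Q w = ⟨w, h1⟩ := Submodule.projectionOnto_apply_left hq ⟨w, h1⟩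
    rw [h3] at h2
    exact congrArg Subtype.val h2
  obtain ⟨C, hC0, hC⟩ := LinearMap.exists_antilipschitzWith (Φ'.prod Qc).toLinearMap hinj
  have hC' : ∀ w, ‖w‖ ≤ C * max ‖Φ' w‖ ‖Qc w‖ := by
    intro w
    have := hC.le_mul_dist w 0
    simpa [dist_eq_norm] using this
  have hCpos : (0:ℝ) < C := by exact_mod_cast hC0
  have hη : (0:ℝ) < 1 / (2 * C) := by positivity
  have hlo := hΦ.isLittleO.def hη
  rw [nhds_prod_eq, Filter.eventually_prod_self_iff'] at hlo
  obtain ⟨u, hu, hu'⟩ := hlo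
  refine ⟨u ∩ T, Filter.inter_mem (mem_nhdsWithin_of_mem_nhds hu) self_mem_nhdsWithin, ?_⟩
  have key : ∀ a ∈ u ∩ T, ∀ b ∈ u ∩ T, ‖a - b‖ ≤ C * ‖Qc (a - b)‖ := by
    intro a ha b hb
    have h1 := hu' a ha.1 b hb.1
    simp only [hT a ha.2, hT b hb.2, sub_self, zero_sub, norm_neg] at h1
    have h2 := hC' (a - b)
    rcases max_cases ‖Φ' (a - b)‖ ‖Qc (a - b)‖ with h | h
    · rw [h.1] at h2
      have : C * ‖Φ' (a - b)‖ ≤ 1 / 2 * ‖a - b‖ := by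
        calc C * ‖Φ' (a - b)‖ ≤ C * (1 / (2 * C) * ‖a - b‖) := by gcongr
          _ = 1 / 2 * ‖a - b‖ := by field_simp
      have h0 : ‖a - b‖ ≤ 0 := by linarith
      exact h0.trans (by positivity)
    · rw [h.1] at h2; exact h2
  have hinjQ : InjOn Qc (u ∩ T) := by
    intro a ha b hb hab
    have := key a ha b hb
    rw [map_sub, hab] at this
    simpa [sub_eq_zero] using this
  have hinv := hinjQ.leftInvOn_invFunOn
  have hL : LipschitzOnWith C (invFunOn Qc (u ∩ T)) (Qc '' (u ∩ T)) := by
    rw [lipschitzOnWith_iff_dist_le_mul]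
    rintro _ ⟨a, ha, rfl⟩ _ ⟨b, hb, rfl⟩
    rw [hinv ha, hinv hb, dist_eq_norm, dist_eq_norm, ← map_sub]
    exact key a ha b hb
  have h3 := hL.dimH_image_le
  have himg : invFunOn Qc (u ∩ T) '' (Qc '' (u ∩ T)) = u ∩ T := hinv.image_image
  rw [himg] at h3
  refine h3.trans ((dimH_mono (subset_univ _)).trans ?_)
  rw [Real.dimH_univ_eq_finrank]
  have h4 := LinearMap.finrank_range_add_finrank_ker Φ'.toLinearMap
  rw [LinearMap.range_eq_top.2 hs, finrank_top] at h4
  exact_mod_cast (by omega : Module.finrank ℝ Φ'.ker ≤ n)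

end dim
section generic
variable {K A E Q : Type*} [NormedAddCommGroup K] [NormedSpace ℝ K] [FiniteDimensional ℝ K]
  [NormedAddCommGroup A] [NormedSpace ℝ A] [FiniteDimensional ℝ A]
  [NormedAddCommGroup E] [NormedSpace ℝ E] [FiniteDimensional ℝ E]
  [NormedAddCommGroup Q] [InnerProductSpace ℝ Q] [FiniteDimensional ℝ Q]

def zmap (F : K → E) (e : K → ℝ) (X : K → A) (k : K) (p : E × (A →L[ℝ] E)) : E :=
  F k + e k • (p.1 + p.2 (X k))

def zder (F : K → E) (e : K → ℝ) (X : K → A) (k : K) (p : E × (A →L[ℝ] E)) : K →L[ℝ] E :=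
  fderiv ℝ F k + (fderiv ℝ e k).smulRight (p.1 + p.2 (X k)) + e k • (p.2 ∘L fderiv ℝ X k)

lemma hasFDerivAt_zmap {F : K → E} {e : K → ℝ} {X : K → A} {k : K} (p : E × (A →L[ℝ] E))
    (hF : DifferentiableAt ℝ F k) (he : DifferentiableAt ℝ e k) (hX : DifferentiableAt ℝ X k) :
    HasFDerivAt (fun k => zmap F e X k p) (zder F e X k p) k := by
  have h1 : HasFDerivAt (fun k => p.1 + p.2 (X k)) (p.2 ∘L fderiv ℝ X k) k :=
    (p.2.hasFDerivAt.comp k hX.hasFDerivAt).const_add p.1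
  have h2 := hF.hasFDerivAt.add (he.hasFDerivAt.smul h1)
  refine h2.congr_fderiv ?_
  ext u
  simp [zder]
  abel

def PhiMap (F : K → E) (e : K → ℝ) (X : K → A) (θ : E → Q) (t : K × Q × (E × (A →L[ℝ] E))) :
    Q × (K →L[ℝ] ℝ) × ℝ :=
  (θ (zmap F e X t.1 t.2.2),
   (innerSL ℝ t.2.1) ∘L (fderiv ℝ θ (zmap F e X t.1 t.2.2) ∘L zder F e X t.1 t.2.2),
   ‖t.2.1‖ ^ 2 - 1)

lemma contDiffAt_Phi {F : K → E} {e : K → ℝ} {X : K → A} {θ : E → Q}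
    {t : K × Q × (E × (A →L[ℝ] E))}
    (hF : ContDiffAt ℝ (⊤ : ℕ∞) F t.1) (he : ContDiffAt ℝ (⊤ : ℕ∞) e t.1)
    (hX : ContDiffAt ℝ (⊤ : ℕ∞) X t.1)
    (hθ : ContDiffAt ℝ (⊤ : ℕ∞) θ (zmap F e X t.1 t.2.2)) :
    ContDiffAt ℝ 1 (PhiMap F e X θ) t := by
  have h12 : (1 : WithTop ℕ∞) + 1 ≤ ((⊤ : ℕ∞) : WithTop ℕ∞) := by
    exact WithTop.coe_le_coe.2 (le_top : (1 + 1 : ℕ∞) ≤ ⊤)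
  have h1 : (1 : WithTop ℕ∞) ≤ ((⊤ : ℕ∞) : WithTop ℕ∞) := by
    exact_mod_cast (le_top : (1:ℕ∞) ≤ ⊤)
  have cF : ContDiffAt ℝ 1 (fun t : K × Q × (E × (A →L[ℝ] E)) => F t.1) t :=
    (hF.of_le h1).comp t contDiffAt_fst
  have ce : ContDiffAt ℝ 1 (fun t : K × Q × (E × (A →L[ℝ] E)) => e t.1) t :=
    (he.of_le h1).comp t contDiffAt_fst
  have cX : ContDiffAt ℝ 1 (fun t : K × Q × (E × (A →L[ℝ] E)) => X t.1) t :=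
    (hX.of_le h1).comp t contDiffAt_fst
  have cF' : ContDiffAt ℝ 1 (fun t : K × Q × (E × (A →L[ℝ] E)) => fderiv ℝ F t.1) t :=
    ContDiffAt.comp (g := fderiv ℝ F) t (hF.fderiv_right h12) contDiffAt_fst
  have ce' : ContDiffAt ℝ 1 (fun t : K × Q × (E × (A →L[ℝ] E)) => fderiv ℝ e t.1) t :=
    ContDiffAt.comp (g := fderiv ℝ e) t (he.fderiv_right h12) contDiffAt_fst
  have cX' : ContDiffAt ℝ 1 (fun t : K × Q × (E × (A →L[ℝ] E)) => fderiv ℝ X t.1) t :=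
    ContDiffAt.comp (g := fderiv ℝ X) t (hX.fderiv_right h12) contDiffAt_fst
  have cl : ContDiffAt ℝ 1 (fun t : K × Q × (E × (A →L[ℝ] E)) => t.2.1) t := by fun_prop
  have cv : ContDiffAt ℝ 1 (fun t : K × Q × (E × (A →L[ℝ] E)) => t.2.2.1) t := by fun_prop
  have cL : ContDiffAt ℝ 1 (fun t : K × Q × (E × (A →L[ℝ] E)) => t.2.2.2) t := by fun_prop
  have cq : ContDiffAt ℝ 1 (fun t : K × Q × (E × (A →L[ℝ] E)) => t.2.2.1 + t.2.2.2 (X t.1)) t :=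
    cv.add (cL.clm_apply cX)
  have cz : ContDiffAt ℝ 1 (fun t : K × Q × (E × (A →L[ℝ] E)) => zmap F e X t.1 t.2.2) t :=
    cF.add (ce.smul cq)
  have cz' : ContDiffAt ℝ 1 (fun t : K × Q × (E × (A →L[ℝ] E)) => zder F e X t.1 t.2.2) t :=
    (cF'.add (ce'.smulRight cq)).add (ce.smul (cL.clm_comp cX'))
  have cθ : ContDiffAt ℝ 1
      (fun t : K × Q × (E × (A →L[ℝ] E)) => θ (zmap F e X t.1 t.2.2)) t :=
    ContDiffAt.comp (g := θ) t (hθ.of_le h1) cz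
  have cθ' : ContDiffAt ℝ 1
      (fun t : K × Q × (E × (A →L[ℝ] E)) => fderiv ℝ θ (zmap F e X t.1 t.2.2)) t :=
    ContDiffAt.comp (g := fderiv ℝ θ) t (hθ.fderiv_right h12) cz
  have ci : ContDiffAt ℝ 1 (fun t : K × Q × (E × (A →L[ℝ] E)) => innerSL ℝ t.2.1) t :=
    ContDiffAt.comp (g := innerSL ℝ) t (innerSL ℝ).contDiff.contDiffAt cl
  exact cθ.prodMk ((ci.clm_comp (cθ'.clm_comp cz')).prodMk ((cl.norm_sq ℝ).sub contDiffAt_const))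

lemma surj_Phi {F : K → E} {e : K → ℝ} {X : K → A} {θ : E → Q}
    {k : K} {l : Q} {p : E × (A →L[ℝ] E)} {Φ' : (K × Q × (E × (A →L[ℝ] E))) →L[ℝ] _}
    (hΦ : HasFDerivAt (PhiMap F e X θ) Φ' (k, l, p))
    (he : e k ≠ 0) (hX : Injective (fderiv ℝ X k)) (hl : ‖l‖ ^ 2 = 1)
    (hθd : DifferentiableAt ℝ θ (zmap F e X k p))
    (hθ : Surjective (fderiv ℝ θ (zmap F e X k p))) : Surjective Φ' := by
  -- derivative along a line
  have line : ∀ (d : K × Q × (E × (A →L[ℝ] E))),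
      HasDerivAt (fun s : ℝ => PhiMap F e X θ ((k, l, p) + s • d)) (Φ' d) 0 := by
    intro d
    have h1 : HasDerivAt (fun s : ℝ => (k, l, p) + s • d) d 0 := by
      simpa using ((hasDerivAt_id (0:ℝ)).smul_const d).const_add (k, l, p)
    have h2 : HasFDerivAt (PhiMap F e X θ) Φ' ((k, l, p) + (0:ℝ) • d) := by simpa using hΦ
    exact h2.comp_hasDerivAt (0:ℝ) h1
  obtain ⟨w0, hw0⟩ := hθ l
  obtain ⟨R, hR⟩ := (LinearMap.exists_leftInverse_of_injective (fderiv ℝ X k).toLinearMap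
    (LinearMap.ker_eq_bot.2 hX))
  have hR' : ∀ u, R (fderiv ℝ X k u) = u := fun u => LinearMap.congr_fun hR u
  have d1 : ∀ μ : K →L[ℝ] ℝ, ∃ d, Φ' d = (0, μ, 0) := by
    intro μ
    let L' : A →L[ℝ] E := (μ ∘L (LinearMap.toContinuousLinearMap R)).smulRight ((e k)⁻¹ • w0)
    refine ⟨(0, 0, (-L' (X k), L')), ?_⟩
    refine (line _).unique ?_
    have : (fun s : ℝ => PhiMap F e X θ ((k, l, p) + s • (0, 0, (-L' (X k), L'))))
        = fun s : ℝ => PhiMap F e X θ (k, l, p) + s • ((0, μ, 0) : Q × (K →L[ℝ] ℝ) × ℝ) := by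
      funext s
      have hz : zmap F e X k (p + s • (-L' (X k), L')) = zmap F e X k p := by
        simp [zmap]
        abel
      have hzd : zder F e X k (p + s • (-L' (X k), L'))
          = zder F e X k p + s • (e k • (L' ∘L fderiv ℝ X k)) := by
        ext u
        simp [zder]
        module
      have e1 : (k, l, p) + s • ((0, 0, (-L' (X k), L')) : K × Q × (E × (A →L[ℝ] E)))
          = (k, l, p + s • (-L' (X k), L')) := by
        refine Prod.ext ?_ (Prod.ext ?_ rfl) <;> simp
      rw [e1]
      refine Prod.ext ?_ (Prod.ext ?_ ?_)
      · simp only [PhiMap, hz]; simp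
      · ext u
        simp only [PhiMap, hz, hzd]
        have : inner ℝ l l = (1:ℝ) := by rw [real_inner_self_eq_norm_sq, hl]
        simp [L', hR', hw0, inner_add_right, inner_smul_right, this, he]
        left; rw [hl]; field_simp
      · simp [PhiMap]
    rw [this]
    simpa using ((hasDerivAt_id (0:ℝ)).smul_const
      ((0, μ, 0) : Q × (K →L[ℝ] ℝ) × ℝ)).const_add (PhiMap F e X θ (k, l, p))
  have d2 : ∀ y : Q, ∃ d, (Φ' d).1 = y ∧ (Φ' d).2.2 = 0 := by
    intro y
    obtain ⟨w, hw⟩ := hθ y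
    refine ⟨(0, 0, ((e k)⁻¹ • w, 0)), ?_, ?_⟩
    · have h1 := (hasFDerivAt_fst (𝕜 := ℝ)).comp_hasDerivAt (0:ℝ) (line (0, 0, ((e k)⁻¹ • w, 0)))
      refine h1.unique ?_
      have : (Prod.fst ∘ fun s : ℝ => PhiMap F e X θ ((k, l, p) + s • (0, 0, ((e k)⁻¹ • w, 0))))
          = fun s : ℝ => θ (zmap F e X k p + s • w) := by
        funext s
        simp only [PhiMap, comp_apply, zmap]
        congr 1
        simp
        rw [show e k • s • (e k)⁻¹ • w = (e k * (e k)⁻¹) • s • w by module, mul_inv_cancel₀ he]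
        module
      rw [this, ← hw]
      have h3 : HasDerivAt (fun s : ℝ => zmap F e X k p + s • w) w 0 := by
        simpa using ((hasDerivAt_id (0:ℝ)).smul_const w).const_add (zmap F e X k p)
      have h4 : HasFDerivAt θ (fderiv ℝ θ (zmap F e X k p)) (zmap F e X k p + (0:ℝ) • w) := by
        simpa using hθd.hasFDerivAt
      exact h4.comp_hasDerivAt (0:ℝ) h3
    · have h1 := (hasFDerivAt_snd (𝕜 := ℝ)).comp_hasDerivAt (0:ℝ)
        ((hasFDerivAt_snd (𝕜 := ℝ)).comp_hasDerivAt (0:ℝ) (line (0, 0, ((e k)⁻¹ • w, 0))))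
      refine h1.unique ?_
      have : (Prod.snd ∘ Prod.snd ∘ fun s : ℝ =>
          PhiMap F e X θ ((k, l, p) + s • (0, 0, ((e k)⁻¹ • w, 0)))) = fun s : ℝ => ‖l‖ ^ 2 - 1 := by
        funext s
        simp [PhiMap]
      rw [this]
      exact hasDerivAt_const _ _
  have d3 : ∃ d, (Φ' d).2.2 = 2 := by
    refine ⟨(0, l, 0), ?_⟩
    have h1 := (hasFDerivAt_snd (𝕜 := ℝ)).comp_hasDerivAt (0:ℝ)
      ((hasFDerivAt_snd (𝕜 := ℝ)).comp_hasDerivAt (0:ℝ) (line (0, l, 0)))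
    refine h1.unique ?_
    have : (Prod.snd ∘ Prod.snd ∘ fun s : ℝ =>
        PhiMap F e X θ ((k, l, p) + s • (0, l, 0))) = fun s : ℝ => (1 + s) ^ 2 - 1 := by
      funext s
      simp only [PhiMap, comp_apply]
      have : ((k, l, p) + s • (0, l, 0) : K × Q × (E × (A →L[ℝ] E))).2.1 = (1 + s) • l := by
        simp [add_smul]
      rw [this, norm_smul, mul_pow, hl]
      simp
    rw [this]
    have := (((hasDerivAt_id (0:ℝ)).const_add 1).pow 2).sub_const 1
    simpa using this
  rintro ⟨y, μ, s⟩
  obtain ⟨a3, h3⟩ := d3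
  obtain ⟨a2, h21, h22⟩ := d2 (y - (s / 2) • (Φ' a3).1)
  obtain ⟨a1, h1⟩ := d1 (μ - (s / 2) • (Φ' a3).2.1 - (Φ' a2).2.1)
  refine ⟨(s / 2) • a3 + a2 + a1, ?_⟩
  rw [map_add, map_add, map_smul, h1]
  refine Prod.ext ?_ (Prod.ext ?_ ?_)
  · simp [h21]
  · simp
  · simp [h22, h3]

lemma dimH_bad [Nontrivial E] (F : K → E) (e : K → ℝ) (X : K → A) (θ : E → Q)
    (D : Set K) (G : Set E)
    (hF : ∀ k ∈ D, ContDiffAt ℝ (⊤ : ℕ∞) F k) (he : ∀ k ∈ D, ContDiffAt ℝ (⊤ : ℕ∞) e k)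
    (hX : ∀ k ∈ D, ContDiffAt ℝ (⊤ : ℕ∞) X k) (he0 : ∀ k ∈ D, e k ≠ 0)
    (hX0 : ∀ k ∈ D, Injective (fderiv ℝ X k))
    (hθ : ∀ z ∈ G, ContDiffAt ℝ (⊤ : ℕ∞) θ z) (hθ0 : ∀ z ∈ G, Surjective (fderiv ℝ θ z)) :
    dimH {p : E × (A →L[ℝ] E) | ∃ k ∈ D, zmap F e X k p ∈ G ∧ θ (zmap F e X k p) = 0 ∧
      ¬ Surjective (fderiv ℝ θ (zmap F e X k p) ∘L zder F e X k p)}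
      ≤ (Module.finrank ℝ (E × (A →L[ℝ] E)) - 1 : ℕ) := by
  let T : Set (K × Q × (E × (A →L[ℝ] E))) :=
    {t | t.1 ∈ D ∧ zmap F e X t.1 t.2.2 ∈ G ∧ PhiMap F e X θ t = 0}
  have hT : dimH T ≤ (Module.finrank ℝ (E × (A →L[ℝ] E)) - 1 : ℕ) := by
    refine dimH_zero_set (PhiMap F e X θ) T (fun x hx => hx.2.2) ?_ _ ?_
    · rintro ⟨k, l, p⟩ ⟨h1, h2, h3⟩
      have hc := contDiffAt_Phi (hF k h1) (he k h1) (hX k h1) (hθ _ h2) (t := (k, l, p))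
      refine ⟨_, hc.hasStrictFDerivAt (by simp), ?_⟩
      refine surj_Phi (hc.differentiableAt (by simp)).hasFDerivAt (he0 k h1) (hX0 k h1) ?_
        ((hθ _ h2).differentiableAt (by simp)) (hθ0 _ h2)
      have : ‖l‖ ^ 2 - 1 = 0 := congrArg (fun q => q.2.2) h3
      linarith
    · have h1 : Module.finrank ℝ (K →L[ℝ] ℝ) = Module.finrank ℝ K := by
        rw [← (LinearMap.toContinuousLinearMap (𝕜 := ℝ) (E := K) (F' := ℝ)).finrank_eq]
        exact Subspace.dual_finrank_eq
      have h2 : 0 < Module.finrank ℝ E := Module.finrank_pos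
      simp only [Module.finrank_prod, h1, Module.finrank_self]
      omega
  refine le_trans (dimH_mono ?_) (((LipschitzWith.prod_snd.comp
    LipschitzWith.prod_snd).dimH_image_le T).trans hT)
  rintro p ⟨k, hk, hz, h0, hns⟩
  let B := fderiv ℝ θ (zmap F e X k p) ∘L zder F e X k p
  have hne : B.rangeᗮ ≠ ⊥ := by
    intro h
    rw [Submodule.orthogonal_eq_bot_iff] at h
    exact hns (LinearMap.range_eq_top.1 h)
  obtain ⟨l, hl, hl0⟩ := Submodule.exists_mem_ne_zero_of_ne_bot hne
  refine ⟨(k, (‖l‖⁻¹ : ℝ) • l, p), ⟨hk, hz, ?_⟩, rfl⟩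
  refine Prod.ext h0 (Prod.ext ?_ ?_)
  · ext u
    have : inner ℝ l (B u) = (0:ℝ) := by
      rw [real_inner_comm]
      exact hl _ ⟨u, rfl⟩
    have h5 : inner ℝ ((‖l‖⁻¹ : ℝ) • l) (B u) = (0:ℝ) := by
      rw [real_inner_smul_left, this, mul_zero]
    exact h5
  · have : ‖(‖l‖⁻¹ : ℝ) • l‖ = 1 := norm_smul_inv_norm (𝕜 := ℝ) hl0
    simp [PhiMap, this]
    
end generic
section tub
open Topology Metric
variable {E : Type*} [NormedAddCommGroup E] [InnerProductSpace ℝ E] [FiniteDimensional ℝ E]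

/-- critical point map -/
def Gmap {K : Type*} [NormedAddCommGroup K] [NormedSpace ℝ K] (σ : K → E) (p : E × K) : E × (K →L[ℝ] ℝ) :=
  (p.1, (innerSL ℝ (p.1 - σ p.2)) ∘L fderiv ℝ σ p.2)

lemma contDiffAt_Gmap {K : Type*} [NormedAddCommGroup K] [NormedSpace ℝ K] {σ : K → E} {p : E × K}
    (hσ : ContDiffAt ℝ (⊤ : ℕ∞) σ p.2) : ContDiffAt ℝ (⊤ : ℕ∞) (Gmap σ) p := by
  have h1 : ContDiffAt ℝ (⊤ : ℕ∞) (fun p : E × K => σ p.2) p := hσ.comp p contDiffAt_snd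
  have h2 : ContDiffAt ℝ (⊤ : ℕ∞) (fun p : E × K => fderiv ℝ σ p.2) p :=
    ContDiffAt.comp (g := fderiv ℝ σ) p (hσ.fderiv_right (by simp)) contDiffAt_snd
  have h3 : ContDiffAt ℝ (⊤ : ℕ∞) (fun p : E × K => innerSL ℝ (p.1 - σ p.2)) p :=
    ContDiffAt.comp (g := innerSL ℝ) p (innerSL ℝ).contDiff.contDiffAt (contDiffAt_fst.sub h1)
  exact contDiffAt_fst.prodMk (h3.clm_comp h2)

lemma inj_Gmap {K : Type*} [NormedAddCommGroup K] [NormedSpace ℝ K] {σ : K → E} {k : K}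
    (hσ : ContDiffAt ℝ (⊤ : ℕ∞) σ k) (hinj : Injective (fderiv ℝ σ k)) :
    Injective (fderiv ℝ (Gmap σ) (σ k, k)) := by
  rw [injective_iff_map_eq_zero]
  rintro ⟨dz, dk⟩ hd
  have hD : HasFDerivAt (Gmap σ) (fderiv ℝ (Gmap σ) (σ k, k)) (σ k, k) :=
    ((contDiffAt_Gmap (p := (σ k, k)) hσ).differentiableAt (by simp)).hasFDerivAt
  have h1 : HasFDerivAt (fun p => (Gmap σ p).1) _ _ := hD.fst
  have h1' : (ContinuousLinearMap.fst ℝ E (K →L[ℝ] ℝ)) ∘L fderiv ℝ (Gmap σ) (σ k, k)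
    = ContinuousLinearMap.fst ℝ E K := h1.unique hasFDerivAt_fst
  have hdz : dz = 0 := by
    have := DFunLike.congr_fun h1' (dz, dk)
    simp only [ContinuousLinearMap.comp_apply, hd] at this
    simpa using this.symm
  subst hdz
  have h2 : HasFDerivAt (fun p => (Gmap σ p).2) _ _ := hD.snd
  have hs : HasFDerivAt (fun p : E × K => σ p.2)
      (fderiv ℝ σ k ∘L ContinuousLinearMap.snd ℝ E K) (σ k, k) :=
    HasFDerivAt.comp (g := σ) (σ k, k) (hσ.differentiableAt (by simp)).hasFDerivAt hasFDerivAt_snd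
  have hi : HasFDerivAt (fun p : E × K => innerSL ℝ (p.1 - σ p.2))
      ((innerSL ℝ) ∘L (ContinuousLinearMap.fst ℝ E K
        - fderiv ℝ σ k ∘L ContinuousLinearMap.snd ℝ E K)) (σ k, k) :=
    HasFDerivAt.comp (g := innerSL ℝ) (σ k, k) (innerSL ℝ).hasFDerivAt (hasFDerivAt_fst.sub hs)
  have hc : HasFDerivAt (fun p : E × K => fderiv ℝ σ p.2)
      (fderiv ℝ (fderiv ℝ σ) k ∘L ContinuousLinearMap.snd ℝ E K) (σ k, k) := by
    refine HasFDerivAt.comp (g := fderiv ℝ σ) (σ k, k) ?_ hasFDerivAt_snd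
    exact ((hσ.fderiv_right (m := 1) (WithTop.coe_le_coe.2
      (le_top : (1 + 1 : ℕ∞) ≤ ⊤))).differentiableAt (by simp)).hasFDerivAt
  have h3 := hi.clm_comp hc
  have h4 := DFunLike.congr_fun (DFunLike.congr_fun (h2.unique h3) (0, dk)) dk
  simp only [ContinuousLinearMap.comp_apply, hd] at h4
  simp at h4
  have h5 : fderiv ℝ σ k dk = 0 := (inner_self_eq_zero (𝕜 := ℝ)).1 h4
  have : dk = 0 := by
    apply hinj; simpa using h5
  simp [this]

lemma crit_nearest {K : Type*} [NormedAddCommGroup K] [NormedSpace ℝ K] {σ : K → E} {k : K} {z : E}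
    (hσ : DifferentiableAt ℝ σ k) (hmin : ∀ᶠ k' in 𝓝 k, dist z (σ k) ≤ dist z (σ k')) :
    Gmap σ (z, k) = (z, 0) := by
  have hloc : IsLocalMin (fun k' => ‖z - σ k'‖ ^ 2) k := by
    filter_upwards [hmin] with k' hk'
    rw [dist_eq_norm, dist_eq_norm] at hk'
    gcongr
  have hd : HasFDerivAt (fun k' => z - σ k') (-fderiv ℝ σ k) k := hσ.hasFDerivAt.const_sub z
  have h0 := hloc.hasFDerivAt_eq_zero hd.norm_sq
  refine Prod.ext rfl ?_
  ext u
  have := DFunLike.congr_fun h0 u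
  simp at this
  simp [Gmap]
  linarith

def nearPt (N : Set E) (z : E) : E :=
  open Classical in if h : ∃ y ∈ N, ∀ y' ∈ N, dist z y ≤ dist z y' then h.choose else z

lemma nearPt_spec {N : Set E} {z : E} (h : ∃ y ∈ N, ∀ y' ∈ N, dist z y ≤ dist z y') :
    nearPt N z ∈ N ∧ ∀ y' ∈ N, dist z (nearPt N z) ≤ dist z y' := by
  rw [nearPt, dif_pos h]
  exact h.choose_spec

lemma nearPt_self {N : Set E} {z : E} (h : z ∈ N) : nearPt N z = z := by
  have h1 := (nearPt_spec (N := N) (z := z) ⟨z, h, fun y' _ => by simp⟩).2 z h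
  simp at h1
  exact h1.symm

lemma nearPt_local {d : ℕ} {N : Set E} (hN : IsSubmanifoldOfDim d N) {y0 : E} (hy0 : y0 ∈ N) :
    ∃ B : Set E, IsOpen B ∧ y0 ∈ B ∧ ContDiffOn ℝ (⊤ : ℕ∞) (nearPt N) B ∧
      MapsTo (nearPt N) B N := by
  obtain ⟨U, V, φ, ψ, K, hyU, hc⟩ := hN.chart hy0
  let σ : K → E := fun k => ψ k
  let VK : Set K := Subtype.val ⁻¹' V
  have hVK : IsOpen VK := hc.oV.preimage continuous_subtype_val
  have hσ : ∀ k ∈ VK, ContDiffAt ℝ (⊤ : ℕ∞) σ k := fun k hk =>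
    ContDiffAt.comp (g := ψ) k (hc.cψ.contDiffAt (hc.oV.mem_nhds hk)) K.subtypeL.contDiff.contDiffAt
  let k0 : K := ⟨φ y0, (hc.mem_iff hyU).1 hy0⟩
  have hk0 : k0 ∈ VK := hc.mφ hyU
  have hσk0 : σ k0 = y0 := hc.l y0 hyU
  have hσ' : ∀ u, fderiv ℝ σ k0 u = fderiv ℝ ψ (φ y0) u := by
    intro u
    have : HasFDerivAt σ (fderiv ℝ ψ (φ y0) ∘L K.subtypeL) k0 :=
      HasFDerivAt.comp (g := ψ) k0 (hc.dψ (hc.mφ hyU)) K.subtypeL.hasFDerivAt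
    rw [this.fderiv]; rfl
  have hinj : Injective (fderiv ℝ σ k0) := by
    intro u v huv
    rw [hσ', hσ'] at huv
    have := congrArg (fderiv ℝ φ y0) huv
    rw [hc.comp_right hyU, hc.comp_right hyU] at this
    exact Subtype.ext this
  have hGinj := inj_Gmap (hσ k0 hk0) hinj
  rw [hσk0] at hGinj
  have hfr : Module.finrank ℝ (E × K) = Module.finrank ℝ (E × (K →L[ℝ] ℝ)) := by
    have h1 : Module.finrank ℝ (K →L[ℝ] ℝ) = Module.finrank ℝ K := by
      rw [← (LinearMap.toContinuousLinearMap (𝕜 := ℝ) (E := K) (F' := ℝ)).finrank_eq]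
      exact Subspace.dual_finrank_eq
    simp [h1]
  let Λ : (E × K) ≃L[ℝ] (E × (K →L[ℝ] ℝ)) :=
    (LinearEquiv.ofInjectiveOfFinrankEq (fderiv ℝ (Gmap σ) (y0, k0)).toLinearMap hGinj
      hfr).toContinuousLinearEquiv
  have hΛ : (Λ : (E × K) →L[ℝ] _) = fderiv ℝ (Gmap σ) (y0, k0) := by ext x <;> rfl
  have hGc : ContDiffAt ℝ (⊤ : ℕ∞) (Gmap σ) (y0, k0) := contDiffAt_Gmap (hσ k0 hk0)
  have hGd : HasFDerivAt (Gmap σ) (Λ : (E × K) →L[ℝ] _) (y0, k0) := by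
    rw [hΛ]; exact (hGc.differentiableAt (by simp)).hasFDerivAt
  let e := hGc.toOpenPartialHomeomorph (Gmap σ) hGd (by simp)
  have hesrc : (y0, k0) ∈ e.source := hGc.mem_toOpenPartialHomeomorph_source hGd (by simp)
  have hecoe : ∀ p, e p = Gmap σ p := fun p => rfl
  -- good open set in the source
  have hev : ∀ᶠ p in 𝓝 (y0, k0), p ∈ e.source ∧ p.2 ∈ VK ∧
      fderiv ℝ (Gmap σ) p ∈ range ((↑) : ((E × K) ≃L[ℝ] (E × (K →L[ℝ] ℝ))) → _) := by
    have hA : ∀ᶠ p in 𝓝 (y0, k0), p ∈ e.source := e.open_source.mem_nhds hesrc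
    refine hA.and (.and ?_ ?_)
    · exact continuousAt_snd.eventually (hVK.mem_nhds hk0)
    · have hcont : ContinuousAt (fderiv ℝ (Gmap σ)) (y0, k0) :=
        (hGc.fderiv_right (m := 1) (WithTop.coe_le_coe.2
          (le_top : (1 + 1 : ℕ∞) ≤ ⊤))).continuousAt
      exact hcont.eventually_mem ((ContinuousLinearEquiv.isOpen).mem_nhds ⟨Λ, hΛ⟩)
  -- radius where N is closed
  obtain ⟨ρ, hρ, hρU⟩ := Metric.nhds_basis_closedBall.mem_iff.1 (hc.oU.mem_nhds hyU)
  have hcomp : IsCompact (N ∩ closedBall y0 ρ) := by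
    have h1 : N ∩ closedBall y0 ρ = closedBall y0 ρ ∩ φ ⁻¹' (K : Set E) := by
      ext y
      constructor
      · rintro ⟨h1, h2⟩; exact ⟨h2, (hc.mem_iff (hρU h2)).1 h1⟩
      · rintro ⟨h2, h1⟩; exact ⟨(hc.mem_iff (hρU h2)).2 h1, h2⟩
    rw [h1]
    refine (isCompact_closedBall y0 ρ).of_isClosed_subset ?_ inter_subset_left
    exact (hc.cφ.continuousOn.mono hρU).preimage_isClosed_of_isClosed isClosed_closedBall
      K.closed_of_finiteDimensional
  have hnear : ∀ z ∈ ball y0 (ρ / 2), nearPt N z ∈ N ∧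
      ∀ y' ∈ N, dist z (nearPt N z) ≤ dist z y' := by
    intro z hz
    rw [mem_ball] at hz
    refine nearPt_spec ?_
    obtain ⟨y, hy, hymin⟩ := hcomp.exists_isMinOn ⟨y0, hy0, mem_closedBall_self hρ.le⟩
      (f := fun y => dist z y) (by fun_prop)
    refine ⟨y, hy.1, fun y' hy' => ?_⟩
    by_cases hb : y' ∈ closedBall y0 ρ
    · exact hymin ⟨hy', hb⟩
    · have h1 : dist z y ≤ dist z y0 := hymin ⟨hy0, mem_closedBall_self hρ.le⟩
      rw [mem_closedBall, not_le] at hb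
      have h2 := dist_triangle y' z y0
      rw [dist_comm y' z] at h2
      linarith
  -- continuity of nearPt at y0
  have hcts : ContinuousAt (nearPt N) y0 := by
    rw [Metric.continuousAt_iff]
    intro ε hε
    refine ⟨min (ρ / 2) (ε / 2), by positivity, fun {z} hz => ?_⟩
    have h1 := (hnear z (mem_ball.2 (lt_of_lt_of_le hz (min_le_left _ _)))).2 y0 hy0
    have h2 := lt_of_lt_of_le hz (min_le_right _ _)
    rw [nearPt_self hy0]
    have h3 := dist_triangle (nearPt N z) z y0
    rw [dist_comm (nearPt N z) z] at h3
    linarith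
  have hnU : ∀ᶠ z in 𝓝 y0, nearPt N z ∈ U :=
    hcts.eventually (by rw [nearPt_self hy0]; exact hc.oU.mem_nhds hyU)
  classical
  let κ : E → K := fun z => if h : φ (nearPt N z) ∈ K then ⟨φ (nearPt N z), h⟩ else k0
  have hκval : ∀ᶠ z in 𝓝 y0, (κ z : E) = φ (nearPt N z) ∧ nearPt N z ∈ U ∧
      z ∈ ball y0 (ρ / 2) := by
    filter_upwards [hnU, ball_mem_nhds y0 (half_pos hρ)] with z hz hz2
    have : φ (nearPt N z) ∈ K := (hc.mem_iff hz).1 (hnear z hz2).1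
    refine ⟨?_, hz, hz2⟩
    simp only [κ, dif_pos this]
  have hκ0 : κ y0 = k0 := by
    have := hκval.self_of_nhds.1
    rw [nearPt_self hy0] at this
    exact Subtype.ext this
  have hκc : ContinuousAt κ y0 := by
    rw [Topology.IsInducing.subtypeVal.continuousAt_iff]
    have h1 : ContinuousAt (fun z => φ (nearPt N z)) y0 := by
      refine ContinuousAt.comp (g := φ) ?_ hcts
      rw [nearPt_self hy0]
      exact hc.cφ.continuousOn.continuousAt (hc.oU.mem_nhds hyU)
    refine h1.congr ?_
    filter_upwards [hκval] with z hz using hz.1.symm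
  have hpair : ContinuousAt (fun z => (z, κ z)) y0 := continuousAt_id.prodMk hκc
  have hall := hκval.and (hpair.eventually (by simpa only [hκ0] using hev))
  obtain ⟨B, hB, hBo, hB0⟩ := _root_.eventually_nhds_iff.1 hall
  refine ⟨B, hBo, hB0, ?_, fun z hz => (hnear z (hB z hz).1.2.2).1⟩
  have hcrit : ∀ z ∈ B, Gmap σ (z, κ z) = (z, 0) := by
    intro z hz
    obtain ⟨⟨h1, h2, h3⟩, h4, h5, h6⟩ := hB z hz
    have h7 : σ (κ z) = nearPt N z := by
      simp only [σ, h1]; exact hc.l _ h2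
    refine crit_nearest ((hσ _ h5).differentiableAt (by simp)) ?_
    filter_upwards [hVK.mem_nhds h5] with k' hk'
    rw [h7]
    refine (hnear z h3).2 _ ?_
    rw [hc.mem_iff (hc.mψ hk'), hc.r _ hk']
    exact k'.2
  intro z hz
  refine ContDiffAt.contDiffWithinAt ?_
  obtain ⟨⟨h1, h2, h3⟩, h4, h5, ⟨Λz, hΛz⟩⟩ := hB z hz
  have hsymm : ∀ z' ∈ B, e.symm (z', 0) = (z', κ z') := by
    intro z' hz'
    rw [← hcrit z' hz', ← hecoe, e.left_inv (hB z' hz').2.1]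
  have hsm : ContDiffAt ℝ (⊤ : ℕ∞) e.symm (z, 0) := by
    refine e.contDiffAt_symm (f₀' := Λz) ?_ ?_ ?_
    · rw [← hcrit z hz, ← hecoe]; exact e.map_source h4
    · rw [hsymm z hz, hΛz]
      exact ((contDiffAt_Gmap (p := (z, κ z)) (hσ _ h5)).differentiableAt (by simp)).hasFDerivAt
    · rw [hsymm z hz]; exact contDiffAt_Gmap (p := (z, κ z)) (hσ _ h5)
  have hκs : ContDiffAt ℝ (⊤ : ℕ∞) (fun z' => (e.symm (z', 0)).2) z :=
    contDiffAt_snd.comp z (ContDiffAt.comp (g := e.symm) z hsm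
      (contDiffAt_id.prodMk contDiffAt_const))
  have hκs' : ContDiffAt ℝ (⊤ : ℕ∞) κ z := by
    refine hκs.congr_of_eventuallyEq ?_
    filter_upwards [hBo.mem_nhds hz] with z' hz'
    rw [hsymm z' hz']
  refine (ContDiffAt.comp (g := σ) z (hσ _ h5) hκs').congr_of_eventuallyEq ?_
  filter_upwards [hBo.mem_nhds hz] with z' hz'
  obtain ⟨⟨h1, h2, h3⟩, -⟩ := hB z' hz'
  simp only [σ, comp_apply, h1]
  exact (hc.l _ h2).symm

lemma exists_retraction {d : ℕ} {N : Set E} (hN : IsSubmanifoldOfDim d N) :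
    ∃ (O : Set E) (r : E → E), IsOpen O ∧ N ⊆ O ∧ ContDiffOn ℝ (⊤ : ℕ∞) r O ∧ MapsTo r O N ∧
      ∀ y ∈ N, r y = y := by
  choose! B h1 h2 h3 h4 using fun (y : E) (hy : y ∈ N) => nearPt_local hN hy
  refine ⟨⋃ y ∈ N, B y, nearPt N, isOpen_biUnion h1, fun y hy => mem_biUnion hy (h2 y hy), ?_, ?_,
    fun y hy => nearPt_self hy⟩
  · intro z hz
    obtain ⟨y, hy, hzy⟩ := mem_iUnion₂.1 hz
    exact ((h3 y hy).contDiffAt ((h1 y hy).mem_nhds hzy)).contDiffWithinAt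
  · intro z hz
    obtain ⟨y, hy, hzy⟩ := mem_iUnion₂.1 hz
    exact h4 y hy hzy

lemma retraction_id {N O : Set E} {r : E → E} (hO : IsOpen O) (hNO : N ⊆ O)
    (hr : ContDiffOn ℝ (⊤ : ℕ∞) r O) (hid : ∀ y ∈ N, r y = y) {y w : E} (hy : y ∈ N)
    (hw : w ∈ tangentSpaceOf N y) : fderiv ℝ r y w = w := by
  have hd : HasFDerivAt r (fderiv ℝ r y) y :=
    ((hr.contDiffAt (hO.mem_nhds (hNO hy))).differentiableAt (by simp)).hasFDerivAt
  have : tangentSpaceOf N y ≤ LinearMap.eqLocus (fderiv ℝ r y).toLinearMap LinearMap.id := by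
    refine Submodule.span_le.2 ?_
    rintro v ⟨γ, h1, h2, h3⟩
    subst h2
    have h4 := hd.comp_hasDerivAt (0:ℝ) h3
    have h5 : r ∘ γ = γ := funext fun t => hid _ (h1 t)
    rw [h5] at h4
    exact h4.unique h3
  exact this hw

lemma tangentSpaceOf_open {O : Set E} (hO : IsOpen O) {z : E} (hz : z ∈ O) (w : E) :
    w ∈ tangentSpaceOf O z := by
  have hd : HasDerivAt (fun t : ℝ => z + t • w) w 0 := by
    simpa using ((hasDerivAt_id (0:ℝ)).smul_const w).const_add z
  have hev : ∀ᶠ t in 𝓝 (0:ℝ), z + t • w ∈ O :=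
    hd.continuousAt.eventually_mem (hO.mem_nhds (by simpa using hz))
  classical
  refine Submodule.subset_span ⟨fun t => if z + t • w ∈ O then z + t • w else z, ?_, ?_, ?_⟩
  · intro t
    dsimp only
    split_ifs with h
    · exact h
    · exact hz
  · simp
  · refine hd.congr_of_eventuallyEq ?_
    filter_upwards [hev] with t ht
    simp [ht]

lemma exists_retraction' {d : ℕ} {N : Set E} (hN : IsSubmanifoldOfDim d N) :
    ∃ (O : Set E) (r : E → E), IsOpen O ∧ N ⊆ O ∧ ContDiffOn ℝ (⊤ : ℕ∞) r O ∧ MapsTo r O N ∧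
      (∀ y ∈ N, r y = y) ∧
      ∀ z ∈ O, ∀ w, w ∈ tangentSpaceOf N (r z) ↔ ∃ u, fderiv ℝ r z u = w := by
  obtain ⟨O, r, hO, hNO, hr, hm, hid⟩ := exists_retraction hN
  have hd : ∀ z ∈ O, HasFDerivAt r (fderiv ℝ r z) z := fun z hz =>
    ((hr.contDiffAt (hO.mem_nhds hz)).differentiableAt (by simp)).hasFDerivAt
  have hran : ∀ z ∈ O, ∀ u, fderiv ℝ r z u ∈ tangentSpaceOf N (r z) := fun z hz u =>
    tangentSpaceOf_image_le hm (hd z hz) (tangentSpaceOf_open hO hz u)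
  let Θ : E → (E →L[ℝ] E) := fun z =>
    fderiv ℝ r (r z) * (fderiv ℝ r z * fderiv ℝ r (r z)) + (1 - fderiv ℝ r (r z))
  have hcr : ContinuousOn (fderiv ℝ r) O :=
    (hr.fderiv_of_isOpen (m := 0) hO (by simp)).continuousOn
  have hcr2 : ContinuousOn (fun z => fderiv ℝ r (r z)) O :=
    hcr.comp hr.continuousOn fun z hz => hNO (hm hz)
  have hΘ : ContinuousOn Θ O :=
    (hcr2.mul (hcr.mul hcr2)).add (continuousOn_const.sub hcr2)
  refine ⟨O ∩ Θ ⁻¹' {a | IsUnit a}, r, hΘ.isOpen_inter_preimage hO Units.isOpen, ?_,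
    hr.mono inter_subset_left, hm.mono_left inter_subset_left, hid, ?_⟩
  · intro y hy
    refine ⟨hNO hy, ?_⟩
    have : Θ y = 1 := by
      ext w
      simp only [Θ, hid y hy]
      have h1 : ∀ w, fderiv ℝ r y (fderiv ℝ r y w) = fderiv ℝ r y w := fun w => by
        refine retraction_id hO hNO hr hid hy ?_
        simpa only [hid y hy] using hran y (hNO hy) w
      simp [h1]
    simp [this]
  · rintro z ⟨hz, hu⟩ w
    constructor
    · intro hw
      obtain ⟨⟨a, b, hab, hba⟩, ha⟩ := hu
      have hPz : ∀ v ∈ tangentSpaceOf N (r z), fderiv ℝ r (r z) v = v := fun v hv =>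
        retraction_id hO hNO hr hid (hm hz) hv
      have hPr : ∀ v, fderiv ℝ r (r z) v ∈ tangentSpaceOf N (r z) := fun v => by
        simpa only [hid _ (hm hz)] using hran (r z) (hNO (hm hz)) v
      have e1 : Θ z (b w) = w := by
        have : a = Θ z := ha
        rw [← this]
        exact DFunLike.congr_fun hab w
      have e2 := congrArg (fderiv ℝ r (r z)) e1
      rw [hPz w hw] at e2
      refine ⟨fderiv ℝ r (r z) (b w), ?_⟩
      refine Eq.trans ?_ e2
      simp [Θ, hPz _ (hPr _), hPz _ (hran z hz _)]
    · rintro ⟨u, rfl⟩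
      exact hran z hz u

end tub
section epsfun
open Topology Metric
open scoped Manifold ContDiff
variable {A E : Type*} [NormedAddCommGroup A] [NormedSpace ℝ A] [FiniteDimensional ℝ A]
  [NormedAddCommGroup E] [NormedSpace ℝ E]

lemma exists_eps_pos (f : A → E) (W : Set A) (hW : IsOpen W) (hf : ContinuousOn f W)
    (O : Set E) (hO : IsOpen O) (hWO : MapsTo f W O) :
    ∃ ε : A → ℝ, ContDiffOn ℝ (⊤ : ℕ∞) ε W ∧ ∀ x ∈ W, 0 < ε x ∧
      ball (f x) (ε x * (1 + ‖x‖)) ⊆ O := by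
  let W' : TopologicalSpace.Opens A := ⟨W, hW⟩
  have : LocallyCompactSpace W' := hW.locallyCompactSpace
  have : SigmaCompactSpace W' := inferInstance
  obtain ⟨g, hg⟩ := exists_contMDiffMap_forall_mem_convex_of_local_const (n := (⊤ : ℕ∞))
    (M := W') 𝓘(ℝ, A)
    (t := fun x : W' => {c : ℝ | 0 < c ∧ ball (f x) (c * (1 + ‖(x : A)‖)) ⊆ O}) (by
      intro x
      refine Set.OrdConnected.convex ⟨?_⟩
      rintro c ⟨hc, -⟩ d ⟨-, hd⟩ z ⟨hz1, hz2⟩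
      refine ⟨hc.trans_le hz1, (ball_subset_ball ?_).trans hd⟩
      gcongr) (by
      intro x
      obtain ⟨ρ, hρ, hb⟩ := Metric.isOpen_iff.1 hO (f x) (hWO x.2)
      refine ⟨ρ / 2 / (2 + ‖(x : A)‖), ?_⟩
      have h1 : ∀ᶠ y : W' in 𝓝 x, dist (f y) (f x) < ρ / 2 := by
        have hc : ContinuousAt (fun y : W' => f y) x :=
          (hf.continuousAt (hW.mem_nhds x.2)).comp continuousAt_subtype_val
        exact hc.eventually_mem (ball_mem_nhds _ (half_pos hρ))
      have h2 : ∀ᶠ y : W' in 𝓝 x, dist (y : A) x < 1 := by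
        have hc : ContinuousAt (fun y : W' => (y : A)) x := continuousAt_subtype_val
        exact hc.eventually_mem (ball_mem_nhds _ one_pos)
      filter_upwards [h1, h2] with y hy1 hy2
      have hp : 0 < 2 + ‖(x : A)‖ := by positivity
      refine ⟨by positivity, fun z hz => hb ?_⟩
      have h3 : ‖(y : A)‖ ≤ ‖(x : A)‖ + 1 := by
        have := norm_le_norm_add_norm_sub' (y : A) x
        rw [dist_eq_norm] at hy2
        linarith
      have h4 : ρ / 2 / (2 + ‖(x : A)‖) * (1 + ‖(y : A)‖) ≤ ρ / 2 := by
        rw [div_mul_eq_mul_div, div_le_iff₀ hp]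
        have : 1 + ‖(y : A)‖ ≤ 2 + ‖(x : A)‖ := by linarith
        gcongr
      rw [mem_ball] at hz ⊢
      have := dist_triangle z (f y) (f x)
      linarith)
  have hgc : ContMDiff 𝓘(ℝ, A) 𝓘(ℝ, ℝ) (⊤ : ℕ∞) g := g.contMDiff
  classical
  refine ⟨fun x => if h : x ∈ W then g ⟨x, h⟩ else 0, ?_, ?_⟩
  · intro x hx
    refine ContDiffAt.contDiffWithinAt ?_
    rw [← contMDiffAt_iff_contDiffAt]
    have : ContMDiffAt 𝓘(ℝ, A) 𝓘(ℝ, ℝ) (⊤ : ℕ∞)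
      (fun y : W' => (fun x => if h : x ∈ W then g ⟨x, h⟩ else 0) (y : A)) (⟨x, hx⟩ : W') := by
      refine (hgc ⟨x, hx⟩).congr_of_eventuallyEq (Filter.Eventually.of_forall fun y => ?_)
      have hy : (y : A) ∈ W := y.2
      simp [hy]
    exact (contMDiffAt_subtype_iff (U := W') (f := fun x => if h : x ∈ W then g ⟨x, h⟩ else 0) (x := (⟨x, hx⟩ : W'))).1 this
  · intro x hx
    simp only [hx, dif_pos]
    exact hg ⟨x, hx⟩

lemma exists_eps (f : A → E) (W : Set A) (hW : IsOpen W) (hf : ContinuousOn f W)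
    (O : Set E) (hO : IsOpen O) (hWO : MapsTo f W O) (C : Set A) (hC : IsClosed C) :
    ∃ ε : A → ℝ, ContDiffOn ℝ (⊤ : ℕ∞) ε W ∧ (∀ x ∈ W, (ε x = 0 ↔ x ∈ C)) ∧
      (∀ x ∈ W, x ∈ C → fderiv ℝ ε x = 0) ∧
      ∀ x ∈ W, ∀ t ∈ Icc (0 : ℝ) 1, ∀ q : E, ‖q‖ < 1 + ‖x‖ → f x + (t * ε x) • q ∈ O := by
  obtain ⟨ε, h1, h2⟩ := exists_eps_pos f W hW hf O hO hWO
  obtain ⟨χ, c1, c2, c3⟩ := IsOpen.exists_contDiff_support_eq (n := (⊤ : ℕ∞)) hC.isOpen_compl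
  have c4 : ∀ x, 0 ≤ χ x ∧ χ x ≤ 1 := fun x => c3 ⟨x, rfl⟩
  have c5 : ∀ x, χ x = 0 ↔ x ∈ C := fun x => by
    have := Set.ext_iff.1 c1 x
    simp only [mem_support, mem_compl_iff] at this
    tauto
  refine ⟨fun x => χ x * ε x, c2.contDiffOn.mul h1, ?_, ?_, ?_⟩
  · intro x hx
    simp [(h2 x hx).1.ne', c5]
  · intro x hx hxC
    refine IsLocalMin.fderiv_eq_zero ?_
    filter_upwards [hW.mem_nhds hx] with y hy
    rw [(c5 x).2 hxC, zero_mul]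
    exact mul_nonneg (c4 y).1 (h2 y hy).1.le
  · intro x hx t ht q hq
    apply (h2 x hx).2
    have hp := (h2 x hx).1
    rw [mem_ball, dist_eq_norm, add_sub_cancel_left, norm_smul, Real.norm_eq_abs,
      abs_of_nonneg (mul_nonneg ht.1 (mul_nonneg (c4 x).1 hp.le))]
    have h5 : t * (χ x * ε x) ≤ ε x := by
      calc t * (χ x * ε x) ≤ 1 * (1 * ε x) := by
            gcongr
            · exact mul_nonneg (c4 x).1 hp.le
            · exact ht.2
            · exact (c4 x).2
        _ = ε x := by ring
    calc t * (χ x * ε x) * ‖q‖ ≤ ε x * ‖q‖ := by gcongr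
      _ < ε x * (1 + ‖x‖) := by gcongr
end epsfun
section locdef
open Topology Metric
variable {E : Type*} [NormedAddCommGroup E] [InnerProductSpace ℝ E] [FiniteDimensional ℝ E]

lemma eventually_surjective {X Q : Type*} [TopologicalSpace X] [NormedAddCommGroup Q]
    [NormedSpace ℝ Q] [FiniteDimensional ℝ Q] (B : X → E →L[ℝ] Q) (x : X)
    (hB : ContinuousAt B x) (hs : Surjective (B x)) : ∀ᶠ y in 𝓝 x, Surjective (B y) := by
  obtain ⟨R, hR⟩ := LinearMap.exists_rightInverse_of_surjective (B x).toLinearMap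
    (LinearMap.range_eq_top.2 hs)
  let R' : Q →L[ℝ] E := LinearMap.toContinuousLinearMap R
  have h1 : ContinuousAt (fun y => (B y) ∘L R') x := hB.clm_comp continuousAt_const
  have h2 : (B x) ∘L R' = 1 := by
    ext q
    exact LinearMap.congr_fun hR q
  have : CompleteSpace Q := FiniteDimensional.complete ℝ Q
  have h3 : {u : Q →L[ℝ] Q | IsUnit u} ∈ 𝓝 ((B x) ∘L R') := by
    rw [h2]
    exact Units.isOpen.mem_nhds isUnit_one
  filter_upwards [h1.eventually_mem h3] with y hy
  have hy' : Bijective ((B y) ∘L R') := ContinuousLinearMap.isUnit_iff_bijective.1 hy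
  exact Function.Surjective.of_comp hy'.2

lemma local_defining {dN s : ℕ} {N S O : Set E} {r : E → E} (hN : IsSubmanifoldOfDim dN N)
    (hS : IsSubmanifoldOfDim s S) (hSN : S ⊆ N) (hO : IsOpen O) (hNO : N ⊆ O)
    (hr : ContDiffOn ℝ (⊤ : ℕ∞) r O) (hid : ∀ y ∈ N, r y = y)
    (hran : ∀ z ∈ O, ∀ w, w ∈ tangentSpaceOf N (r z) ↔ ∃ u, fderiv ℝ r z u = w)
    {y0 : E} (hy0 : y0 ∈ S) :
    ∃ (Q : Submodule ℝ E) (h : E → Q) (U : Set E), IsOpen U ∧ y0 ∈ U ∧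
      ContDiffOn ℝ (⊤ : ℕ∞) h U ∧ (∀ y ∈ S ∩ U, h y = 0) ∧
      (∀ y ∈ N ∩ U, ∀ q : Q, ∃ w ∈ tangentSpaceOf N y, fderiv ℝ h y w = q) ∧
      (∀ y ∈ S ∩ U, ∀ w ∈ tangentSpaceOf N y, fderiv ℝ h y w = 0 → w ∈ tangentSpaceOf S y) := by
  obtain ⟨U, V, φ, ψ, K, hyU, hc⟩ := hS.chart hy0
  have hfN : ∀ y ∈ N, Module.finrank ℝ (tangentSpaceOf N y) = dN := by
    intro y hy
    obtain ⟨_, _, _, _, _, h1, h2⟩ := hN.chart hy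
    exact h2.finrank_tangent h1 hy
  let T : Submodule ℝ E := (tangentSpaceOf N y0).map (fderiv ℝ φ y0).toLinearMap
  let Q : Submodule ℝ E := Kᗮ ⊓ T
  have hKT : K ≤ T := by
    intro k hk
    refine ⟨fderiv ℝ ψ (φ y0) k, ?_, hc.comp_right hyU k⟩
    apply tangentSpaceOf_mono hSN
    rw [hc.mem_tangent hyU hy0, hc.comp_right hyU]
    exact hk
  have hinj : Injective (fderiv ℝ φ y0).toLinearMap :=
    Function.LeftInverse.injective (g := fderiv ℝ ψ (φ y0)) (fun w => hc.comp_left hyU w)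
  have hfT : Module.finrank ℝ T = dN := by
    rw [← (Submodule.equivMapOfInjective _ hinj (tangentSpaceOf N y0)).finrank_eq,
      hfN y0 (hSN hy0)]
  have hfQ : s + Module.finrank ℝ Q = dN := by
    rw [← hfT, ← Submodule.finrank_add_inf_finrank_orthogonal hKT, hc.rank]
  let P : E →L[ℝ] Q := Q.orthogonalProjectionOnto
  have hPK : ∀ k ∈ K, P k = 0 := by
    intro k hk
    refine Submodule.orthogonalProjectionOnto_eq_zero_iff.2 ?_
    rw [Submodule.mem_orthogonal]
    intro u hu
    rw [real_inner_comm]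
    exact (Submodule.mem_orthogonal _ _).1 hu.1 k hk
  have hPQ : ∀ q : Q, P q = q := fun q => Submodule.orthogonalProjectionOnto_mem_subspace_eq_self q
  let h : E → Q := fun y => P (φ y)
  have hdh : ∀ y ∈ U, fderiv ℝ h y = P ∘L fderiv ℝ φ y := fun y hy =>
    (P.hasFDerivAt.comp y (hc.dφ hy)).fderiv
  have hh : ContDiffOn ℝ (⊤ : ℕ∞) h U := P.contDiff.comp_contDiffOn hc.cφ
  have hev : ∀ᶠ y in 𝓝 y0, Surjective (fderiv ℝ h y ∘L fderiv ℝ r y) := by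
    refine eventually_surjective (fun y => fderiv ℝ h y ∘L fderiv ℝ r y) y0 ?_ ?_
    · have e1 : ContinuousAt (fderiv ℝ h) y0 :=
        ((hh.contDiffAt (hc.oU.mem_nhds hyU)).fderiv_right (m := 0) (by simp)).continuousAt
      have e2 : ContinuousAt (fderiv ℝ r) y0 :=
        ((hr.contDiffAt (hO.mem_nhds (hNO (hSN hy0)))).fderiv_right (m := 0) (by simp)).continuousAt
      exact e1.clm_comp e2
    · intro q
      obtain ⟨w, hw, hwq⟩ := q.2.2
      have hw' : w ∈ tangentSpaceOf N (r y0) := by rw [hid y0 (hSN hy0)]; exact hw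
      obtain ⟨u, hu⟩ := (hran y0 (hNO (hSN hy0)) w).1 hw'
      refine ⟨u, ?_⟩
      have hwq' : fderiv ℝ φ y0 w = (q : E) := hwq
      show fderiv ℝ h y0 (fderiv ℝ r y0 u) = q
      rw [hu, hdh y0 hyU]
      show P (fderiv ℝ φ y0 w) = q
      rw [hwq', hPQ]
  obtain ⟨U₁, hU₁, hU₁o, hyU₁⟩ := _root_.eventually_nhds_iff.1 hev
  have hsur : ∀ y ∈ N ∩ (U ∩ U₁), ∀ q : Q, ∃ w ∈ tangentSpaceOf N y, fderiv ℝ h y w = q := by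
    rintro y ⟨hyN, hyU, hyU1⟩ q
    obtain ⟨u, hu⟩ := hU₁ y hyU1 q
    refine ⟨fderiv ℝ r y u, ?_, hu⟩
    have := (hran y (hNO hyN) (fderiv ℝ r y u)).2 ⟨u, rfl⟩
    rwa [hid y hyN] at this
  refine ⟨Q, h, U ∩ U₁, hc.oU.inter hU₁o, ⟨hyU, hyU₁⟩, hh.mono inter_subset_left, ?_, hsur, ?_⟩
  · rintro y ⟨hyS, hyU, -⟩
    exact hPK _ ((hc.mem_iff hyU).1 hyS)
  · rintro y ⟨hyS, hyU, hyU1⟩ w hw hw0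
    let B : tangentSpaceOf N y →ₗ[ℝ] Q := (fderiv ℝ h y).toLinearMap.domRestrict _
    have hB : LinearMap.range B = ⊤ := by
      rw [LinearMap.range_eq_top]
      intro q
      obtain ⟨w, hw, hq⟩ := hsur y ⟨hSN hyS, hyU, hyU1⟩ q
      exact ⟨⟨w, hw⟩, hq⟩
    have hrk := B.finrank_range_add_finrank_ker
    rw [hB, finrank_top, hfN y (hSN hyS)] at hrk
    let L : Submodule ℝ E := (LinearMap.ker B).map (tangentSpaceOf N y).subtype
    have hL : Module.finrank ℝ L = Module.finrank ℝ (LinearMap.ker B) :=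
      (Submodule.equivMapOfInjective _ (tangentSpaceOf N y).injective_subtype _).finrank_eq.symm
    have hle : tangentSpaceOf S y ≤ L := by
      intro v hv
      refine ⟨⟨v, tangentSpaceOf_mono hSN hv⟩, ?_, rfl⟩
      show fderiv ℝ h y v = 0
      rw [hdh y hyU]
      exact hPK _ ((hc.mem_tangent hyU hyS v).1 hv)
    have heq : tangentSpaceOf S y = L := by
      refine Submodule.eq_of_le_of_finrank_le hle ?_
      rw [hL, hc.finrank_tangent hyU hyS]
      omega
    rw [heq]
    exact ⟨⟨w, hw⟩, hw0, rfl⟩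
end locdef
section glob
open Topology Metric
variable {A E : Type*} [NormedAddCommGroup A] [InnerProductSpace ℝ A] [FiniteDimensional ℝ A]
  [NormedAddCommGroup E] [InnerProductSpace ℝ E] [FiniteDimensional ℝ E]

/-- pointwise transversality -/
def TrAt (g : A → E) (M : Set A) (N S : Set E) (x : A) : Prop :=
  ∀ w ∈ tangentSpaceOf N (g x), ∃ u ∈ tangentSpaceOf S (g x),
      ∃ v ∈ tangentSpaceOf M x, w = u + fderiv ℝ g x v

/-- bad incidence set -/
def badSet (f : A → E) (ε : A → ℝ) (r : E → E) (M C : Set A) (N S O : Set E) :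
    Set (A × (E × (A →L[ℝ] E))) :=
  {q | q.1 ∈ M ∧ q.1 ∉ C ∧ zmap f ε id q.1 q.2 ∈ O ∧ r (zmap f ε id q.1 q.2) ∈ S ∧
    ¬ TrAt (fun x => r (zmap f ε id x q.2)) M N S q.1}

lemma local_bad [Nontrivial E] {m dN s : ℕ} {M C W : Set A} {N S O : Set E} {r : E → E}
    {f : A → E} {ε : A → ℝ}
    (hM : IsSubmanifoldOfDim m M) (hN : IsSubmanifoldOfDim dN N)
    (hS : IsSubmanifoldOfDim s S) (hSN : S ⊆ N) (hO : IsOpen O) (hNO : N ⊆ O)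
    (hr : ContDiffOn ℝ (⊤ : ℕ∞) r O) (hmr : MapsTo r O N) (hid : ∀ y ∈ N, r y = y)
    (hran : ∀ z ∈ O, ∀ w, w ∈ tangentSpaceOf N (r z) ↔ ∃ u, fderiv ℝ r z u = w)
    (hW : IsOpen W) (hMW : M ⊆ W) (hf : ContDiffOn ℝ (⊤ : ℕ∞) f W)
    (hε : ContDiffOn ℝ (⊤ : ℕ∞) ε W) (hεC : ∀ x ∈ W, (ε x = 0 ↔ x ∈ C))
    (q0 : A × (E × (A →L[ℝ] E))) (hq0 : q0 ∈ badSet f ε r M C N S O) :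
    ∃ 𝒩 ∈ 𝓝 q0, dimH (Prod.snd '' (badSet f ε r M C N S O ∩ 𝒩)) ≤
      (Module.finrank ℝ (E × (A →L[ℝ] E)) - 1 : ℕ) := by
  obtain ⟨x0, p0⟩ := q0
  obtain ⟨hx0M, hx0C, hz0, hy0, -⟩ := hq0
  simp only at hx0M hx0C hz0 hy0
  obtain ⟨Q, h, U', hU'o, hyU', hh, hh0, hhs, hhk⟩ :=
    local_defining hN hS hSN hO hNO hr hid hran hy0
  obtain ⟨U, V, φ, ψ, K, hxU, hc⟩ := hM.chart hx0M
  let G : Set E := O ∩ r ⁻¹' U'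
  have hG : IsOpen G := hr.continuousOn.isOpen_inter_preimage hO hU'o
  let θ : E → Q := fun z => h (r z)
  let X : K → A := fun k => ψ k
  let D : Set K := {k | (k : A) ∈ V ∧ ψ k ∈ W ∧ ψ k ∉ C}
  have hfx : ∀ x ∈ W, ContDiffAt ℝ (⊤ : ℕ∞) f x := fun x hx => hf.contDiffAt (hW.mem_nhds hx)
  have hεx : ∀ x ∈ W, ContDiffAt ℝ (⊤ : ℕ∞) ε x := fun x hx => hε.contDiffAt (hW.mem_nhds hx)
  have hX : ∀ k ∈ D, ContDiffAt ℝ (⊤ : ℕ∞) X k := by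
    intro k hk
    exact ContDiffAt.comp (g := ψ) k (hc.cψ.contDiffAt (hc.oV.mem_nhds hk.1))
      K.subtypeL.contDiff.contDiffAt
  have hF : ∀ k ∈ D, ContDiffAt ℝ (⊤ : ℕ∞) (fun k => f (X k)) k := by
    intro k hk
    exact ContDiffAt.comp (g := f) k (hfx _ hk.2.1) (hX k hk)
  have he : ∀ k ∈ D, ContDiffAt ℝ (⊤ : ℕ∞) (fun k => ε (X k)) k := by
    intro k hk
    exact ContDiffAt.comp (g := ε) k (hεx _ hk.2.1) (hX k hk)
  have hdX : ∀ k : K, (k : A) ∈ V → HasFDerivAt X (fderiv ℝ ψ (k : A) ∘L K.subtypeL) k := by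
    intro k hk
    exact HasFDerivAt.comp (g := ψ) k (hc.dψ hk) K.subtypeL.hasFDerivAt
  have hri : ∀ z ∈ O, ContDiffAt ℝ (⊤ : ℕ∞) r z := fun z hz => hr.contDiffAt (hO.mem_nhds hz)
  have hhi : ∀ y ∈ U', ContDiffAt ℝ (⊤ : ℕ∞) h y := fun z hz => hh.contDiffAt (hU'o.mem_nhds hz)
  have hdr : ∀ z ∈ O, HasFDerivAt r (fderiv ℝ r z) z := fun z hz =>
    ((hri z hz).differentiableAt (by simp)).hasFDerivAt
  have hdh : ∀ z ∈ U', HasFDerivAt h (fderiv ℝ h z) z := fun z hz =>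
    ((hhi z hz).differentiableAt (by simp)).hasFDerivAt
  have hdθ : ∀ z ∈ G, fderiv ℝ θ z = fderiv ℝ h (r z) ∘L fderiv ℝ r z := fun z hz =>
    (HasFDerivAt.comp (g := h) z (hdh _ hz.2) (hdr z hz.1)).fderiv
  have key := dimH_bad (fun k => f (X k)) (fun k => ε (X k)) X θ D G hF he hX
    (by
      intro k hk h0
      exact hk.2.2 ((hεC _ hk.2.1).1 h0))
    (by
      intro k hk
      rw [(hdX k hk.1).fderiv]
      intro u v huv
      have e := hc.comp_right (hc.mψ hk.1)
      rw [hc.r _ hk.1] at e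
      have huv' : fderiv ℝ ψ (k : A) (u : A) = fderiv ℝ ψ (k : A) (v : A) := huv
      apply Subtype.ext
      rw [← e u, huv', e])
    (by
      intro z hz
      exact ContDiffAt.comp (g := h) z (hhi _ hz.2) (hri _ hz.1))
    (by
      intro z hz q
      rw [hdθ z hz]
      obtain ⟨w, hw, hwq⟩ := hhs (r z) ⟨hmr hz.1, hz.2⟩ q
      obtain ⟨u, hu⟩ := (hran z hz.1 w).1 hw
      refine ⟨u, ?_⟩
      show fderiv ℝ h (r z) (fderiv ℝ r z u) = q
      rw [hu, hwq])
  have hcont : ContinuousAt (fun q : A × (E × (A →L[ℝ] E)) => zmap f ε id q.1 q.2) (x0, p0) := by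
    have c1 : ContinuousAt (fun q : A × (E × (A →L[ℝ] E)) => f q.1) (x0, p0) :=
      ContinuousAt.comp (g := f) (hfx x0 (hMW hx0M)).continuousAt continuousAt_fst
    have c2 : ContinuousAt (fun q : A × (E × (A →L[ℝ] E)) => ε q.1) (x0, p0) :=
      ContinuousAt.comp (g := ε) (hεx x0 (hMW hx0M)).continuousAt continuousAt_fst
    have c3 : ContinuousAt (fun q : A × (E × (A →L[ℝ] E)) => q.2.1 + q.2.2 q.1) (x0, p0) := by
      fun_prop
    exact c1.add (c2.smul c3)
  refine ⟨{q | q.1 ∈ U ∧ zmap f ε id q.1 q.2 ∈ G}, ?_, ?_⟩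
  · have h1 : ∀ᶠ q : A × (E × (A →L[ℝ] E)) in 𝓝 (x0, p0), q.1 ∈ U :=
      continuousAt_fst.eventually_mem (hc.oU.mem_nhds hxU)
    have h2 := hcont.eventually_mem (hG.mem_nhds (x := zmap f ε id x0 p0) ⟨hz0, hyU'⟩)
    exact h1.and h2
  · refine le_trans (dimH_mono ?_) key
    rintro _ ⟨⟨x, p⟩, ⟨⟨hxM, hxC, hz, hy, hnt⟩, hxU, hzG⟩, rfl⟩
    simp only at hxM hxC hz hy hnt hxU hzG
    have hφK : φ x ∈ K := (hc.mem_iff hxU).1 hxM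
    let k : K := ⟨φ x, hφK⟩
    have hXk : X k = x := hc.l x hxU
    have hkD : k ∈ D := by
      refine ⟨hc.mφ hxU, ?_, ?_⟩
      · show X k ∈ W
        rw [hXk]; exact hMW hxM
      · show X k ∉ C
        rw [hXk]; exact hxC
    have hzz : zmap (fun k => f (X k)) (fun k => ε (X k)) X k p = zmap f ε id x p := by
      simp only [zmap, hXk, id]
    refine ⟨k, hkD, by rw [hzz]; exact hzG, ?_, ?_⟩
    · rw [hzz]
      exact hh0 _ ⟨hy, hzG.2⟩
    · intro hsurj
      apply hnt
      intro w hw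
      rw [hzz] at hsurj
      obtain ⟨κ, hκ⟩ := hsurj (fderiv ℝ h (r (zmap f ε id x p)) w)
      rw [hdθ _ hzG] at hκ
      have hκ' : fderiv ℝ h (r (zmap f ε id x p)) (fderiv ℝ r (zmap f ε id x p)
        (zder (fun k => f (X k)) (fun k => ε (X k)) X k p κ)) =
          fderiv ℝ h (r (zmap f ε id x p)) w := hκ
      have hgd : DifferentiableAt ℝ (fun x => r (zmap f ε id x p)) x := by
        have e1 := hasFDerivAt_zmap (k := x) (F := f) (e := ε) (X := id) p
          ((hfx x (hMW hxM)).differentiableAt (by simp))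
          ((hεx x (hMW hxM)).differentiableAt (by simp)) differentiableAt_id
        exact (HasFDerivAt.comp (g := r) x (hdr _ hz) e1).differentiableAt
      have d1 : HasFDerivAt (fun k => r (zmap (fun k => f (X k)) (fun k => ε (X k)) X k p))
          (fderiv ℝ r (zmap f ε id x p) ∘L
            zder (fun k => f (X k)) (fun k => ε (X k)) X k p) k := by
        have e1 := hasFDerivAt_zmap (k := k) (F := fun k => f (X k)) (e := fun k => ε (X k))
          (X := X) p
          ((hF k hkD).differentiableAt (by simp))
          ((he k hkD).differentiableAt (by simp)) ((hX k hkD).differentiableAt (by simp))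
        refine HasFDerivAt.comp (g := r) k ?_ e1
        rw [hzz]
        exact hdr _ hz
      have d2 : HasFDerivAt (fun k => r (zmap (fun k => f (X k)) (fun k => ε (X k)) X k p))
          (fderiv ℝ (fun x => r (zmap f ε id x p)) x ∘L (fderiv ℝ ψ (k : A) ∘L K.subtypeL)) k := by
        refine HasFDerivAt.comp (g := fun x => r (zmap f ε id x p)) k ?_ (hdX k hkD.1)
        rw [hXk]
        exact hgd.hasFDerivAt
      have d3 : fderiv ℝ (fun x => r (zmap f ε id x p)) x (fderiv ℝ ψ (φ x) (κ : A)) =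
          fderiv ℝ r (zmap f ε id x p)
            (zder (fun k => f (X k)) (fun k => ε (X k)) X k p κ) :=
        DFunLike.congr_fun (d2.unique d1) κ
      refine ⟨w - fderiv ℝ (fun x => r (zmap f ε id x p)) x (fderiv ℝ ψ (φ x) (κ : A)), ?_,
        fderiv ℝ ψ (φ x) (κ : A), ?_, by abel⟩
      · refine hhk _ ⟨hy, hzG.2⟩ _ ?_ ?_
        · refine Submodule.sub_mem _ hw ?_
          rw [d3]
          exact (hran _ hz _).2 ⟨_, rfl⟩
        · rw [d3, map_sub, hκ', sub_self]
      · rw [hc.mem_tangent hxU hxM, hc.comp_right hxU]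
        exact κ.2

lemma exists_good [Nontrivial E] {m dN s : ℕ} {M C W : Set A} {N S O : Set E} {r : E → E}
    {f : A → E} {ε : A → ℝ}
    (hM : IsSubmanifoldOfDim m M) (hN : IsSubmanifoldOfDim dN N)
    (hS : IsSubmanifoldOfDim s S) (hSN : S ⊆ N) (hO : IsOpen O) (hNO : N ⊆ O)
    (hr : ContDiffOn ℝ (⊤ : ℕ∞) r O) (hmr : MapsTo r O N) (hid : ∀ y ∈ N, r y = y)
    (hran : ∀ z ∈ O, ∀ w, w ∈ tangentSpaceOf N (r z) ↔ ∃ u, fderiv ℝ r z u = w)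
    (hW : IsOpen W) (hMW : M ⊆ W) (hf : ContDiffOn ℝ (⊤ : ℕ∞) f W)
    (hε : ContDiffOn ℝ (⊤ : ℕ∞) ε W) (hεC : ∀ x ∈ W, (ε x = 0 ↔ x ∈ C)) :
    ∃ p : E × (A →L[ℝ] E), ‖p‖ < 1 ∧ ∀ x, (x, p) ∉ badSet f ε r M C N S O := by
  have hloc := local_bad (C := C) hM hN hS hSN hO hNO hr hmr hid hran hW hMW hf hε hεC
  choose! 𝒩 h𝒩 hdim using hloc
  obtain ⟨t, htI, htc, htu⟩ := TopologicalSpace.countable_cover_nhdsWithin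
    (s := badSet f ε r M C N S O) (f := 𝒩) (fun q hq => mem_nhdsWithin_of_mem_nhds (h𝒩 q hq))
  have hsub : Prod.snd '' (badSet f ε r M C N S O) ⊆
      ⋃ q ∈ t, Prod.snd '' (badSet f ε r M C N S O ∩ 𝒩 q) := by
    rintro _ ⟨q, hq, rfl⟩
    obtain ⟨q', hq', hqq⟩ := mem_iUnion₂.1 (htu hq)
    exact mem_iUnion₂.2 ⟨q', hq', ⟨q, ⟨hq, hqq⟩, rfl⟩⟩
  have hd : dimH (Prod.snd '' (badSet f ε r M C N S O)) ≤
      (Module.finrank ℝ (E × (A →L[ℝ] E)) - 1 : ℕ) := by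
    refine (dimH_mono hsub).trans ?_
    rw [dimH_bUnion htc]
    exact iSup₂_le fun q hq => hdim q (htI hq)
  have hpos : 0 < Module.finrank ℝ (E × (A →L[ℝ] E)) := Module.finrank_pos
  have hlt : dimH (Prod.snd '' (badSet f ε r M C N S O)) <
      Module.finrank ℝ (E × (A →L[ℝ] E)) := by
    refine hd.trans_lt ?_
    exact_mod_cast Nat.sub_lt hpos one_pos
  have hdense := dense_compl_of_dimH_lt_finrank hlt
  obtain ⟨p, hp, hpb⟩ := hdense.exists_mem_open (isOpen_ball (x := (0 : E × (A →L[ℝ] E))) (ε := 1))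
    ⟨0, mem_ball_self one_pos⟩
  refine ⟨p, by simpa using hpb, fun x hx => hp ⟨(x, p), hx, rfl⟩⟩
end glob
/-- **Transversality Homotopy Theorem.** A smooth map `f : M → N` is homotopic (through maps
`M → N`) to a smooth map `g` transverse to a given submanifold `S ⊂ N`; if `f` is already
transverse to `S` at every point of a closed subset `A ⊂ M`, then `g` can be chosen with
`g|_A = f|_A`. -/
theorem transversality_homotopy (a b m dN s : ℕ) (M : Set (Euc a)) (N S : Set (Euc b))
    (hM : IsSubmanifoldOfDim m M) (hN : IsSubmanifoldOfDim dN N)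
    (hSN : S ⊆ N) (hS : IsSubmanifoldOfDim s S)
    (f : Euc a → Euc b)
    (V : Set (Euc a)) (hV : IsOpen V) (hMV : M ⊆ V) (hf : ContDiffOn ℝ (⊤ : ℕ∞) f V)
    (hmaps : MapsTo f M N)
    (A C : Set (Euc a)) (hC : IsClosed C) (hA : A = M ∩ C)
    (hfA : ∀ x ∈ A, f x ∈ S →
      ∀ w ∈ tangentSpaceOf N (f x), ∃ u ∈ tangentSpaceOf S (f x),
        ∃ v ∈ tangentSpaceOf M x, w = u + fderiv ℝ f x v) :
    ∃ g : Euc a → Euc b,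
      (∃ W, IsOpen W ∧ M ⊆ W ∧ ContDiffOn ℝ (⊤ : ℕ∞) g W) ∧
      MapsTo g M N ∧
      TransverseOn g M N S ∧
      -- f and g are homotopic through maps M → N
      (∃ H : Euc a × ℝ → Euc b, ContinuousOn H (M ×ˢ Icc (0:ℝ) 1) ∧
        MapsTo H (M ×ˢ Icc (0:ℝ) 1) N ∧
        (∀ x ∈ M, H (x, 0) = f x) ∧ (∀ x ∈ M, H (x, 1) = g x)) ∧
      EqOn f g A := by
  rcases subsingleton_or_nontrivial (Euc b) with hsub | hnt
  · refine ⟨f, ⟨V, hV, hMV, hf⟩, hmaps, ?_, ⟨fun q => f q.1, ?_, ?_, fun _ _ => rfl,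
      fun _ _ => rfl⟩, fun _ _ => rfl⟩
    · intro x hx hfx w hw
      exact ⟨0, Submodule.zero_mem _, 0, Submodule.zero_mem _, Subsingleton.elim _ _⟩
    · exact (hf.continuousOn.mono hMV).comp continuousOn_fst fun q hq => hq.1
    · exact fun q hq => hmaps hq.1
  obtain ⟨O, r, hO, hNO, hr, hmr, hid, hran⟩ := exists_retraction' hN
  have hWo : IsOpen (V ∩ f ⁻¹' O) := hf.continuousOn.isOpen_inter_preimage hV hO
  have hMW : M ⊆ V ∩ f ⁻¹' O := fun x hx => ⟨hMV hx, hNO (hmaps hx)⟩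
  have hfW : ContDiffOn ℝ (⊤ : ℕ∞) f (V ∩ f ⁻¹' O) := hf.mono inter_subset_left
  obtain ⟨ε, hε, hεC, hεd, hεO⟩ := exists_eps f (V ∩ f ⁻¹' O) hWo hfW.continuousOn O hO
    (fun x hx => hx.2) C hC
  obtain ⟨p, hp, hgood⟩ := exists_good (C := C) hM hN hS hSN hO hNO hr hmr hid hran hWo hMW hfW
    hε hεC
  have hp1 : ‖p.1‖ < 1 := (norm_fst_le p).trans_lt hp
  have hp2 : ‖p.2‖ < 1 := (norm_snd_le p).trans_lt hp
  have hq : ∀ x : Euc a, ‖p.1 + p.2 x‖ < 1 + ‖x‖ := by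
    intro x
    have h1 := norm_add_le p.1 (p.2 x)
    have h2 := p.2.le_opNorm x
    have h3 : ‖p.2‖ * ‖x‖ ≤ 1 * ‖x‖ := by gcongr
    linarith
  have hzO : ∀ x ∈ V ∩ f ⁻¹' O, zmap f ε id x p ∈ O := by
    intro x hx
    have := hεO x hx 1 ⟨zero_le_one, le_rfl⟩ _ (hq x)
    rwa [one_mul] at this
  have hz : ContDiffOn ℝ (⊤ : ℕ∞) (fun x => zmap f ε id x p) (V ∩ f ⁻¹' O) := by
    refine hfW.add (hε.smul ?_)
    exact (contDiff_const.add p.2.contDiff).contDiffOn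
  have hz0 : ∀ x ∈ M, x ∈ C → zmap f ε id x p = f x := by
    intro x hx hxC
    simp [zmap, (hεC x (hMW hx)).2 hxC]
  have hgf : ∀ x ∈ M, x ∈ C → r (zmap f ε id x p) = f x := by
    intro x hx hxC
    rw [hz0 x hx hxC, hid _ (hmaps hx)]
  refine ⟨fun x => r (zmap f ε id x p), ⟨_, hWo, hMW, ?_⟩, fun x hx => hmr (hzO x (hMW hx)), ?_,
    ⟨fun q => r (f q.1 + (q.2 * ε q.1) • (p.1 + p.2 q.1)), ?_, ?_, ?_, ?_⟩, ?_⟩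
  · exact hr.comp hz hzO
  · intro x hx hxS
    by_cases hxC : x ∈ C
    · have hfS : f x ∈ S := by rw [← hgf x hx hxC]; exact hxS
      intro w hw
      simp only [hgf x hx hxC] at hw ⊢
      obtain ⟨u, hu, v, hv, hwuv⟩ := hfA x (by rw [hA]; exact ⟨hx, hxC⟩) hfS w hw
      refine ⟨u, hu, v, hv, ?_⟩
      have hdf : DifferentiableAt ℝ f x :=
        (hfW.contDiffAt (hWo.mem_nhds (hMW hx))).differentiableAt (by simp)
      have e1 := hasFDerivAt_zmap (k := x) (F := f) (e := ε) (X := id) p hdf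
          ((hε.contDiffAt (hWo.mem_nhds (hMW hx))).differentiableAt (by simp)) differentiableAt_id
      have e2 : zder f ε id x p = fderiv ℝ f x := by
        simp [zder, (hεC x (hMW hx)).2 hxC, hεd x (hMW hx) hxC]
      have e3 : HasFDerivAt r (fderiv ℝ r (f x)) (zmap f ε id x p) := by
        rw [hz0 x hx hxC]
        exact ((hr.contDiffAt (hO.mem_nhds (hNO (hmaps hx)))).differentiableAt
          (by simp)).hasFDerivAt
      have e4 := (HasFDerivAt.comp (g := r) x e3 e1).fderiv
      have e5 : fderiv ℝ (fun x => r (zmap f ε id x p)) x v = fderiv ℝ r (f x) (fderiv ℝ f x v) := by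
        rw [← e2]
        exact DFunLike.congr_fun e4 v
      rw [e5, retraction_id hO hNO hr hid (hmaps hx)
        (tangentSpaceOf_image_le hmaps hdf.hasFDerivAt hv), hwuv]
    · by_contra hcon
      exact hgood x ⟨hx, hxC, hzO x (hMW hx), hxS, hcon⟩
  · refine ContinuousOn.comp (g := r) (t := O) hr.continuousOn ?_ ?_
    · have c0 : MapsTo (Prod.fst : Euc a × ℝ → Euc a) (M ×ˢ Icc (0:ℝ) 1) (V ∩ f ⁻¹' O) :=
        fun q hq => hMW hq.1
      have c1 : ContinuousOn (fun q : Euc a × ℝ => f q.1) (M ×ˢ Icc (0:ℝ) 1) :=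
        hfW.continuousOn.comp continuousOn_fst c0
      have c2 : ContinuousOn (fun q : Euc a × ℝ => ε q.1) (M ×ˢ Icc (0:ℝ) 1) :=
        hε.continuousOn.comp continuousOn_fst c0
      have c3 : Continuous (fun q : Euc a × ℝ => p.1 + p.2 q.1) := by fun_prop
      exact c1.add ((continuousOn_snd.mul c2).smul c3.continuousOn)
    · exact fun q hq' => hεO _ (hMW hq'.1) _ hq'.2 _ (hq _)
  · exact fun q hq' => hmr (hεO _ (hMW hq'.1) _ hq'.2 _ (hq _))
  · intro x hx
    simp [hid _ (hmaps hx)]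
  · intro x hx
    simp [zmap]
  · intro x hx
    rw [hA] at hx
    exact (hgf x hx.1 hx.2).symm
end
end
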